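/- arXiv:2508.08870 — 3 statements merged into one kernel-verified Lean document; each statement's English description precedes it below -/
import Mathlib

section
/- For every integer d ≥ 2 and every finite set P of n points in ℝ^d whose affine span is all of ℝ^d (i.e., P is not contained in any affine hyperplane), P determines at least (1/48)·d·n lines with pairwise distinct directions; that is, there exist at least ⌈dn/48⌉ pairs (p_i, q_i) of distinct points of P such that the difference vectors q_i − p_i are pairwise non-parallel (no one is a real scalar multiple of another). -/
/-!
Let `S` represent the directions of the set, `n` the number of points and `d` the dimension.

For `d ≤ 12` a planar bound `n ≤ 3 * #S + 1` suffices. Project the points to a plane and then, along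
a direction of varying slope, to a line: they become points moving with constant velocities whose
order is eventually reversed. As in Ungar's theorem, one counts how many of them can cross the
middle position when points meet: a simultaneous meeting lets many points through only if its level
set is large, and the points around the middle have then met each other, so that the next crossing
is delayed.

For larger `d`, place the points in the hyperplane at height `1` of `E × ℝ` and add, at height `0`,
one vector for each direction of a line with exactly two points. Every pair of points then lies in a
collinear triple, that is, in a linear dependency with three nonzero coefficients. The matrix of
these dependencies annihilates the configuration, whose rank `d + 1` is therefore at most the
nullity of the matrix. After a scaling of the columns, the Gram matrix is close enough to diagonal
for Bessel's inequality to bound this nullity by `9 * (n + #S) / (n - 1)`.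
-/

namespace DistinctDirections

open Finset Module
open scoped InnerProductSpace

section Rank

variable {ι R S : Type*} [Fintype ι] [LinearOrder R] [LinearOrder S]

/-- The number of indices whose value lies strictly below that of `i`; for injective `f` this is the
position of `i` in the enumeration of `ι` by increasing `f`, starting from `0`. -/
def rank (f : ι → R) (i : ι) : ℕ := #{j | f j < f i}

/-- The size of the level set of `g` through `i`. -/
def levelCard (g : ι → R) (i : ι) : ℕ := #{j | g j = g i}

lemma rank_lt_card (f : ι → R) (i : ι) : rank f i < Fintype.card ι :=
  card_lt_univ_of_notMem (x := i) (by simp)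

lemma rank_lt_rank {f : ι → R} {i j : ι} (h : f i < f j) : rank f i < rank f j := by
  refine card_lt_card (ssubset_iff_of_subset ?_ |>.mpr ⟨i, by simpa using h, by simp⟩)
  exact monotone_filter_right _ fun l _ hl => hl.trans h

lemma rank_congr {f : ι → R} {f' : ι → S} {i : ι} (h : ∀ j ≠ i, (f j < f i ↔ f' j < f' i)) :
    rank f i = rank f' i := by
  refine congrArg card (filter_congr fun j _ => ?_)
  rcases eq_or_ne j i with rfl | hji
  · simp
  · exact h j hji

lemma rank_injective {f : ι → R} (hf : Function.Injective f) : Function.Injective (rank f) := by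
  intro i j hij
  by_contra hne
  rcases lt_or_gt_of_ne (hf.ne hne) with h | h
  · exact (rank_lt_rank h).ne hij
  · exact (rank_lt_rank h).ne' hij

lemma exists_rank_eq {f : ι → R} (hf : Function.Injective f) {r : ℕ} (hr : r < Fintype.card ι) :
    ∃ i, rank f i = r := by
  have himage : univ.image (rank f) = range (Fintype.card ι) := by
    refine eq_of_subset_of_card_le (image_subset_iff.mpr fun i _ => ?_) ?_
    · exact mem_range.mpr (rank_lt_card f i)
    · rw [card_image_of_injective _ (rank_injective hf), card_range, card_univ]
  simpa [← himage] using mem_range.mpr hr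

lemma rank_add_rank_toDual {f : ι → R} (hf : Function.Injective f) (i : ι) :
    rank f i + rank (OrderDual.toDual ∘ f) i + 1 = Fintype.card ι := by
  classical
  have hge : rank (OrderDual.toDual ∘ f) i + 1 = #{j | ¬ f j < f i} := by
    have hsplit : univ.filter (fun j => ¬ f j < f i) =
        insert i (univ.filter fun j => f i < f j) := by
      ext j
      simp [le_iff_eq_or_lt, hf.eq_iff, eq_comm]
    rw [hsplit, card_insert_of_notMem (by simp)]
    rfl
  rw [add_assoc, hge]
  exact card_filter_add_card_filter_not _

lemma rank_add_levelCard (g : ι → R) (i : ι) : rank g i + levelCard g i = #{j | g j ≤ g i} := by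
  classical
  rw [rank, levelCard, ← card_union_of_disjoint]
  · congr 1
    ext j
    simp [le_iff_lt_or_eq]
  · exact disjoint_filter.mpr fun j _ hlt heq => hlt.ne heq

/-- The positions occupied by the level set of `g` through `i` in every enumeration of `ι` that
refines the order by `g`. -/
def block (g : ι → R) (i : ι) : Finset ℕ := Ico (rank g i) (rank g i + levelCard g i)

lemma block_congr {g : ι → R} {i j : ι} (h : g i = g j) : block g i = block g j := by
  simp only [block, rank, levelCard, h]

lemma eq_of_mem_block {g : ι → R} {i j : ι} {r : ℕ} (hi : r ∈ block g i) (hj : r ∈ block g j) :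
    g i = g j := by
  have hnlt {i j : ι} (hi : r ∈ block g i) (hj : r ∈ block g j) : ¬ g i < g j := by
    intro h
    have hle : rank g i + levelCard g i ≤ rank g j := by
      rw [rank_add_levelCard]
      exact card_le_card (monotone_filter_right _ fun l _ hl => lt_of_le_of_lt hl h)
    simp only [block, mem_Ico] at hi hj
    omega
  exact le_antisymm (not_lt.mp (hnlt hj hi)) (not_lt.mp (hnlt hi hj))

/-- Every strict inequality between values of `g` persists for `f`: the order by `f` is obtained
from the order by `g` by breaking ties. -/
def Refines (f : ι → R) (g : ι → S) : Prop := ∀ i j, g i < g j → f i < f j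

lemma Refines.rank_mem_block {f : ι → R} {g : ι → S} (h : Refines f g) (i : ι) :
    rank f i ∈ block g i := by
  refine mem_Ico.mpr ⟨card_le_card (monotone_filter_right _ fun j _ hj => h j i hj), ?_⟩
  rw [rank_add_levelCard]
  refine card_lt_card (ssubset_iff_of_subset ?_ |>.mpr ⟨i, by simp, by simp⟩)
  refine monotone_filter_right _ fun j _ hj => ?_
  exact not_lt.mp fun hij => (h i j hij).not_gt hj

end Rank

section Barrier

variable {ι R S : Type*} [Fintype ι] [LinearOrder R] [LinearOrder S]

/-- One event of a moving configuration on a line: `f` and `f'` are the positions just before and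
just after it, `g` the positions at the event, and `met i j`, `met' i j` say that `i` and `j` have
met before, respectively after, the event. Any two points meet at most once. -/
structure Event (f f' : ι → R) (g : ι → S) (met met' : ι → ι → Prop) : Prop where
  injective_before : Function.Injective f
  injective_after : Function.Injective f'
  refines_before : Refines f g
  refines_after : Refines f' g
  met_mono : ∀ i j, met i j → met' i j
  met_after : ∀ i j, i ≠ j → g i = g j → met' i j
  not_met_before : ∀ i j, i ≠ j → g i = g j → ¬ met i j

/-- The invariant of Ungar's barrier argument after `m` events: at most `m` points of `F`, up to a
correction `w ≤ H`, have passed the barrier between the positions `k - 1` and `k`, and the points in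
the window of `2 * w` positions around the barrier have already met each other. -/
def BarrierInvariant (f : ι → R) (met : ι → ι → Prop) (F : Finset ι) (k H m : ℕ) : Prop :=
  ∃ w ≤ H, w ≤ k ∧ #{i ∈ F | k ≤ rank f i} ≤ m + w ∧
    ∀ i j, i ≠ j → rank f i ∈ Ico (k - w) (k + w) → rank f j ∈ Ico (k - w) (k + w) → met i j

namespace Event

variable {f f' : ι → R} {g : ι → S} {met met' : ι → ι → Prop}

lemma eq_of_crossing (h : Event f f' g met met') {k : ℕ} {i j : ι} (hi : rank f i < k)
    (hi' : k ≤ rank f' i) (hj : rank f j < k) (hj' : k ≤ rank f' j) : g i = g j := by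
  have mem_block {l : ι} (hl : rank f l < k) (hl' : k ≤ rank f' l) : k ∈ block g l := by
    have hbefore := mem_Ico.mp (h.refines_before.rank_mem_block l)
    have hafter := mem_Ico.mp (h.refines_after.rank_mem_block l)
    exact mem_Ico.mpr ⟨by omega, by omega⟩
  exact eq_of_mem_block (mem_block hi hi') (mem_block hj hj')

lemma card_crossing_le (h : Event f f' g met met') {k : ℕ} {o : ι} (ho : rank f o < k)
    (ho' : k ≤ rank f' o) :
    #{i | rank f i < k ∧ k ≤ rank f' i} ≤ min (k - rank g o) (rank g o + levelCard g o - k) := by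
  have same_block {i : ι} (hi : rank f i < k) (hi' : k ≤ rank f' i) : block g i = block g o :=
    block_congr (h.eq_of_crossing hi hi' ho ho')
  rw [le_min_iff, ← Nat.card_Ico, ← Nat.card_Ico]
  constructor
  · refine card_le_card_of_injOn (rank f) (fun i hi => ?_) (rank_injective h.injective_before).injOn
    replace hi := (mem_filter.mp hi).2
    have hmem := same_block hi.1 hi.2 ▸ h.refines_before.rank_mem_block i
    exact mem_Ico.mpr ⟨(mem_Ico.mp hmem).1, hi.1⟩
  · refine card_le_card_of_injOn (rank f') (fun i hi => ?_) (rank_injective h.injective_after).injOn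
    replace hi := (mem_filter.mp hi).2
    have hmem := same_block hi.1 hi.2 ▸ h.refines_after.rank_mem_block i
    exact mem_Ico.mpr ⟨hi.2, (mem_Ico.mp hmem).2⟩

lemma barrierInvariant_of_crossing (h : Event f f' g met met') {F : Finset ι} {k H m : ℕ}
    (hH : ∀ i, levelCard g i ≤ 2 * H + 1) (hm : #{i ∈ F | k ≤ rank f i} ≤ m) {o : ι}
    (ho : rank f o < k) (ho' : k ≤ rank f' o) : BarrierInvariant f' met' F k H (m + 1) := by
  classical
  have hsize := hH o
  have hcross := h.card_crossing_le ho ho'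
  have hpassed : #{i ∈ F | k ≤ rank f' i} ≤
      #{i ∈ F | k ≤ rank f i} + #{i | rank f i < k ∧ k ≤ rank f' i} := by
    refine (card_le_card fun i hi => ?_).trans (card_union_le _ _)
    simp only [mem_union, mem_filter, mem_univ, true_and] at hi ⊢
    exact (le_or_gt k (rank f i)).imp (fun hle => ⟨hi.1, hle⟩) (fun hlt => ⟨hlt, hi.2⟩)
  refine ⟨min (k - rank g o) (rank g o + levelCard g o - k), by omega, by omega, by omega, ?_⟩
  have tied {i : ι} (hi : rank f' i ∈ Ico (k - min (k - rank g o) (rank g o + levelCard g o - k))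
      (k + min (k - rank g o) (rank g o + levelCard g o - k))) : g i = g o := by
    refine eq_of_mem_block (h.refines_after.rank_mem_block i) (mem_Ico.mpr ?_)
    rw [mem_Ico] at hi
    omega
  exact fun i j hij hi hj => h.met_after i j hij ((tied hi).trans (tied hj).symm)

lemma not_mem_block_of_window (h : Event f f' g met met') {k w : ℕ} (hcard : k + w ≤ Fintype.card ι)
    (hmet : ∀ i j, i ≠ j → rank f i ∈ Ico (k - w) (k + w) → rank f j ∈ Ico (k - w) (k + w) →
      met i j) {r : ℕ} (hr : r ∈ Ico (k - w) (k + w)) (hr' : r + 1 ∈ Ico (k - w) (k + w)) (o : ι)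
    (hblock : r ∈ block g o) : r + 1 ∉ block g o := by
  intro hblock'
  obtain ⟨i, rfl⟩ := exists_rank_eq h.injective_before (r := r) (by rw [mem_Ico] at hr; omega)
  obtain ⟨j, hj⟩ := exists_rank_eq h.injective_before (r := rank f i + 1)
    (by rw [mem_Ico] at hr'; omega)
  have hij : i ≠ j := by
    rintro rfl
    omega
  rw [← hj] at hblock' hr'
  refine h.not_met_before i j hij ?_ (hmet i j hij hr hr')
  exact (eq_of_mem_block (h.refines_before.rank_mem_block i) hblock).trans
    (eq_of_mem_block (h.refines_before.rank_mem_block j) hblock').symm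

lemma barrierInvariant_of_window (h : Event f f' g met met') {F : Finset ι} {k w H m : ℕ}
    (hcard : k + w ≤ Fintype.card ι) (hw : 0 < w) (hwH : w ≤ H) (hwk : w ≤ k)
    (hm : #{i ∈ F | k ≤ rank f i} ≤ m + w)
    (hmet : ∀ i j, i ≠ j → rank f i ∈ Ico (k - w) (k + w) → rank f j ∈ Ico (k - w) (k + w) →
      met i j) : BarrierInvariant f' met' F k H (m + 1) := by
  have separated {r : ℕ} := h.not_mem_block_of_window hcard hmet (r := r)
  simp only [block, mem_Ico] at separated
  have hbefore (i : ι) := mem_Ico.mp (h.refines_before.rank_mem_block i)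
  have hafter (i : ι) := mem_Ico.mp (h.refines_after.rank_mem_block i)
  have hfixed {i : ι} (hi : rank f' i ∈ Ico (k - (w - 1)) (k + (w - 1))) :
      rank f i = rank f' i := by
    have hnext := @separated (rank f' i)
    have hprev := @separated (rank f' i - 1)
    have := hbefore i
    have := hafter i
    rw [mem_Ico] at hi
    specialize hnext (by omega) (by omega) i
    specialize hprev (by omega) (by omega) i
    omega
  have hpassed {i : ι} (hi : k ≤ rank f' i) : k ≤ rank f i := by
    have := @separated (k - 1) (by omega) (by omega) i
    have := hbefore i
    have := hafter i
    omega
  refine ⟨w - 1, by omega, by omega, ?_, fun i j hij hi hj => h.met_mono i j (hmet i j hij ?_ ?_)⟩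
  · refine (card_le_card (monotone_filter_right F fun i _ => hpassed)).trans (hm.trans ?_)
    omega
  · rw [hfixed hi]
    exact Ico_subset_Ico (by omega) (by omega) hi
  · rw [hfixed hj]
    exact Ico_subset_Ico (by omega) (by omega) hj

theorem barrierInvariant (h : Event f f' g met met') {F : Finset ι} {k H m : ℕ}
    (hk : 2 * k ≤ Fintype.card ι) (hH : ∀ i, levelCard g i ≤ 2 * H + 1)
    (hinv : BarrierInvariant f met F k H m) : BarrierInvariant f' met' F k H (m + 1) := by
  obtain ⟨w, hwH, hwk, hm, hmet⟩ := hinv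
  rcases Nat.eq_zero_or_pos w with rfl | hw
  · by_cases hcross : ∃ o, rank f o < k ∧ k ≤ rank f' o
    · obtain ⟨o, ho, ho'⟩ := hcross
      exact h.barrierInvariant_of_crossing hH hm ho ho'
    · push Not at hcross
      refine ⟨0, hwH, hwk, ?_, by simp⟩
      refine (card_le_card (monotone_filter_right F fun i _ hi => ?_)).trans (hm.trans (by omega))
      by_contra! hlt
      exact (hcross i hlt).not_ge hi
  · exact h.barrierInvariant_of_window (by omega) hw hwH hwk hm hmet

end Event

end Barrier

section Slopes

lemma sweep_induction {K : Type*} [LinearOrder K] [DenselyOrdered K] [NoMinOrder K] (T : Finset K)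
    {p : ℕ → K → Prop} (base : ∀ t, (∀ s ∈ T, t < s) → p 0 t)
    (step : ∀ m t s t', t < s → s < t' → (∀ r ∈ T, r ≠ s → r < t ∨ t' < r) → p m t → p (m + 1) t')
    {t : K} (ht : t ∉ T) : p #{s ∈ T | s < t} t := by
  induction hm : #{s ∈ T | s < t} generalizing t with
  | zero =>
    refine base t fun s hs => lt_of_le_of_ne ?_ (ne_of_mem_of_not_mem hs ht).symm
    exact not_lt.mp (filter_eq_empty_iff.mp (card_eq_zero.mp hm) hs)
  | succ m ih =>
    have hne : ({s ∈ T | s < t} : Finset K).Nonempty := card_pos.mp (by omega)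
    obtain ⟨s, hs, hmax⟩ := exists_max_image _ id hne
    rw [mem_filter] at hs
    obtain ⟨t₀, ht₀, hbelow⟩ : ∃ t₀ < s, ∀ r ∈ T, r < s → r < t₀ := by
      obtain ⟨b, hb⟩ := exists_lt s
      obtain ⟨a, ha, hmax'⟩ := exists_max_image (insert b {r ∈ T | r < s}) id (insert_nonempty _ _)
      obtain ⟨t₀, hat₀, ht₀⟩ : ∃ t₀, a < t₀ ∧ t₀ < s := by
        refine exists_between ?_
        rcases mem_insert.mp ha with rfl | ha
        · exact hb
        · exact (mem_filter.mp ha).2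
      refine ⟨t₀, ht₀, fun r hr hrs => lt_of_le_of_lt (hmax' r ?_) hat₀⟩
      exact mem_insert_of_mem (mem_filter.mpr ⟨hr, hrs⟩)
    have habove {r : K} (hr : r ∈ T) (hrt : r < t) : r ≤ s := hmax r (mem_filter.mpr ⟨hr, hrt⟩)
    have hcount : ({r ∈ T | r < t} : Finset K) = insert s {r ∈ T | r < t₀} := by
      ext r
      simp only [mem_filter, mem_insert]
      constructor
      · rintro ⟨hr, hrt⟩
        exact (habove hr hrt).eq_or_lt.imp_right fun hlt => ⟨hr, hbelow r hr hlt⟩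
      · rintro (rfl | ⟨hr, hrt⟩)
        · exact hs
        · exact ⟨hr, hrt.trans (ht₀.trans hs.2)⟩
    rw [hcount, card_insert_of_notMem (by simp [ht₀.le]), Nat.add_right_cancel_iff] at hm
    have ht₀T : t₀ ∉ T := fun hmem => (hbelow t₀ hmem ht₀).false
    refine step m t₀ s t ht₀ hs.2 (fun r hr hrs => ?_) (ih ht₀T hm)
    rcases lt_or_gt_of_ne hrs with hlt | hgt
    · exact Or.inl (hbelow r hr hlt)
    · refine Or.inr (lt_of_le_of_ne ?_ (ne_of_mem_of_not_mem hr ht).symm)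
      exact not_lt.mp fun hrt => (habove hr hrt).not_gt hgt

variable {ι K : Type*} [Field K]

/-- The points `(α i, β i)` projected to a line along the direction of slope `t`; as `t` grows, this
describes points moving on a line with constant velocities. -/
def position (α β : ι → K) (t : K) (i : ι) : K := β i - t * α i

/-- The slope of the line through the points with indices `i` and `j`, which is the time at which
their projections meet. -/
def chordSlope (α β : ι → K) (i j : ι) : K := (β i - β j) / (α i - α j)

variable {α β : ι → K}

lemma position_sub_position {i j : ι} (h : α i ≠ α j) (t : K) :
    position α β t i - position α β t j = (α i - α j) * (chordSlope α β i j - t) := by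
  rw [chordSlope, mul_sub, mul_div_cancel₀ _ (sub_ne_zero.mpr h), position, position]
  ring

lemma position_eq_iff {i j : ι} (h : α i ≠ α j) {t : K} :
    position α β t i = position α β t j ↔ chordSlope α β i j = t := by
  rw [← sub_eq_zero, position_sub_position h, mul_eq_zero, sub_eq_zero, sub_eq_zero]
  exact or_iff_right h

lemma levelCard_position_le [Fintype ι] [LinearOrder K] (hα : Function.Injective α)
    {T : Finset K} (hT : ∀ i j, i ≠ j → chordSlope α β i j ∈ T) {t : K} {o i : ι}
    (ho : position α β t o ≠ position α β t i) : levelCard (position α β t) i ≤ #T := by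
  have hne {j : ι} (hj : position α β t j = position α β t i) : o ≠ j := by
    rintro rfl
    exact ho hj
  refine card_le_card_of_injOn (chordSlope α β o) (fun j hj => ?_) fun j hj l hl hjl => ?_
  · exact hT o j (hne (mem_filter.mp hj).2)
  · replace hj := (mem_filter.mp hj).2
    replace hl := (mem_filter.mp hl).2
    by_contra hjl'
    have hmeet : position α β (chordSlope α β o j) j = position α β (chordSlope α β o j) l :=
      ((position_eq_iff (hα.ne (hne hj))).mpr rfl).symm.trans
        ((position_eq_iff (hα.ne (hne hl))).mpr hjl.symm)
    have ht : chordSlope α β o j = t := by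
      rw [← (position_eq_iff (hα.ne hjl')).mp hmeet]
      exact (position_eq_iff (hα.ne hjl')).mp (hj.trans hl.symm)
    exact ho (((position_eq_iff (hα.ne (hne hj))).mpr ht).trans hj)

variable [LinearOrder K] [IsStrictOrderedRing K]

lemma position_lt_iff {i j : ι} (h : α i ≠ α j) {t : K} (ht : chordSlope α β i j ≠ t) :
    position α β t i < position α β t j ↔ (α i < α j ↔ t < chordSlope α β i j) := by
  rw [← sub_neg, position_sub_position h, mul_neg_iff]
  simp only [sub_pos, sub_neg]
  have := lt_or_gt_of_ne h
  have := lt_or_gt_of_ne ht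
  have := @lt_asymm K _ (α i) (α j)
  have := @lt_asymm K _ t (chordSlope α β i j)
  tauto

lemma position_event (hα : Function.Injective α) {t s t' : K} (hts : t < s) (hst' : s < t')
    (hsep : ∀ i j, i ≠ j → chordSlope α β i j ≠ s →
      chordSlope α β i j < t ∨ t' < chordSlope α β i j) :
    Event (position α β t) (position α β t') (position α β s)
      (fun i j => chordSlope α β i j < t) (fun i j => chordSlope α β i j < t') := by
  have hslope {i j : ι} (hij : i ≠ j) {τ : K} (hτ : τ ∈ Set.Icc t t') (hτs : τ ≠ s) :
      chordSlope α β i j ≠ τ := by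
    rintro rfl
    rcases hsep i j hij hτs with h | h
    · exact h.not_ge hτ.1
    · exact h.not_ge hτ.2
  have hinj {τ : K} (hτ : τ ∈ Set.Icc t t') (hτs : τ ≠ s) :
      Function.Injective (position α β τ) := by
    intro i j h
    by_contra hij
    exact hslope hij hτ hτs ((position_eq_iff (hα.ne hij)).mp h)
  have hrefines {τ : K} (hτ : τ ∈ Set.Icc t t') (hτs : τ ≠ s) :
      Refines (position α β τ) (position α β s) := by
    intro i j h
    have hij : i ≠ j := by
      rintro rfl
      exact h.false
    have hs : chordSlope α β i j ≠ s := fun hs => h.ne ((position_eq_iff (hα.ne hij)).mpr hs)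
    rw [position_lt_iff (hα.ne hij) hs] at h
    rw [position_lt_iff (hα.ne hij) (hslope hij hτ hτs), h]
    rcases hsep i j hij hs with hlt | hgt
    · exact iff_of_false (hlt.trans hts).not_gt (hlt.trans_le hτ.1).not_gt
    · exact iff_of_true (hst'.trans hgt) (hτ.2.trans_lt hgt)
  have ht : t ∈ Set.Icc t t' := ⟨le_rfl, (hts.trans hst').le⟩
  have ht' : t' ∈ Set.Icc t t' := ⟨(hts.trans hst').le, le_rfl⟩
  exact
    { injective_before := hinj ht hts.ne
      injective_after := hinj ht' hst'.ne'
      refines_before := hrefines ht hts.ne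
      refines_after := hrefines ht' hst'.ne'
      met_mono := fun i j h => h.trans (hts.trans hst')
      met_after := fun i j hij h => ((position_eq_iff (hα.ne hij)).mp h).trans_lt hst'
      not_met_before := fun i j hij h => ((position_eq_iff (hα.ne hij)).mp h ▸ hts).not_gt }

variable [Fintype ι]

lemma rank_position_of_lt_chordSlope (hα : Function.Injective α) {t : K}
    (ht : ∀ i j, i ≠ j → t < chordSlope α β i j) (i : ι) : rank (position α β t) i = rank α i :=
  rank_congr fun j hji => by
    simp [position_lt_iff (hα.ne hji) (ht j i hji).ne', ht j i hji]

lemma rank_position_of_chordSlope_lt (hα : Function.Injective α) {t : K}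
    (ht : ∀ i j, i ≠ j → chordSlope α β i j < t) (i : ι) :
    rank (position α β t) i = rank (OrderDual.toDual ∘ α) i :=
  rank_congr fun j hji => by
    simp [position_lt_iff (hα.ne hji) (ht j i hji).ne, (ht j i hji).not_gt,
      (hα.ne hji).symm.le_iff_lt]

lemma barrierInvariant_position (hα : Function.Injective α) {T : Finset K}
    (hT : ∀ i j, i ≠ j → chordSlope α β i j ∈ T)
    (hnc : ∀ t, ∃ i j, position α β t i ≠ position α β t j) {k : ℕ}
    (hk : 2 * k ≤ Fintype.card ι) {t : K} (ht : t ∉ T) :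
    BarrierInvariant (position α β t) (fun i j => chordSlope α β i j < t) {i | rank α i < k} k
      (#T / 2) #{s ∈ T | s < t} := by
  have hlevel (t : K) (i : ι) : levelCard (position α β t) i ≤ 2 * (#T / 2) + 1 := by
    obtain ⟨o, ho⟩ : ∃ o, position α β t o ≠ position α β t i := by
      obtain ⟨j, l, hjl⟩ := hnc t
      by_contra! hall
      exact hjl ((hall j).trans (hall l).symm)
    have := levelCard_position_le hα hT ho
    omega
  refine sweep_induction T (p := fun m t => BarrierInvariant (position α β t)
    (fun i j => chordSlope α β i j < t) {i | rank α i < k} k (#T / 2) m) ?_ ?_ ht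
  · intro t hbelow
    have hrank := rank_position_of_lt_chordSlope hα fun i j hij => hbelow _ (hT i j hij)
    exact ⟨0, by simp, by simp, by simp [hrank, filter_eq_empty_iff], by simp⟩
  · intro m t s t' hts hst' hsep hinv
    exact (position_event hα hts hst' fun i j hij => hsep _ (hT i j hij)).barrierInvariant hk
      (hlevel s) hinv

/-- A weak form of Ungar's theorem on the number of slopes. -/
theorem card_le_three_mul_card_chordSlopes (hα : Function.Injective α) {T : Finset K}
    (hT : ∀ i j, i ≠ j → chordSlope α β i j ∈ T)
    (hnc : ∀ t, ∃ i j, position α β t i ≠ position α β t j) :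
    Fintype.card ι ≤ 3 * #T + 1 := by
  obtain ⟨M, hM⟩ : ∃ M, ∀ s ∈ T, s < M := by
    obtain ⟨M, hM⟩ := T.bddAbove
    obtain ⟨M', hM'⟩ := exists_gt M
    exact ⟨M', fun s hs => (hM hs).trans_lt hM'⟩
  have hrank := rank_position_of_chordSlope_lt hα fun i j hij => hM _ (hT i j hij)
  obtain ⟨w, hw, -, hpassed, -⟩ :=
    barrierInvariant_position hα hT hnc (k := Fintype.card ι / 2) (by omega) fun h => (hM M h).false
  have hall : ∀ i ∈ ({i | rank α i < Fintype.card ι / 2} : Finset ι),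
      Fintype.card ι / 2 ≤ rank (position α β M) i := by
    intro i hi
    have := rank_add_rank_toDual hα i
    have := (mem_filter.mp hi).2
    rw [hrank]
    omega
  have hstart : Fintype.card ι / 2 ≤ #{i | rank α i < Fintype.card ι / 2} := by
    have hsurj : range (Fintype.card ι / 2) ⊆
        ({i | rank α i < Fintype.card ι / 2} : Finset ι).image (rank α) := by
      intro r hr
      rw [mem_range] at hr
      obtain ⟨i, rfl⟩ := exists_rank_eq hα (r := r) (by omega)
      exact mem_image_of_mem _ (by simpa using hr)
    simpa using (card_le_card hsurj).trans card_image_le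
  rw [filter_true_of_mem hall] at hpassed
  have := card_filter_le T (· < M)
  omega

end Slopes

section Scaling

variable {ι J : Type*} [Fintype J] {B N : ι → J → ℝ}

/-- The sum of the `i`-th row of `B` after multiplying column `k` by `exp (s k)`. -/
noncomputable def rowWeight (B : ι → J → ℝ) (s : J → ℝ) (i : ι) : ℝ := ∑ k, B i k * Real.exp (s k)

lemma mul_exp_le_rowWeight (hB : ∀ i j, 0 ≤ B i j) (s : J → ℝ) (i : ι) (j : J) :
    B i j * Real.exp (s j) ≤ rowWeight B s i :=
  single_le_sum (f := fun k => B i k * Real.exp (s k))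
    (fun k _ => mul_nonneg (hB i k) (Real.exp_pos _).le) (mem_univ j)

lemma rowWeight_pos (hB : ∀ i j, 0 ≤ B i j) (s : J → ℝ) {i : ι} {j : J} (hij : B i j ≠ 0) :
    0 < rowWeight B s i :=
  (mul_pos ((hB i j).lt_of_ne' hij) (Real.exp_pos _)).trans_le (mul_exp_le_rowWeight hB s i j)

lemma log_add_le_log_rowWeight (hB : ∀ i j, 0 ≤ B i j) (s : J → ℝ) {i : ι} {j : J}
    (hij : B i j ≠ 0) : Real.log (B i j) + s j ≤ Real.log (rowWeight B s i) := by
  have hpos : 0 < B i j := (hB i j).lt_of_ne' hij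
  calc Real.log (B i j) + s j = Real.log (B i j * Real.exp (s j)) := by
        rw [Real.log_mul hij (Real.exp_pos _).ne', Real.log_exp]
    _ ≤ Real.log (rowWeight B s i) :=
        Real.log_le_log (mul_pos hpos (Real.exp_pos _)) (mul_exp_le_rowWeight hB s i j)

variable [Fintype ι]

/-- The relative entropy of `N` with respect to the matrix obtained from `B` by multiplying column
`j` by `exp (s j)` and normalising the rows, up to a constant. Its critical points in `s` are the
column scalings with prescribed column sums. -/
noncomputable def scalingPotential (B N : ι → J → ℝ) (s : J → ℝ) : ℝ :=
  ∑ i, ∑ j, N i j * (Real.log (rowWeight B s i) - s j - Real.log (B i j))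

lemma mul_sub_le_scalingPotential (hB : ∀ i j, 0 ≤ B i j) (hN : ∀ i j, 0 ≤ N i j)
    (hsupp : ∀ i j, N i j ≠ 0 → B i j ≠ 0) (s : J → ℝ) {i : ι} {j k : J} (hik : B i k ≠ 0) :
    N i j * (s k - s j + (Real.log (B i k) - Real.log (B i j))) ≤ scalingPotential B N s := by
  have term_nonneg (i : ι) (j : J) :
      0 ≤ N i j * (Real.log (rowWeight B s i) - s j - Real.log (B i j)) := by
    rcases eq_or_ne (N i j) 0 with h | h
    · rw [h, zero_mul]
    · refine mul_nonneg (hN i j) ?_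
      linarith [log_add_le_log_rowWeight hB s (hsupp i j h)]
  calc N i j * (s k - s j + (Real.log (B i k) - Real.log (B i j)))
      ≤ N i j * (Real.log (rowWeight B s i) - s j - Real.log (B i j)) := by
        refine mul_le_mul_of_nonneg_left ?_ (hN i j)
        linarith [log_add_le_log_rowWeight hB s hik]
    _ ≤ ∑ j, N i j * (Real.log (rowWeight B s i) - s j - Real.log (B i j)) :=
        single_le_sum (f := fun j => N i j * (Real.log (rowWeight B s i) - s j - Real.log (B i j)))
          (fun j _ => term_nonneg i j) (mem_univ j)
    _ ≤ scalingPotential B N s :=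
        single_le_sum (f := fun i => ∑ j, N i j * (Real.log (rowWeight B s i) - s j -
          Real.log (B i j))) (fun i _ => sum_nonneg fun j _ => term_nonneg i j) (mem_univ i)

lemma scalingPotential_sub (hB : ∀ i j, 0 ≤ B i j) (hsupp : ∀ i j, N i j ≠ 0 → B i j ≠ 0)
    (s : J → ℝ) {c : J → ℝ} (hc : ∀ i j k, B i j ≠ 0 → B i k ≠ 0 → c j = c k) :
    scalingPotential B N (s - c) = scalingPotential B N s := by
  refine sum_congr rfl fun i _ => sum_congr rfl fun j _ => ?_
  rcases eq_or_ne (N i j) 0 with h | h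
  · rw [h, zero_mul, zero_mul]
  have hweight : rowWeight B (s - c) i = rowWeight B s i * Real.exp (-c j) := by
    rw [rowWeight, rowWeight, sum_mul]
    refine sum_congr rfl fun k _ => ?_
    rcases eq_or_ne (B i k) 0 with hk | hk
    · simp only [hk, zero_mul]
    · rw [Pi.sub_apply, hc i j k (hsupp i j h) hk, sub_eq_add_neg, Real.exp_add, mul_assoc]
  rw [hweight, Real.log_mul (rowWeight_pos hB s (hsupp i j h)).ne' (Real.exp_pos _).ne',
    Real.log_exp, Pi.sub_apply]
  ring

lemma continuous_scalingPotential (hB : ∀ i j, 0 ≤ B i j) (hsupp : ∀ i j, N i j ≠ 0 → B i j ≠ 0) :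
    Continuous (scalingPotential B N) := by
  refine continuous_finsetSum _ fun i _ => continuous_finsetSum _ fun j _ => ?_
  rcases eq_or_ne (N i j) 0 with h | h
  · simp only [h, zero_mul]
    exact continuous_const
  · have hweight : Continuous fun s => rowWeight B s i := by
      unfold rowWeight
      fun_prop
    have hlog : Continuous fun s => Real.log (rowWeight B s i) :=
      hweight.log fun s => (rowWeight_pos hB s (hsupp i j h)).ne'
    fun_prop

/-- Two columns are linked if the difference of their scaling exponents is bounded on the sublevel
set of the potential through `0`. -/
def linkedColumns (B N : ι → J → ℝ) : Setoid J where
  r j k := ∃ M, ∀ s, scalingPotential B N s ≤ scalingPotential B N 0 → |s j - s k| ≤ M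
  iseqv :=
    { refl := fun j => ⟨0, fun s _ => by simp⟩
      symm := fun ⟨M, hM⟩ => ⟨M, fun s hs => abs_sub_comm (s _) (s _) ▸ hM s hs⟩
      trans := fun ⟨M, hM⟩ ⟨M', hM'⟩ =>
        ⟨M + M', fun s hs => (abs_sub_le _ _ _).trans (add_le_add (hM s hs) (hM' s hs))⟩ }

lemma linkedColumns_of_ne_zero (hB : ∀ i j, 0 ≤ B i j) (hN : ∀ i j, 0 ≤ N i j)
    (hsupp : ∀ i j, N i j ≠ 0 ↔ B i j ≠ 0) {i : ι} {j k : J} (hij : B i j ≠ 0) (hik : B i k ≠ 0) :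
    linkedColumns B N j k := by
  have exists_bound {j k : J} (hij : B i j ≠ 0) (hik : B i k ≠ 0) :
      ∃ M, ∀ s, scalingPotential B N s ≤ scalingPotential B N 0 → s k - s j ≤ M := by
    refine ⟨scalingPotential B N 0 / N i j - (Real.log (B i k) - Real.log (B i j)),
      fun s hs => ?_⟩
    rw [le_sub_iff_add_le, le_div_iff₀' ((hN i j).lt_of_ne' ((hsupp i j).mpr hij))]
    exact (mul_sub_le_scalingPotential hB hN (fun i j => (hsupp i j).mp) s hik).trans hs
  obtain ⟨M₁, hM₁⟩ := exists_bound hij hik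
  obtain ⟨M₂, hM₂⟩ := exists_bound hik hij
  refine ⟨max M₁ M₂, fun s hs => abs_le.mpr ⟨?_, ?_⟩⟩
  · linarith [hM₁ s hs, le_max_left M₁ M₂]
  · linarith [hM₂ s hs, le_max_right M₁ M₂]

-- The potential is unchanged by shifts that are constant on linked columns, and modulo such shifts
-- its sublevel set is bounded.
lemma exists_forall_scalingPotential_le (hB : ∀ i j, 0 ≤ B i j) (hN : ∀ i j, 0 ≤ N i j)
    (hsupp : ∀ i j, N i j ≠ 0 ↔ B i j ≠ 0) :
    ∃ s, ∀ s', scalingPotential B N s ≤ scalingPotential B N s' := by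
  let _ : Setoid J := linkedColumns B N
  let rep (j : J) : J := (⟦j⟧ : Quotient (linkedColumns B N)).out
  have hrep (j : J) : ∃ M, ∀ s, scalingPotential B N s ≤ scalingPotential B N 0 →
      |s j - s (rep j)| ≤ M :=
    Setoid.symm (Quotient.mk_out j)
  choose M hM using hrep
  have hnormalize (s : J → ℝ) :
      scalingPotential B N (s - s ∘ rep) = scalingPotential B N s := by
    refine scalingPotential_sub hB (fun i j => (hsupp i j).mp) s fun i j k hij hik => ?_
    have : rep j = rep k :=
      congrArg Quotient.out (Quotient.sound (linkedColumns_of_ne_zero hB hN hsupp hij hik))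
    rw [Function.comp_apply, Function.comp_apply, this]
  have hbox {s : J → ℝ} (hs : scalingPotential B N s ≤ scalingPotential B N 0) :
      s - s ∘ rep ∈ Set.Icc (-M) M :=
    ⟨fun j => (abs_le.mp (hM j s hs)).1, fun j => (abs_le.mp (hM j s hs)).2⟩
  have hzero : (0 : J → ℝ) ∈ Set.Icc (-M) M := by
    simpa using hbox (le_refl (scalingPotential B N 0))
  obtain ⟨s, -, hs⟩ := isCompact_Icc.exists_isMinOn ⟨0, hzero⟩
    (continuous_scalingPotential hB fun i j => (hsupp i j).mp).continuousOn
  refine ⟨s, fun s' => ?_⟩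
  rcases le_total (scalingPotential B N s') (scalingPotential B N 0) with h | h
  · rw [← hnormalize s']
    exact hs (hbox h)
  · exact (hs hzero).trans h

lemma hasDerivAt_scalingPotential_update [DecidableEq J] (hB : ∀ i j, 0 ≤ B i j)
    (hsupp : ∀ i j, N i j ≠ 0 → B i j ≠ 0) (s : J → ℝ) (j : J) :
    HasDerivAt (fun x => scalingPotential B N (Function.update s j x))
      (∑ i, ∑ k, N i k *
        (B i j * Real.exp (s j) / rowWeight B s i - (Pi.single j 1 : J → ℝ) k)) (s j) := by
  have hcoord (k : J) :
      HasDerivAt (fun x => Function.update s j x k) ((Pi.single j 1 : J → ℝ) k) (s j) :=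
    hasDerivAt_pi.mp (hasDerivAt_update s j (s j)) k
  have hweight (i : ι) : HasDerivAt (fun x => rowWeight B (Function.update s j x) i)
      (B i j * Real.exp (s j)) (s j) := by
    have h := HasDerivAt.fun_sum fun k (_ : k ∈ univ) => ((hcoord k).exp).const_mul (B i k)
    exact h.congr_deriv (by simp [Pi.single_apply])
  refine HasDerivAt.fun_sum fun i _ => HasDerivAt.fun_sum fun k _ => ?_
  rcases eq_or_ne (N i k) 0 with h | h
  · simpa only [h, zero_mul] using hasDerivAt_const (s j) (0 : ℝ)
  · have hlog := (hweight i).log (rowWeight_pos hB _ (hsupp i k h)).ne'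
    rw [Function.update_eq_self] at hlog
    exact ((hlog.sub (hcoord k)).sub_const _).const_mul _

/-- A form of Menon's theorem on matrices with prescribed row and column sums. -/
theorem exists_column_scaling (hB : ∀ i j, 0 ≤ B i j) (hN : ∀ i j, 0 ≤ N i j)
    (hsupp : ∀ i j, N i j ≠ 0 ↔ B i j ≠ 0) :
    ∃ c : J → ℝ, (∀ j, 0 < c j) ∧
      ∀ j, ∑ i, (∑ k, N i k) * (B i j * c j / ∑ k, B i k * c k) = ∑ i, N i j := by
  classical
  obtain ⟨s, hs⟩ := exists_forall_scalingPotential_le hB hN hsupp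
  refine ⟨fun j => Real.exp (s j), fun j => Real.exp_pos _, fun j => ?_⟩
  have hmin : IsLocalMin (fun x => scalingPotential B N (Function.update s j x)) (s j) :=
    Filter.Eventually.of_forall fun x => by simpa only [Function.update_eq_self] using hs _
  have hcritical := hmin.hasDerivAt_eq_zero
    (hasDerivAt_scalingPotential_update hB (fun i j => (hsupp i j).mp) s j)
  simp only [mul_sub, sum_sub_distrib, ← sum_mul, sub_eq_zero] at hcritical
  simpa [rowWeight, Pi.single_apply] using hcritical

end Scaling

section Nullity

variable {J : Type*} [Fintype J]

-- Bessel's inequality bounds `‖O j‖ ^ 2` below by the sum of the squares of the `j`-th coordinates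
-- of an orthonormal basis of `V`.
lemma finrank_le_sum_norm_sq {V : Submodule ℝ (EuclideanSpace ℝ J)} {O : J → EuclideanSpace ℝ J}
    (hO : ∀ x ∈ V, ∀ j, ⟪O j, x⟫_ℝ = x j) : (finrank ℝ V : ℝ) ≤ ∑ j, ‖O j‖ ^ 2 := by
  let e := stdOrthonormalBasis ℝ V
  have horth : Orthonormal ℝ fun a => (e a : EuclideanSpace ℝ J) :=
    e.orthonormal.comp_linearIsometry V.subtypeₗᵢ
  calc (finrank ℝ V : ℝ) = ∑ a, ‖(e a : EuclideanSpace ℝ J)‖ ^ 2 := by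
        simp only [horth.1, one_pow, sum_const, card_univ, Fintype.card_fin, nsmul_eq_mul, mul_one]
    _ = ∑ j, ∑ a, ‖⟪(e a : EuclideanSpace ℝ J), O j⟫_ℝ‖ ^ 2 := by
        simp only [EuclideanSpace.norm_sq_eq, real_inner_comm, hO _ (e _).2]
        exact sum_comm
    _ ≤ ∑ j, ‖O j‖ ^ 2 := sum_le_sum fun j _ => horth.sum_inner_products_le (O j)

variable [DecidableEq J]

lemma sqrt_mul_eq_sum_of_mulVec_eq_zero {G : Matrix J J ℝ} (hdiag : ∀ j, 0 < G j j) {x : J → ℝ}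
    (hx : G.mulVec x = 0) (j : J) :
    √(G j j) * x j =
      ∑ k ∈ univ.erase j, √(G k k) * x k * -(G j k / (√(G j j) * √(G k k))) := by
  have hrow : ∑ k, G j k * x k = 0 := congrFun hx j
  rw [← add_sum_erase _ _ (mem_univ j)] at hrow
  have hterm : ∀ k ∈ univ.erase j, √(G k k) * x k * -(G j k / (√(G j j) * √(G k k))) =
      -(G j k * x k) / √(G j j) := by
    intro k _
    have := (Real.sqrt_pos.mpr (hdiag k)).ne'
    have := (Real.sqrt_pos.mpr (hdiag j)).ne'
    field_simp
  rw [sum_congr rfl hterm, ← sum_div, sum_neg_distrib, ← eq_neg_of_add_eq_zero_left hrow,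
    mul_div_right_comm, Real.div_sqrt]

theorem finrank_ker_mulVecLin_le {G : Matrix J J ℝ} (hdiag : ∀ j, 0 < G j j) :
    (finrank ℝ G.mulVecLin.ker : ℝ) ≤
      ∑ j, ∑ k ∈ univ.erase j, G j k ^ 2 / (G j j * G k k) := by
  let scale : (J → ℝ) ≃ₗ[ℝ] EuclideanSpace ℝ J :=
    (LinearEquiv.piCongrRight fun j =>
      LinearEquiv.smulOfNeZero ℝ ℝ √(G j j) (Real.sqrt_pos.mpr (hdiag j)).ne').trans
      (WithLp.linearEquiv 2 ℝ (J → ℝ)).symm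
  have hscale (x : J → ℝ) (j : J) : scale x j = √(G j j) * x j := rfl
  let O (j : J) : EuclideanSpace ℝ J :=
    WithLp.toLp 2 fun k => if k = j then 0 else -(G j k / (√(G j j) * √(G k k)))
  have hO : ∀ x ∈ G.mulVecLin.ker.map scale.toLinearMap, ∀ j, ⟪O j, x⟫_ℝ = x j := by
    rintro _ ⟨x, hx, rfl⟩ j
    calc ⟪O j, scale x⟫_ℝ = ∑ k ∈ univ.erase j, (scale x) k * O j k := by
          rw [PiLp.inner_apply, ← add_sum_erase _ _ (mem_univ j)]
          simp [O]
      _ = √(G j j) * x j := by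
          rw [sqrt_mul_eq_sum_of_mulVec_eq_zero hdiag hx]
          exact sum_congr rfl fun k hk => by
            simp only [hscale, O, if_neg (ne_of_mem_erase hk)]
      _ = scale x j := (hscale x j).symm
  calc (finrank ℝ G.mulVecLin.ker : ℝ)
      = finrank ℝ (G.mulVecLin.ker.map scale.toLinearMap) := by
        rw [LinearEquiv.finrank_map_eq]
    _ ≤ ∑ j, ‖O j‖ ^ 2 := finrank_le_sum_norm_sq hO
    _ = ∑ j, ∑ k ∈ univ.erase j, G j k ^ 2 / (G j j * G k k) := by
        refine sum_congr rfl fun j _ => ?_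
        rw [EuclideanSpace.norm_sq_eq, ← add_sum_erase _ _ (mem_univ j)]
        simp only [O, if_pos, norm_zero, zero_pow two_ne_zero, zero_add]
        refine sum_congr rfl fun k hk => ?_
        rw [if_neg (ne_of_mem_erase hk), norm_neg, Real.norm_eq_abs, sq_abs, div_pow, mul_pow,
          Real.sq_sqrt (hdiag j).le, Real.sq_sqrt (hdiag k).le]

end Nullity

section DesignMatrix

variable {ι J : Type*} [Fintype ι] [Fintype J]

/-- The Gram matrix of the columns of `A` with row `i` weighted by `ρ i / ∑ l, A i l ^ 2 * c l`. -/
noncomputable def scaledGram (A : Matrix ι J ℝ) (c : J → ℝ) (ρ : ι → ℝ) : Matrix J J ℝ :=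
  Matrix.of fun j k => ∑ i, ρ i / (∑ l, A i l ^ 2 * c l) * A i j * A i k

lemma ker_le_ker_scaledGram (A : Matrix ι J ℝ) (c : J → ℝ) (ρ : ι → ℝ) :
    A.mulVecLin.ker ≤ (scaledGram A c ρ).mulVecLin.ker := by
  intro x hx
  ext j
  have hrow (i : ι) : ∑ k, A i k * x k = 0 := congrFun hx i
  calc ∑ k, scaledGram A c ρ j k * x k
      = ∑ i, ρ i / (∑ l, A i l ^ 2 * c l) * A i j * ∑ k, A i k * x k := by
        simp only [scaledGram, Matrix.of_apply, sum_mul, mul_sum]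
        rw [sum_comm]
        exact sum_congr rfl fun i _ => sum_congr rfl fun k _ => by ring
    _ = 0 := by simp only [hrow, mul_zero, sum_const_zero]

lemma abs_scaledGram_mul_sqrt_le {A : Matrix ι J ℝ} {c : J → ℝ} (hc : ∀ j, 0 < c j) {ρ : ι → ℝ}
    (hρ : ∀ i, 0 ≤ ρ i) {j k : J} (hjk : j ≠ k) :
    |scaledGram A c ρ j k * (√(c j) * √(c k))| ≤
      (∑ i with A i j ≠ 0 ∧ A i k ≠ 0, ρ i) / 2 := by
  classical
  rw [scaledGram, Matrix.of_apply, sum_mul, sum_div, sum_filter]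
  refine (abs_sum_le_sum_abs _ _).trans (sum_le_sum fun i _ => ?_)
  split_ifs with h
  · have hpair : A i j ^ 2 * c j + A i k ^ 2 * c k ≤ ∑ l, A i l ^ 2 * c l := by
      rw [← sum_pair hjk (f := fun l => A i l ^ 2 * c l)]
      exact sum_le_univ_sum_of_nonneg fun l => mul_nonneg (sq_nonneg _) (hc l).le
    have hpos : 0 < ∑ l, A i l ^ 2 * c l := by
      refine lt_of_lt_of_le (add_pos_of_pos_of_nonneg ?_ ?_) hpair
      · exact mul_pos (sq_pos_of_ne_zero h.1) (hc j)
      · exact mul_nonneg (sq_nonneg _) (hc k).le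
    have hamgm := two_mul_le_add_sq (|A i j| * √(c j)) (|A i k| * √(c k))
    rw [mul_pow, mul_pow, sq_abs, sq_abs, Real.sq_sqrt (hc j).le, Real.sq_sqrt (hc k).le] at hamgm
    calc |ρ i / (∑ l, A i l ^ 2 * c l) * A i j * A i k * (√(c j) * √(c k))|
        = ρ i / 2 * ((2 * (|A i j| * √(c j)) * (|A i k| * √(c k))) / ∑ l, A i l ^ 2 * c l) := by
          simp only [abs_mul, abs_div, abs_of_nonneg (hρ i), abs_of_pos hpos,
            abs_of_nonneg (Real.sqrt_nonneg _)]
          ring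
      _ ≤ ρ i / 2 := by
          refine mul_le_of_le_one_right (div_nonneg (hρ i) zero_le_two) ?_
          exact (div_le_one hpos).mpr (hamgm.trans hpair)
  · rcases not_and_or.mp h with h | h <;> simp [not_not.mp h]

lemma sq_scaledGram_div_le {A : Matrix ι J ℝ} {c : J → ℝ} (hc : ∀ j, 0 < c j) {ρ : ι → ℝ}
    (hρ : ∀ i, 0 ≤ ρ i) {j k : J} (hjk : j ≠ k) (hj : 0 < scaledGram A c ρ j j)
    (hk : 0 < scaledGram A c ρ k k) :
    scaledGram A c ρ j k ^ 2 / (scaledGram A c ρ j j * scaledGram A c ρ k k) ≤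
      1 / 4 * ((∑ i with A i j ≠ 0 ∧ A i k ≠ 0, ρ i) ^ 2 /
        ((scaledGram A c ρ j j * c j) * (scaledGram A c ρ k k * c k))) := by
  have hle := sq_le_sq.mpr
    ((abs_scaledGram_mul_sqrt_le (A := A) hc hρ hjk).trans (le_abs_self _))
  rw [mul_pow, mul_pow, Real.sq_sqrt (hc j).le, Real.sq_sqrt (hc k).le] at hle
  calc scaledGram A c ρ j k ^ 2 / (scaledGram A c ρ j j * scaledGram A c ρ k k)
      = scaledGram A c ρ j k ^ 2 * (c j * c k) /
          ((scaledGram A c ρ j j * c j) * (scaledGram A c ρ k k * c k)) := by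
        have := (hc j).ne'
        have := (hc k).ne'
        field_simp
    _ ≤ ((∑ i with A i j ≠ 0 ∧ A i k ≠ 0, ρ i) / 2) ^ 2 /
          ((scaledGram A c ρ j j * c j) * (scaledGram A c ρ k k * c k)) :=
        div_le_div_of_nonneg_right hle (mul_pos (mul_pos hj (hc j)) (mul_pos hk (hc k))).le
    _ = _ := by ring

/-- A quantitative form of the bound of Barak, Dvir, Wigderson and Yehudayoff on the rank of design
matrices. -/
theorem finrank_ker_le_of_design [DecidableEq J] {A : Matrix ι J ℝ} {N : ι → J → ℝ}
    (hN : ∀ i j, 0 ≤ N i j) (hsupp : ∀ i j, N i j ≠ 0 ↔ A i j ≠ 0) (hcol : ∀ j, ∃ i, A i j ≠ 0) :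
    (finrank ℝ A.mulVecLin.ker : ℝ) ≤ 1 / 4 * ∑ j, ∑ k ∈ univ.erase j,
      (∑ i with A i j ≠ 0 ∧ A i k ≠ 0, ∑ l, N i l) ^ 2 / ((∑ i, N i j) * ∑ i, N i k) := by
  obtain ⟨c, hc, hscaled⟩ := exists_column_scaling (B := fun i j => A i j ^ 2)
    (fun i j => sq_nonneg _) hN (by simpa using hsupp)
  set G := scaledGram A c fun i => ∑ l, N i l
  have hT (j : J) : 0 < ∑ i, N i j := by
    obtain ⟨i, hi⟩ := hcol j
    exact sum_pos' (fun i _ => hN i j) ⟨i, mem_univ i, (hN i j).lt_of_ne' ((hsupp i j).mpr hi)⟩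
  have hdiag (j : J) : G j j * c j = ∑ i, N i j := by
    simp only [← hscaled, G, scaledGram, Matrix.of_apply]
    rw [sum_mul]
    exact sum_congr rfl fun i _ => by ring
  have hGpos (j : J) : 0 < G j j := pos_of_mul_pos_left ((hdiag j).symm ▸ hT j) (hc j).le
  calc (finrank ℝ A.mulVecLin.ker : ℝ) ≤ finrank ℝ G.mulVecLin.ker :=
        mod_cast Submodule.finrank_mono (ker_le_ker_scaledGram A c _)
    _ ≤ ∑ j, ∑ k ∈ univ.erase j, G j k ^ 2 / (G j j * G k k) := finrank_ker_mulVecLin_le hGpos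
    _ ≤ _ := by
      rw [mul_sum]
      refine sum_le_sum fun j _ => ?_
      rw [mul_sum]
      refine sum_le_sum fun k hk => ?_
      rw [← hdiag, ← hdiag]
      exact sq_scaledGram_div_le hc (fun i => sum_nonneg fun l _ => hN i l)
        (ne_of_mem_erase hk).symm (hGpos j) (hGpos k)

end DesignMatrix

section TripleSystem

variable {V : Type*}

/-- A symmetric system of nonnegative weights on triples of distinct elements of `V`. -/
structure IsTripleWeight (t : V → V → V → ℝ) : Prop where
  nonneg : ∀ a b c, 0 ≤ t a b c
  swap_left : ∀ a b c, t b a c = t a b c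
  swap_right : ∀ a b c, t a c b = t a b c
  ne_left : ∀ a b c, t a b c ≠ 0 → a ≠ b

lemma IsTripleWeight.pairwise_ne {t : V → V → V → ℝ} (ht : IsTripleWeight t) {a b c : V}
    (h : t a b c ≠ 0) : a ≠ b ∧ a ≠ c ∧ b ≠ c :=
  ⟨ht.ne_left a b c h, ht.ne_left a c b (by rwa [ht.swap_right]),
    ht.ne_left b c a (by rwa [ht.swap_right, ht.swap_left])⟩

/-- The set of entries of a triple. -/
def entries [DecidableEq V] (e : V × V × V) : Finset V := {e.1, e.2.1, e.2.2}

variable {F : Type*} [Fintype V] [AddCommGroup F] [Module ℝ F] {z : V → F}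

lemma finrank_span_range_le_finrank_ker {ι : Type*} [Finite ι] {A : Matrix ι V ℝ}
    (h : ∀ i, ∑ j, A i j • z j = 0) :
    finrank ℝ (Submodule.span ℝ (Set.range z)) ≤ finrank ℝ A.mulVecLin.ker := by
  have := Fintype.ofFinite ι
  have hle : A.transpose.mulVecLin.range ≤ (Fintype.linearCombination ℝ z).ker := by
    rintro _ ⟨x, rfl⟩
    simp only [LinearMap.mem_ker, Fintype.linearCombination_apply, Matrix.mulVecLin_apply,
      Matrix.mulVec, dotProduct, Matrix.transpose_apply, sum_smul, mul_comm _ (x _), mul_smul]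
    rw [sum_comm]
    simp only [← smul_sum, h, smul_zero, sum_const_zero]
  have hrank : A.rank ≤ finrank ℝ (Fintype.linearCombination ℝ z).ker := by
    rw [← Matrix.rank_transpose]
    exact Submodule.finrank_mono hle
  have hnullity := A.mulVecLin.finrank_range_add_finrank_ker
  have hnullity' := (Fintype.linearCombination ℝ z).finrank_range_add_finrank_ker
  rw [← Matrix.rank] at hnullity
  rw [Fintype.range_linearCombination] at hnullity'
  omega

/-- The total weight of the triples starting with `j` and `k`. -/
def pairWeight (t : V → V → V → ℝ) (j k : V) : ℝ := ∑ l, t j k l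

/-- The total weight of the triples starting with `j`. -/
def vertexWeight (t : V → V → V → ℝ) (j : V) : ℝ := ∑ k, pairWeight t j k

variable {t : V → V → V → ℝ}

namespace IsTripleWeight

lemma pairWeight_nonneg (ht : IsTripleWeight t) (j k : V) : 0 ≤ pairWeight t j k :=
  sum_nonneg fun l _ => ht.nonneg j k l

lemma pairWeight_comm (ht : IsTripleWeight t) (j k : V) : pairWeight t j k = pairWeight t k j :=
  sum_congr rfl fun l _ => (ht.swap_left j k l).symm

lemma pairWeight_self (ht : IsTripleWeight t) (j : V) : pairWeight t j j = 0 :=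
  sum_eq_zero fun l _ => of_not_not fun h => ht.ne_left j j l h rfl

lemma vertexWeight_pos (ht : IsTripleWeight t) {a b c : V} (h : t a b c ≠ 0) :
    0 < vertexWeight t a :=
  sum_pos' (fun k _ => ht.pairWeight_nonneg a k) ⟨b, mem_univ b,
    sum_pos' (fun l _ => ht.nonneg a b l) ⟨c, mem_univ c, (ht.nonneg a b c).lt_of_ne' h⟩⟩

variable [DecidableEq V]

lemma sum_entries (ht : IsTripleWeight t) (e : V × V × V) :
    ∑ l, (if l ∈ entries e then t e.1 e.2.1 e.2.2 else 0) = 3 * t e.1 e.2.1 e.2.2 := by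
  rw [sum_ite_mem, univ_inter, sum_const, nsmul_eq_mul]
  by_cases h : t e.1 e.2.1 e.2.2 = 0
  · rw [h, mul_zero, mul_zero]
  · obtain ⟨hab, hac, hbc⟩ := ht.pairwise_ne h
    rw [entries, card_eq_three.mpr ⟨_, _, _, hab, hac, hbc, rfl⟩, Nat.cast_ofNat]

lemma sum_mem_entries (ht : IsTripleWeight t) (j : V) :
    ∑ e : V × V × V, (if j ∈ entries e then t e.1 e.2.1 e.2.2 else 0) =
      3 * vertexWeight t j := by
  have hsplit (a b c : V) : (if j ∈ entries (a, b, c) then t a b c else 0) =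
      (if j = a then t j b c else 0) + (if j = b then t j a c else 0) +
        (if j = c then t j a b else 0) := by
    have hb := ht.swap_left a b c
    have hc : t c a b = t a b c := by rw [ht.swap_left, ht.swap_right]
    have hne := ht.pairwise_ne (a := a) (b := b) (c := c)
    simp only [entries, mem_insert, mem_singleton]
    grind
  simp only [Fintype.sum_prod_type, hsplit, sum_add_distrib, sum_ite_irrel, sum_ite_eq, mem_univ,
    if_true, sum_const_zero, vertexWeight, pairWeight]
  ring

lemma sum_pair_mem_entries_le (ht : IsTripleWeight t) {j k : V} (hjk : j ≠ k) :
    ∑ e : V × V × V, (if j ∈ entries e ∧ k ∈ entries e then t e.1 e.2.1 e.2.2 else 0) ≤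
      6 * pairWeight t j k := by
  have hsplit (a b c : V) :
      (if j ∈ entries (a, b, c) ∧ k ∈ entries (a, b, c) then t a b c else 0) ≤
      (if j = a then if k = b then t j k c else 0 else 0) +
      (if j = a then if k = c then t j k b else 0 else 0) +
      (if j = b then if k = a then t j k c else 0 else 0) +
      (if j = b then if k = c then t j k a else 0 else 0) +
      (if j = c then if k = a then t j k b else 0 else 0) +
      (if j = c then if k = b then t j k a else 0 else 0) := by
    have hsymm := ht.swap_left
    have hsymm' := ht.swap_right
    have hab := ht.nonneg
    simp only [entries, mem_insert, mem_singleton]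
    grind
  simp only [Fintype.sum_prod_type]
  refine (sum_le_sum fun a _ => sum_le_sum fun b _ =>
    sum_le_sum fun c _ => hsplit a b c).trans_eq ?_
  simp only [sum_add_distrib, sum_ite_irrel, sum_ite_eq, mem_univ, if_true,
    sum_const_zero, pairWeight]
  ring

lemma exists_relation (ht : IsTripleWeight t) {a b c : V} (h : t a b c ≠ 0) {x y w : ℝ}
    (hx : x ≠ 0) (hy : y ≠ 0) (hw : w ≠ 0) (hrel : x • z a + y • z b + w • z c = 0) :
    ∃ f : V → ℝ, (∀ j, f j ≠ 0 ↔ j ∈ entries (a, b, c)) ∧ ∑ j, f j • z j = 0 := by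
  obtain ⟨hab, hac, hbc⟩ := ht.pairwise_ne h
  refine ⟨Pi.single a x + Pi.single b y + Pi.single c w, fun j => ?_, ?_⟩
  · simp only [Pi.add_apply, Pi.single_apply, entries, mem_insert, mem_singleton]
    grind
  · simpa only [Pi.add_apply, add_smul, sum_add_distrib, Pi.single_apply, ite_smul, zero_smul,
      sum_ite_eq', mem_univ, if_true] using hrel

lemma exists_relation_matrix (ht : IsTripleWeight t)
    (hrel : ∀ a b c, t a b c ≠ 0 → ∃ x y w : ℝ, x ≠ 0 ∧ y ≠ 0 ∧ w ≠ 0 ∧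
      x • z a + y • z b + w • z c = 0) :
    ∃ A : Matrix (V × V × V) V ℝ,
      (∀ e j, A e j ≠ 0 ↔ j ∈ entries e ∧ t e.1 e.2.1 e.2.2 ≠ 0) ∧
        ∀ e, ∑ j, A e j • z j = 0 := by
  have hrow (e : V × V × V) :
      ∃ f : V → ℝ, (∀ j, f j ≠ 0 ↔ j ∈ entries e ∧ t e.1 e.2.1 e.2.2 ≠ 0) ∧
        ∑ j, f j • z j = 0 := by
    by_cases h : t e.1 e.2.1 e.2.2 = 0
    · exact ⟨0, by simp [h], by simp⟩
    · obtain ⟨x, y, w, hx, hy, hw, hsum⟩ := hrel _ _ _ h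
      simpa only [h, not_false_eq_true, ne_eq, and_true] using ht.exists_relation h hx hy hw hsum
  choose A hA hAz using hrow
  exact ⟨Matrix.of A, hA, hAz⟩

lemma sum_common_entries_le (ht : IsTripleWeight t) {A : Matrix (V × V × V) V ℝ}
    (hA : ∀ e j, A e j ≠ 0 ↔ j ∈ entries e ∧ t e.1 e.2.1 e.2.2 ≠ 0) {j k : V} (hjk : j ≠ k) :
    ∑ e with A e j ≠ 0 ∧ A e k ≠ 0, ∑ l, (if l ∈ entries e then t e.1 e.2.1 e.2.2 else 0) ≤
      18 * pairWeight t j k := by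
  have hentries (e : V × V × V) :
      (if A e j ≠ 0 ∧ A e k ≠ 0 then
        ∑ l, (if l ∈ entries e then t e.1 e.2.1 e.2.2 else 0) else 0) =
      3 * if j ∈ entries e ∧ k ∈ entries e then t e.1 e.2.1 e.2.2 else 0 := by
    simp only [hA, ht.sum_entries]
    grind
  rw [sum_filter, sum_congr rfl fun e _ => hentries e, ← mul_sum]
  linarith [ht.sum_pair_mem_entries_le hjk]

theorem finrank_span_range_le (ht : IsTripleWeight t) (hpos : ∀ j, 0 < vertexWeight t j)
    (hrel : ∀ a b c, t a b c ≠ 0 → ∃ x y w : ℝ, x ≠ 0 ∧ y ≠ 0 ∧ w ≠ 0 ∧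
      x • z a + y • z b + w • z c = 0) :
    (finrank ℝ (Submodule.span ℝ (Set.range z)) : ℝ) ≤
      9 * ∑ j, ∑ k ∈ univ.erase j,
        pairWeight t j k ^ 2 / (vertexWeight t j * vertexWeight t k) := by
  obtain ⟨A, hA, hAz⟩ := ht.exists_relation_matrix hrel
  let N (e : V × V × V) (j : V) : ℝ := if j ∈ entries e then t e.1 e.2.1 e.2.2 else 0
  have hN (e : V × V × V) (j : V) : N e j ≠ 0 ↔ A e j ≠ 0 := by
    rw [hA, ite_ne_right_iff]
  have hNcol (j : V) : ∑ e, N e j = 3 * vertexWeight t j := ht.sum_mem_entries j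
  have hcol (j : V) : ∃ e, A e j ≠ 0 := by
    have hsum : ∑ e, N e j ≠ 0 := by
      rw [hNcol]
      exact (mul_pos three_pos (hpos j)).ne'
    obtain ⟨e, -, he⟩ := exists_ne_zero_of_sum_ne_zero hsum
    exact ⟨e, (hN e j).mp he⟩
  have hN_nonneg (e : V × V × V) (j : V) : 0 ≤ N e j := ite_nonneg (ht.nonneg _ _ _) le_rfl
  calc (finrank ℝ (Submodule.span ℝ (Set.range z)) : ℝ)
      ≤ finrank ℝ A.mulVecLin.ker :=
        mod_cast finrank_span_range_le_finrank_ker hAz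
    _ ≤ _ := finrank_ker_le_of_design hN_nonneg hN hcol
    _ ≤ 1 / 4 * ∑ j, ∑ k ∈ univ.erase j, (18 * pairWeight t j k) ^ 2 /
          ((3 * vertexWeight t j) * (3 * vertexWeight t k)) := by
        simp only [hNcol]
        gcongr with j _ k hk
        · have := hpos j
          have := hpos k
          positivity
        · exact sum_nonneg fun e _ => sum_nonneg fun l _ => hN_nonneg e l
        · exact ht.sum_common_entries_le hA (ne_of_mem_erase hk).symm
    _ = _ := by
        simp only [mul_sum]
        refine sum_congr rfl fun j _ => sum_congr rfl fun k _ => ?_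
        ring

end IsTripleWeight

end TripleSystem

section OrdinaryLines

variable {P X : Type*} {σ : P → P → X}

/-- The incidence laws of a map sending two distinct points to the direction of the line through
them. The values on the diagonal are irrelevant. -/
structure IsDirectionMap (σ : P → P → X) : Prop where
  symm : ∀ p q, σ p q = σ q p
  trans : ∀ {p q r}, p ≠ q → p ≠ r → q ≠ r → σ p q = σ p r → σ q r = σ p q

variable [Fintype P] [DecidableEq P] [DecidableEq X]

/-- The points on the line through `p` and `q`, for `p ≠ q`. -/
def lineThrough (σ : P → P → X) (p q : P) : Finset P := {s | s = p ∨ σ p s = σ p q}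

/-- The directions of the lines containing exactly two points. -/
def ordinaryDirections (σ : P → P → X) : Finset X :=
  ({e | e.1 ≠ e.2 ∧ #(lineThrough σ e.1 e.2) = 2} : Finset (P × P)).image fun e => σ e.1 e.2

/-- Half the indicator of the ordinary pairs of direction `u`. -/
noncomputable def ordinaryWeight (σ : P → P → X) (p q : P) (u : X) : ℝ :=
  if p ≠ q ∧ #(lineThrough σ p q) = 2 ∧ σ p q = u then 1 / 2 else 0

/-- The weights of the triples of collinear points, the ordinary directions being viewed as points
at infinity. On each line they are normalised so that every point other than `p` contributes `1` to
the vertex weight of `p`. -/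
noncomputable def lineWeight (σ : P → P → X) :
    P ⊕ ordinaryDirections σ → P ⊕ ordinaryDirections σ → P ⊕ ordinaryDirections σ → ℝ
  | .inl p, .inl q, .inl r =>
    if p ≠ q ∧ p ≠ r ∧ q ≠ r ∧ σ p q = σ p r then 1 / (#(lineThrough σ p q) - 2) else 0
  | .inl p, .inl q, .inr u | .inl p, .inr u, .inl q | .inr u, .inl p, .inl q =>
    ordinaryWeight σ p q u
  | _, _, _ => 0

lemma two_le_card_lineThrough {p q : P} (hpq : p ≠ q) : 2 ≤ #(lineThrough σ p q) := by
  rw [← card_pair hpq]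
  exact card_le_card (by simp [insert_subset_iff, lineThrough])

lemma sum_ordinaryWeight (p q : P) :
    ∑ u : ordinaryDirections σ, ordinaryWeight σ p q u =
      if p ≠ q ∧ #(lineThrough σ p q) = 2 then 1 / 2 else 0 := by
  split_ifs with h
  · have hu : σ p q ∈ ordinaryDirections σ :=
      mem_image.mpr ⟨(p, q), mem_filter.mpr ⟨mem_univ _, h⟩, rfl⟩
    rw [Fintype.sum_eq_single ⟨σ p q, hu⟩]
    · exact if_pos ⟨h.1, h.2, rfl⟩
    · exact fun u hne => if_neg fun h' => hne (Subtype.ext h'.2.2.symm)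
  · exact sum_eq_zero fun u _ => if_neg fun h' => h ⟨h'.1, h'.2.1⟩

lemma card_third_points {p q : P} (hpq : p ≠ q) :
    #{r | p ≠ q ∧ p ≠ r ∧ q ≠ r ∧ σ p q = σ p r} = #(lineThrough σ p q) - 2 := by
  rw [← card_pair hpq, ← card_sdiff_of_subset (by simp [insert_subset_iff, lineThrough])]
  congr 1
  ext r
  simp only [lineThrough, mem_filter, mem_sdiff, mem_insert, mem_singleton, mem_univ]
  grind

lemma pairWeight_lineWeight_inl_inl {p q : P} (hpq : p ≠ q) :
    pairWeight (lineWeight σ) (.inl p) (.inl q) =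
      if #(lineThrough σ p q) = 2 then 1 / 2 else 1 := by
  have hle := two_le_card_lineThrough (σ := σ) hpq
  simp only [pairWeight, Fintype.sum_sum_type, lineWeight, sum_ordinaryWeight]
  rw [← sum_filter, sum_const, card_third_points hpq, nsmul_eq_mul, Nat.cast_sub hle,
    Nat.cast_ofNat]
  split_ifs with hthird hord hord
  · rw [hord]
    norm_num
  · exact absurd hthird.2 hord
  · exact absurd ⟨hpq, hord⟩ hthird
  · rw [add_zero, mul_one_div_cancel]
    exact sub_ne_zero.mpr (mod_cast hord)

lemma pairWeight_lineWeight_inl_self (p : P) :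
    pairWeight (lineWeight σ) (.inl p) (.inl p) = 0 := by
  simp [pairWeight, lineWeight, ordinaryWeight]

lemma pairWeight_lineWeight_inl_inr (p : P) (u : ordinaryDirections σ) :
    pairWeight (lineWeight σ) (.inl p) (.inr u) = ∑ q, ordinaryWeight σ p q u := by
  simp [pairWeight, lineWeight]

lemma pairWeight_lineWeight_inr_inr (u u' : ordinaryDirections σ) :
    pairWeight (lineWeight σ) (.inr u) (.inr u') = 0 := by
  simp [pairWeight, lineWeight]

lemma vertexWeight_lineWeight_inl (p : P) :
    vertexWeight (lineWeight σ) (.inl p) = Fintype.card P - 1 := by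
  have hsplit (q : P) : pairWeight (lineWeight σ) (.inl p) (.inl q) +
      ∑ u : ordinaryDirections σ, ordinaryWeight σ p q u = if q = p then 0 else 1 := by
    rcases eq_or_ne q p with rfl | hqp
    · rw [pairWeight_lineWeight_inl_self, sum_ordinaryWeight]
      simp
    · rw [pairWeight_lineWeight_inl_inl hqp.symm, sum_ordinaryWeight]
      by_cases hord : #(lineThrough σ p q) = 2 <;> norm_num [hord, hqp, hqp.symm]
  simp only [vertexWeight, Fintype.sum_sum_type, pairWeight_lineWeight_inl_inr]
  rw [sum_comm, ← sum_add_distrib, sum_congr rfl fun q _ => hsplit q]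
  simp [sum_ite, filter_ne', card_univ, Fintype.card_pos_iff.mpr ⟨p⟩]

lemma sum_ordinaryWeight_le (p : P) (u : X) : ∑ q, ordinaryWeight σ p q u ≤ 1 / 2 := by
  have hcard : #{q | p ≠ q ∧ #(lineThrough σ p q) = 2 ∧ σ p q = u} ≤ 1 := by
    refine card_le_one.mpr fun q hq r hr => ?_
    obtain ⟨hpq, hline, hu⟩ := (mem_filter.mp hq).2
    obtain ⟨hpr, -, hu'⟩ := (mem_filter.mp hr).2
    by_contra hqr
    have hsub : {p, q, r} ⊆ lineThrough σ p q := by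
      simp [insert_subset_iff, lineThrough, hu, hu']
    have := card_le_card hsub
    rw [card_eq_three.mpr ⟨p, q, r, hpq, hpr, hqr, rfl⟩] at this
    omega
  simp only [ordinaryWeight]
  rw [← sum_filter, sum_const, nsmul_eq_mul]
  exact mul_le_of_le_one_left one_half_pos.le (mod_cast hcard)

lemma sum_sq_div_mul_le {ι : Type*} [Fintype ι] {f : ι → ℝ} {b w m : ℝ} (hf : ∀ i, 0 ≤ f i)
    (hfb : ∀ i, f i ≤ b) (hb : 0 ≤ b) (hw : 0 < w) (hsum : ∑ i, f i ≤ w) (hm : 0 ≤ m) :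
    ∑ i, f i ^ 2 / (w * m) ≤ b / m := by
  have hsq : ∑ i, f i ^ 2 ≤ b * w := calc
    ∑ i, f i ^ 2 ≤ ∑ i, b * f i :=
      sum_le_sum fun i _ => by rw [sq]; exact mul_le_mul_of_nonneg_right (hfb i) (hf i)
    _ = b * ∑ i, f i := (mul_sum ..).symm
    _ ≤ b * w := mul_le_mul_of_nonneg_left hsum hb
  rw [← sum_div, mul_comm w, ← mul_div_mul_right b m hw.ne']
  exact div_le_div_of_nonneg_right hsq (mul_nonneg hm hw.le)

namespace IsDirectionMap

lemma lineThrough_comm (hσ : IsDirectionMap σ) {p q : P} (hpq : p ≠ q) :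
    lineThrough σ p q = lineThrough σ q p := by
  have hsymm := hσ.symm
  have htrans := @hσ.trans
  ext s
  simp only [lineThrough, mem_filter, mem_univ, true_and]
  grind

lemma ordinaryWeight_comm (hσ : IsDirectionMap σ) (p q : P) (u : X) :
    ordinaryWeight σ p q u = ordinaryWeight σ q p u := by
  rcases eq_or_ne p q with rfl | hpq
  · rfl
  · simp only [ordinaryWeight, hσ.lineThrough_comm hpq, hσ.symm p q, ne_comm]

lemma isTripleWeight_lineWeight (hσ : IsDirectionMap σ) : IsTripleWeight (lineWeight σ) where
  nonneg := by
    have hord (p q : P) (u : X) : 0 ≤ ordinaryWeight σ p q u := by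
      rw [ordinaryWeight]
      positivity
    rintro (p | u) (q | u') (r | u'') <;> try first | exact hord _ _ _ | exact le_rfl
    simp only [lineWeight]
    split_ifs with h
    · exact one_div_nonneg.mpr (sub_nonneg.mpr (mod_cast two_le_card_lineThrough h.1))
    · exact le_rfl
  swap_left := by
    rintro (p | u) (q | u') (r | u'') <;> try rfl
    · have hsymm := hσ.symm
      have htrans := @hσ.trans
      have hline := hσ.lineThrough_comm (p := p) (q := q)
      simp only [lineWeight]
      grind
    · exact hσ.ordinaryWeight_comm _ _ _
  swap_right := by
    rintro (p | u) (q | u') (r | u'') <;> try rfl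
    · have hline (h : σ p q = σ p r) : lineThrough σ p q = lineThrough σ p r := by
        simp only [lineThrough, h]
      simp only [lineWeight]
      grind
    · exact hσ.ordinaryWeight_comm _ _ _
  ne_left := by
    rintro (p | u) (q | u') (r | u'') <;> simp +contextual [lineWeight, ordinaryWeight]

lemma vertexWeight_lineWeight_pos (hσ : IsDirectionMap σ) (hP : 2 ≤ Fintype.card P)
    (j : P ⊕ ordinaryDirections σ) : 0 < vertexWeight (lineWeight σ) j := by
  rcases j with p | ⟨u, hu⟩
  · rw [vertexWeight_lineWeight_inl, sub_pos]
    exact_mod_cast hP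
  · obtain ⟨⟨p, q⟩, hpq, rfl⟩ := mem_image.mp hu
    refine hσ.isTripleWeight_lineWeight.vertexWeight_pos (b := .inl p) (c := .inl q) ?_
    have hord : ordinaryWeight σ p q (σ p q) = 1 / 2 :=
      if_pos ⟨(mem_filter.mp hpq).2.1, (mem_filter.mp hpq).2.2, rfl⟩
    exact hord.trans_ne one_half_pos.ne'

lemma sum_inl_inl_le (hσ : IsDirectionMap σ) (hP : 2 ≤ Fintype.card P) (p : P) :
    ∑ q, pairWeight (lineWeight σ) (.inl p) (.inl q) ^ 2 /
      (vertexWeight (lineWeight σ) (.inl p) * vertexWeight (lineWeight σ) (.inl q)) ≤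
    1 / (Fintype.card P - 1) := by
  have hnonneg := hσ.isTripleWeight_lineWeight.pairWeight_nonneg
  have hpos := hσ.vertexWeight_lineWeight_pos hP (.inl p)
  simp only [vertexWeight_lineWeight_inl] at hpos ⊢
  refine sum_sq_div_mul_le (fun q => hnonneg _ _) (fun q => ?_) zero_le_one hpos ?_ hpos.le
  · rcases eq_or_ne p q with rfl | hpq
    · exact (pairWeight_lineWeight_inl_self p).trans_le zero_le_one
    · rw [pairWeight_lineWeight_inl_inl hpq]
      split_ifs <;> norm_num
  · rw [← vertexWeight_lineWeight_inl (σ := σ) p, vertexWeight, Fintype.sum_sum_type]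
    exact le_add_of_nonneg_right (sum_nonneg fun u _ => hnonneg _ _)

lemma sum_inr_inl_le (hσ : IsDirectionMap σ) (hP : 2 ≤ Fintype.card P)
    (u : ordinaryDirections σ) :
    ∑ p, pairWeight (lineWeight σ) (.inr u) (.inl p) ^ 2 /
      (vertexWeight (lineWeight σ) (.inr u) * vertexWeight (lineWeight σ) (.inl p)) ≤
    1 / 2 / (Fintype.card P - 1) := by
  have ht := hσ.isTripleWeight_lineWeight
  have hpos := hσ.vertexWeight_lineWeight_pos hP
  simp only [vertexWeight_lineWeight_inl]
  refine sum_sq_div_mul_le (fun p => ht.pairWeight_nonneg _ _) (fun p => ?_) one_half_pos.le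
    (hpos _) ?_ ?_
  · rw [ht.pairWeight_comm, pairWeight_lineWeight_inl_inr]
    exact sum_ordinaryWeight_le p (u : X)
  · rw [vertexWeight, Fintype.sum_sum_type]
    exact le_add_of_nonneg_right (sum_nonneg fun u' _ => ht.pairWeight_nonneg _ _)
  · exact sub_nonneg.mpr (mod_cast one_le_two.trans hP)

lemma sum_pairWeight_sq_div_le (hσ : IsDirectionMap σ) (hP : 2 ≤ Fintype.card P) :
    ∑ j, ∑ k ∈ univ.erase j, pairWeight (lineWeight σ) j k ^ 2 /
      (vertexWeight (lineWeight σ) j * vertexWeight (lineWeight σ) k) ≤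
    (Fintype.card P + #(ordinaryDirections σ)) / (Fintype.card P - 1) := by
  have ht := hσ.isTripleWeight_lineWeight
  have herase (j : P ⊕ ordinaryDirections σ) :
      ∑ k ∈ univ.erase j, pairWeight (lineWeight σ) j k ^ 2 /
        (vertexWeight (lineWeight σ) j * vertexWeight (lineWeight σ) k) =
      ∑ k, pairWeight (lineWeight σ) j k ^ 2 /
        (vertexWeight (lineWeight σ) j * vertexWeight (lineWeight σ) k) :=
    sum_erase _ (by rw [ht.pairWeight_self, zero_pow two_ne_zero, zero_div])
  have hpoints := sum_le_sum fun p (_ : p ∈ univ) => hσ.sum_inl_inl_le hP p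
  have hdirections := sum_le_sum fun u (_ : u ∈ univ) => hσ.sum_inr_inl_le hP u
  have hswap : ∑ p, ∑ u, pairWeight (lineWeight σ) (.inl p) (.inr u) ^ 2 /
        (vertexWeight (lineWeight σ) (.inl p) * vertexWeight (lineWeight σ) (.inr u)) =
      ∑ u, ∑ p, pairWeight (lineWeight σ) (.inr u) (.inl p) ^ 2 /
        (vertexWeight (lineWeight σ) (.inr u) * vertexWeight (lineWeight σ) (.inl p)) := by
    rw [sum_comm]
    refine sum_congr rfl fun u _ => sum_congr rfl fun p _ => ?_
    rw [ht.pairWeight_comm, mul_comm (vertexWeight _ _)]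
  simp only [sum_const, card_univ, Fintype.card_coe, nsmul_eq_mul] at hpoints hdirections
  simp only [herase, Fintype.sum_sum_type, sum_add_distrib, hswap, pairWeight_lineWeight_inr_inr,
    zero_pow two_ne_zero, zero_div, sum_const_zero, add_zero]
  refine (add_le_add (add_le_add hpoints hdirections) hdirections).trans_eq ?_
  ring

end IsDirectionMap

end OrdinaryLines

section Geometry

variable {E P : Type*} [AddCommGroup E] [Module ℝ E] {v : P → E}

/-- The direction of the line through `v p` and `v q`, as a subspace; it is `⊥` if `v p = v q`. -/
def direction (v : P → E) (p q : P) : Submodule ℝ E := Submodule.span ℝ {v q - v p}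

lemma exists_smul_of_direction_eq {a b p q : P} (h : direction v a b = direction v p q) :
    ∃ s : ℝ, s ≠ 0 ∧ s • (v b - v a) = v q - v p := by
  obtain ⟨s, hs⟩ := Submodule.span_singleton_eq_span_singleton.mp h
  exact ⟨s, s.ne_zero, hs⟩

lemma direction_eq_of_smul_eq {a b p q : P} {s : ℝ} (hpq : v p ≠ v q)
    (h : s • (v b - v a) = v q - v p) : direction v a b = direction v p q := by
  have hs : s ≠ 0 := by
    rintro rfl
    exact hpq (sub_eq_zero.mp (by rw [← h, zero_smul])).symm
  exact Submodule.span_singleton_eq_span_singleton.mpr ⟨Units.mk0 s hs, h⟩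

lemma isDirectionMap_direction (hv : Function.Injective v) : IsDirectionMap (direction v) where
  symm p q := by
    rcases eq_or_ne p q with rfl | hpq
    · rfl
    · exact direction_eq_of_smul_eq (s := -1) (hv.ne hpq.symm) (by module)
  trans {p q r} _ _ hqr h := by
    obtain ⟨s, -, hs⟩ := exists_smul_of_direction_eq h
    exact (direction_eq_of_smul_eq (s := s - 1) (hv.ne hqr) (by
      rw [sub_smul, hs]
      module)).symm

lemma exists_relation_of_direction_eq {p q r : P} (hv : Function.Injective v) (hqr : q ≠ r)
    (h : direction v p q = direction v p r) :
    ∃ x y w : ℝ, x ≠ 0 ∧ y ≠ 0 ∧ w ≠ 0 ∧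
      x • (v p, (1 : ℝ)) + y • (v q, (1 : ℝ)) + w • (v r, (1 : ℝ)) = 0 := by
  obtain ⟨s, hs, hsr⟩ := exists_smul_of_direction_eq h
  refine ⟨s - 1, -s, 1, sub_ne_zero.mpr ?_, neg_ne_zero.mpr hs, one_ne_zero, ?_⟩
  · rintro rfl
    exact hqr (hv (by simpa using hsr))
  · rw [sub_eq_iff_eq_add.mp hsr.symm]
    ext
    · simp only [Prod.fst_add, Prod.smul_fst, Prod.fst_zero]
      module
    · simp only [Prod.snd_add, Prod.smul_snd, Prod.snd_zero]
      module

lemma finrank_vectorSpan_add_one_le [Finite P] [Nonempty P] (v : P → E) :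
    finrank ℝ (vectorSpan ℝ (Set.range v)) + 1 ≤
      finrank ℝ (Submodule.span ℝ (Set.range fun p => (v p, (1 : ℝ)))) := by
  have := finiteDimensional_vectorSpan_range ℝ v
  obtain ⟨p₀⟩ := ‹Nonempty P›
  have hmem (p : P) : (v p, (1 : ℝ)) ∈ Submodule.span ℝ (Set.range fun p => (v p, (1 : ℝ))) :=
    Submodule.subset_span ⟨p, rfl⟩
  let f : vectorSpan ℝ (Set.range v) × ℝ →ₗ[ℝ] E × ℝ :=
    (LinearMap.inl ℝ E ℝ ∘ₗ Submodule.subtype _).coprod (LinearMap.toSpanSingleton ℝ _ (v p₀, 1))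
  have hf : Function.Injective f := by
    refine (injective_iff_map_eq_zero f).mpr fun ⟨x, c⟩ h => ?_
    obtain ⟨hx, rfl⟩ : (x : E) + c • v p₀ = 0 ∧ c = 0 := by simpa [f, Prod.ext_iff] using h
    simpa using hx
  have hrange : f.range ≤ Submodule.span ℝ (Set.range fun p => (v p, (1 : ℝ))) := by
    rintro _ ⟨⟨⟨x, hx⟩, c⟩, rfl⟩
    refine add_mem ?_ (Submodule.smul_mem _ c (hmem p₀))
    rw [vectorSpan_range_eq_span_range_vsub_right ℝ v p₀] at hx
    have hle : Submodule.span ℝ (Set.range fun p => v p - v p₀) ≤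
        (Submodule.span ℝ (Set.range fun p => (v p, (1 : ℝ)))).comap (LinearMap.inl ℝ E ℝ) := by
      rw [Submodule.span_le]
      rintro _ ⟨p, rfl⟩
      simpa using sub_mem (hmem p) (hmem p₀)
    exact hle hx
  have : FiniteDimensional ℝ (Submodule.span ℝ (Set.range fun p => (v p, (1 : ℝ)))) :=
    FiniteDimensional.span_of_finite ℝ (Set.finite_range _)
  calc finrank ℝ (vectorSpan ℝ (Set.range v)) + 1
      = finrank ℝ f.range := by
        rw [LinearMap.finrank_range_of_inj hf, finrank_prod, finrank_self]
    _ ≤ _ := Submodule.finrank_mono hrange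

lemma nonempty_of_not_collinear (hnc : ¬ Collinear ℝ (Set.range v)) : Nonempty P := by
  by_contra! hP
  exact hnc (by rw [Set.range_eq_empty]; exact collinear_empty ℝ E)

lemma exists_dual_injective_comp [Finite P] (hv : Function.Injective v) :
    ∃ φ : Dual ℝ E, Function.Injective (φ ∘ v) := by
  obtain ⟨φ, hφ⟩ := exists_dual_forall_apply_ne_zero (K := ℝ)
    (fun e : {e : P × P // e.1 ≠ e.2} => v e.1.1 - v e.1.2) fun e => sub_ne_zero.mpr (hv.ne e.2)
  refine ⟨φ, fun p q hpq => ?_⟩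
  by_contra hne
  exact hφ ⟨(p, q), hne⟩ (by rw [map_sub, sub_eq_zero]; exact hpq)

lemma exists_dual_position_ne {φ : Dual ℝ E} (hφ : Function.Injective (φ ∘ v))
    (hnc : ¬ Collinear ℝ (Set.range v)) :
    ∃ ψ : Dual ℝ E, ∀ t, ∃ p q, position (φ ∘ v) (ψ ∘ v) t p ≠ position (φ ∘ v) (ψ ∘ v) t q := by
  obtain ⟨p⟩ := nonempty_of_not_collinear hnc
  have hoff := (collinear_iff_of_mem (Set.mem_range_self p)).not.mp hnc
  push Not at hoff
  obtain ⟨_, ⟨q, rfl⟩, hq⟩ := hoff 0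
  obtain ⟨_, ⟨r, rfl⟩, hr⟩ := hoff (v q - v p)
  have hpq : v q ≠ v p := by simpa using hq 0
  have hmem : v r - v p ∉ Submodule.span ℝ {v q - v p} := by
    rw [Submodule.mem_span_singleton]
    rintro ⟨s, hs⟩
    exact hr s (by rw [hs, vadd_eq_add, sub_add_cancel])
  obtain ⟨ψ, hψr, hψq⟩ := Submodule.exists_le_ker_of_notMem hmem
  have hψq' : ψ (v q) - ψ (v p) = 0 := by
    rw [← map_sub]
    exact hψq (Submodule.mem_span_singleton_self _)
  refine ⟨ψ, fun t => ?_⟩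
  by_contra! hconst
  have htq : t * (φ (v q) - φ (v p)) = 0 := by
    have := hconst q p
    simp only [position, Function.comp_apply] at this
    linarith
  have ht : t = 0 := (mul_eq_zero.mp htq).resolve_right
    (sub_ne_zero.mpr fun h => hpq (congrArg v (hφ h)))
  refine hψr ?_
  have := hconst r p
  simpa only [position, ht, Function.comp_apply, zero_mul, sub_zero, map_sub, sub_eq_zero]
    using this

lemma chordSlope_comp_eq_of_direction_eq (φ ψ : Dual ℝ E) {a b p q : P}
    (h : direction v a b = direction v p q) :
    chordSlope (φ ∘ v) (ψ ∘ v) a b = chordSlope (φ ∘ v) (ψ ∘ v) p q := by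
  obtain ⟨s, hs, hsv⟩ := exists_smul_of_direction_eq h
  have hneg : v p - v q = s • (v a - v b) := by
    rw [← neg_sub, ← hsv, ← smul_neg, neg_sub]
  simp only [chordSlope, Function.comp_apply, ← map_sub, hneg, map_smul, smul_eq_mul,
    mul_div_mul_left _ _ hs]

theorem exists_direction_representatives [Finite P] (v : P → E) :
    ∃ S : Finset (P × P), (∀ e ∈ S, e.1 ≠ e.2) ∧
      Set.InjOn (fun e : P × P => direction v e.1 e.2) S ∧
      ∀ p q, p ≠ q → ∃ e ∈ S, direction v e.1 e.2 = direction v p q := by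
  classical
  have := Fintype.ofFinite P
  obtain ⟨S, hSsub, hSinj, hSimage⟩ := exists_subset_injOn_image_eq_of_surjOn
    (f := fun e : P × P => direction v e.1 e.2) (univ.offDiag : Finset (P × P))
    (univ.offDiag.image fun e => direction v e.1 e.2) (by rw [coe_image]; exact Set.surjOn_image ..)
  refine ⟨S, fun e he => (mem_offDiag.mp (hSsub he)).2.2, hSinj, fun p q hpq => ?_⟩
  rw [← mem_image (f := fun e : P × P => direction v e.1 e.2), hSimage]
  exact mem_image.mpr ⟨(p, q), by simpa using hpq, rfl⟩

variable [Fintype P]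

lemma exists_generator_of_mem_ordinaryDirections [DecidableEq P] [DecidableEq (Submodule ℝ E)]
    {u : Submodule ℝ E} (hu : u ∈ ordinaryDirections (direction v)) :
    ∃ w, Submodule.span ℝ {w} = u := by
  obtain ⟨e, -, rfl⟩ := mem_image.mp hu
  exact ⟨_, rfl⟩

/-- Homogeneous coordinates in `E × ℝ`: points have height `1`, and a point at infinity is
represented at height `0` by a vector spanning its direction. -/
def homogenization {U : Type*} (v : P → E) (w : U → E) : P ⊕ U → E × ℝ :=
  Sum.elim (fun p => (v p, 1)) fun u => (w u, 0)

lemma exists_relation_of_lineWeight_ne_zero [DecidableEq P] [DecidableEq (Submodule ℝ E)]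
    (hv : Function.Injective v) {w : ordinaryDirections (direction v) → E}
    (hw : ∀ u, Submodule.span ℝ {w u} = u) {a b c : P ⊕ ordinaryDirections (direction v)}
    (h : lineWeight (direction v) a b c ≠ 0) :
    ∃ x y z : ℝ, x ≠ 0 ∧ y ≠ 0 ∧ z ≠ 0 ∧
      x • homogenization v w a + y • homogenization v w b + z • homogenization v w c = 0 := by
  have hord {p q : P} {u : ordinaryDirections (direction v)}
      (h : ordinaryWeight (direction v) p q u ≠ 0) : ∃ s : ℝ, s ≠ 0 ∧
        s • homogenization v w (.inr u) =
          homogenization v w (.inl q) - homogenization v w (.inl p) := by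
    have hu := (ite_ne_right_iff.mp h).1.2.2
    rw [← hw u] at hu
    obtain ⟨s, hs⟩ := Submodule.span_singleton_eq_span_singleton.mp hu.symm
    exact ⟨s, s.ne_zero, Prod.ext hs (by simp [homogenization])⟩
  rcases a with p | u <;> rcases b with q | u' <;> rcases c with r | u'' <;>
    try exact absurd rfl h
  · obtain ⟨-, -, hqr, hdir⟩ := (ite_ne_right_iff.mp h).1
    exact exists_relation_of_direction_eq hv hqr hdir
  · obtain ⟨s, hs, hsu⟩ := hord h
    exact ⟨1, -1, s, one_ne_zero, by norm_num, hs, by rw [hsu]; module⟩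
  · obtain ⟨s, hs, hsu⟩ := hord h
    exact ⟨1, s, -1, one_ne_zero, hs, by norm_num, by rw [hsu]; module⟩
  · obtain ⟨s, hs, hsu⟩ := hord h
    exact ⟨s, 1, -1, hs, one_ne_zero, by norm_num, by rw [hsu]; module⟩

theorem finrank_vectorSpan_add_one_le_of_ordinaryDirections [DecidableEq P]
    [DecidableEq (Submodule ℝ E)] (hv : Function.Injective v) (hP : 2 ≤ Fintype.card P) :
    (finrank ℝ (vectorSpan ℝ (Set.range v)) : ℝ) + 1 ≤
      9 * ((Fintype.card P + #(ordinaryDirections (direction v))) / (Fintype.card P - 1)) := by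
  have hσ := isDirectionMap_direction hv
  choose w hw using fun u : ordinaryDirections (direction v) =>
    exists_generator_of_mem_ordinaryDirections u.2
  have : Nonempty P := Fintype.card_pos_iff.mp (by omega)
  have : FiniteDimensional ℝ (Submodule.span ℝ (Set.range (homogenization v w))) :=
    FiniteDimensional.span_of_finite ℝ (Set.finite_range _)
  have hmono : finrank ℝ (Submodule.span ℝ (Set.range fun p => (v p, (1 : ℝ)))) ≤
      finrank ℝ (Submodule.span ℝ (Set.range (homogenization v w))) :=
    Submodule.finrank_mono (Submodule.span_mono (Set.range_subset_iff.mpr fun p => ⟨.inl p, rfl⟩))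
  calc (finrank ℝ (vectorSpan ℝ (Set.range v)) : ℝ) + 1
      ≤ finrank ℝ (Submodule.span ℝ (Set.range (homogenization v w))) :=
        mod_cast (finrank_vectorSpan_add_one_le v).trans hmono
    _ ≤ _ := hσ.isTripleWeight_lineWeight.finrank_span_range_le
        (hσ.vertexWeight_lineWeight_pos hP)
        fun _ _ _ h => exists_relation_of_lineWeight_ne_zero hv hw h
    _ ≤ _ := mul_le_mul_of_nonneg_left (hσ.sum_pairWeight_sq_div_le hP) (by norm_num)

theorem card_le_three_mul_card_add_one (hv : Function.Injective v)
    (hnc : ¬ Collinear ℝ (Set.range v)) {S : Finset (P × P)}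
    (hS : ∀ p q, p ≠ q → ∃ e ∈ S, direction v e.1 e.2 = direction v p q) :
    Fintype.card P ≤ 3 * #S + 1 := by
  obtain ⟨φ, hφ⟩ := exists_dual_injective_comp hv
  obtain ⟨ψ, hψ⟩ := exists_dual_position_ne hφ hnc
  have hslopes (p q : P) (hpq : p ≠ q) : chordSlope (φ ∘ v) (ψ ∘ v) p q ∈
      S.image fun e => chordSlope (φ ∘ v) (ψ ∘ v) e.1 e.2 := by
    obtain ⟨e, he, hdir⟩ := hS p q hpq
    exact mem_image.mpr ⟨e, he, chordSlope_comp_eq_of_direction_eq φ ψ hdir⟩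
  have := card_le_three_mul_card_chordSlopes hφ hslopes hψ
  have := card_image_le (s := S) (f := fun e => chordSlope (φ ∘ v) (ψ ∘ v) e.1 e.2)
  omega

theorem finrank_vectorSpan_mul_card_le (hv : Function.Injective v)
    (hnc : ¬ Collinear ℝ (Set.range v)) {S : Finset (P × P)}
    (hS : ∀ p q, p ≠ q → ∃ e ∈ S, direction v e.1 e.2 = direction v p q) :
    finrank ℝ (vectorSpan ℝ (Set.range v)) * Fintype.card P ≤ 48 * #S := by
  classical
  set d := finrank ℝ (vectorSpan ℝ (Set.range v)) with hd
  set n := Fintype.card P with hn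
  have hd2 : 2 ≤ d := by
    have := finiteDimensional_vectorSpan_range ℝ v
    rw [collinear_iff_finrank_le_one] at hnc
    omega
  have hn1 : 1 ≤ n := by
    have := nonempty_of_not_collinear hnc
    exact Fintype.card_pos
  have hdn : d + 1 ≤ n := by
    have := finrank_vectorSpan_range_le ℝ v (n := n - 1) (by omega)
    omega
  rcases le_or_gt d 12 with hsmall | hlarge
  · have := card_le_three_mul_card_add_one hv hnc hS
    have := Nat.mul_le_mul_right n hsmall
    omega
  · have hord : #(ordinaryDirections (direction v)) ≤ #S := by
      refine (card_le_card fun u hu => ?_).trans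
        (card_image_le (s := S) (f := fun e => direction v e.1 e.2))
      obtain ⟨e, he, rfl⟩ := mem_image.mp hu
      exact mem_image.mpr (hS _ _ (mem_filter.mp he).2.1)
    have hbound := finrank_vectorSpan_add_one_le_of_ordinaryDirections hv (by omega)
    rw [← hd, ← hn, ← mul_div_assoc, le_div_iff₀ (sub_pos.mpr (mod_cast (by omega : 1 < n)))]
      at hbound
    have hd' : (13 : ℝ) ≤ d := mod_cast hlarge
    have hdn' : (d : ℝ) + 1 ≤ n := mod_cast hdn
    have hord' : (#(ordinaryDirections (direction v)) : ℝ) ≤ #S := mod_cast hord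
    have : (d : ℝ) * n ≤ 48 * #S := by nlinarith
    exact_mod_cast this

end Geometry

end DistinctDirections

open DistinctDirections in
theorem distinct_directions_lower_bound_general {E : Type*} [AddCommGroup E] [Module ℝ E]
    (P : Finset E) (hP : ¬ Collinear ℝ (P : Set E)) :
    ∃ S : Finset (E × E),
      Module.finrank ℝ (vectorSpan ℝ (P : Set E)) * P.card ≤ 48 * S.card ∧
      (∀ e ∈ S, e.1 ∈ P ∧ e.2 ∈ P ∧ e.1 ≠ e.2) ∧
      (∀ e₁ ∈ S, ∀ e₂ ∈ S, e₁ ≠ e₂ →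
        ∀ c : ℝ, e₂.2 - e₂.1 ≠ c • (e₁.2 - e₁.1)) := by
  classical
  let v : P → E := Subtype.val
  have hv : Function.Injective v := Subtype.val_injective
  have hrange : Set.range v = P := Subtype.range_coe
  obtain ⟨S, hSne, hSinj, hSdir⟩ := exists_direction_representatives v
  have hbound := finrank_vectorSpan_mul_card_le hv (hrange ▸ hP) hSdir
  rw [hrange, Fintype.card_coe] at hbound
  refine ⟨S.image (Prod.map v v), ?_, Finset.forall_mem_image.mpr fun e he =>
    ⟨e.1.2, e.2.2, hv.ne (hSne e he)⟩, Finset.forall_mem_image.mpr fun a ha =>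
    Finset.forall_mem_image.mpr fun b hb hab c hc => hab ?_⟩
  · rwa [Finset.card_image_of_injective _ (hv.prodMap hv)]
  · rw [hSinj ha hb (direction_eq_of_smul_eq (hv.ne (hSne b hb)) hc.symm)]

/-- **Theorem 1.2** (with explicit constant `b = 1/48`).
For every integer `d ≥ 2`, any finite set `P` of `n` points in `ℝ^d` whose affine
span is all of `ℝ^d` determines at least `(1/48)·d·n` lines with pairwise distinct
directions: there is a finite set `S` of at least `d·n/48` ordered pairs of distinct
points of `P` whose difference vectors are pairwise non-parallel. -/
theorem distinct_directions_lower_bound (d n : ℕ) (hd : 2 ≤ d)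
    (P : Finset (Fin d → ℝ)) (hcard : P.card = n)
    (hspan : affineSpan ℝ (P : Set (Fin d → ℝ)) = ⊤) :
    ∃ S : Finset ((Fin d → ℝ) × (Fin d → ℝ)),
      d * n ≤ 48 * S.card ∧
      (∀ e ∈ S, e.1 ∈ P ∧ e.2 ∈ P ∧ e.1 ≠ e.2) ∧
      (∀ e₁ ∈ S, ∀ e₂ ∈ S, e₁ ≠ e₂ →
        ∀ c : ℝ, e₂.2 - e₂.1 ≠ c • (e₁.2 - e₁.1)) := by
  have hdim : Module.finrank ℝ (vectorSpan ℝ (P : Set (Fin d → ℝ))) = d := by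
    rw [← direction_affineSpan, hspan, AffineSubspace.direction_top, finrank_top,
      Module.finrank_fin_fun]
  have hnc : ¬ Collinear ℝ (P : Set (Fin d → ℝ)) := fun h => by
    have := h.finrank_le_one
    omega
  simpa only [hdim, hcard] using distinct_directions_lower_bound_general P hnc
end

section
/- For every integer d ≥ 2 and every finite set P of n points in ℝ^d whose affine span is all of ℝ^d, P determines at least (1/48)·d·n closed line segments (each with both endpoints in P) no two of which are convergent and no two of which are collinear. -/
/-- Two closed line segments in `ℝ^d` are *convergent* if they are two opposite
edges of a convex 2-dimensional quadrilateral: there are four distinct coplanar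
points `a, b, c, e`, no one of which lies in the convex hull of the other three,
occurring in this cyclic order on the convex quadrilateral (equivalently, the
diagonals `[a,c]` and `[b,e]` meet), such that one segment is `[a,b]` and the
other is `[c,e]`. -/
def Convergent {d : ℕ} (s t : Set (Fin d → ℝ)) : Prop :=
  ∃ a b c e : Fin d → ℝ,
    a ≠ b ∧ a ≠ c ∧ a ≠ e ∧ b ≠ c ∧ b ≠ e ∧ c ≠ e ∧
    Coplanar ℝ ({a, b, c, e} : Set (Fin d → ℝ)) ∧
    a ∉ convexHull ℝ ({b, c, e} : Set (Fin d → ℝ)) ∧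
    b ∉ convexHull ℝ ({a, c, e} : Set (Fin d → ℝ)) ∧
    c ∉ convexHull ℝ ({a, b, e} : Set (Fin d → ℝ)) ∧
    e ∉ convexHull ℝ ({a, b, c} : Set (Fin d → ℝ)) ∧
    (segment ℝ a c ∩ segment ℝ b e).Nonempty ∧
    ((s = segment ℝ a b ∧ t = segment ℝ c e) ∨
      (s = segment ℝ c e ∧ t = segment ℝ a b))

/-!
In homogeneous coordinates affine independence becomes linear independence, so it suffices to find
`Q, A ⊆ P` with `48 * |Q| * |A| ≥ d * |P|` such that `Q` together with any two points of `A` is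
linearly independent: the segments joining `Q` to `A` then work, since four distinct
endpoints are never coplanar and three are never collinear.

Take a maximal family of disjoint independent `m`-subsets of `P`, where `m` is about `d / 2`. If
many points are left over, they form `A`; they span a space of dimension less than `m`, and `Q`
extends a basis of that space to a basis of the whole space. Otherwise project the `t` blocks of
the family to an `m`-dimensional space in which they stay independent and put the points into
radial isotropic position. The squared correlations of the resulting `t * m` unit vectors sum to
about `t` in every direction, while the Welch bound in a plane makes every line with `ℓ` points
contribute at least `ℓ ^ 2 / 2 - ℓ`. Hence some point `q` lies on at least about `t * (m - 2)` lines
spanned by the points. Put `q` into `Q`, keep one further point on each of these lines, project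
from `q`, and iterate: about `m / 6` steps leave enough points to form `A`.
-/

section LinearIndependence

variable {K V ι : Type*} [DivisionRing K] [AddCommGroup V] [Module K V] {v : ι → V}

lemma finrank_span_image_eq_card {I : Finset ι} (hI : LinearIndepOn K v (I : Set ι)) :
    Module.finrank K (Submodule.span K (v '' I)) = I.card := by
  rw [Set.image_eq_range]
  exact (finrank_span_eq_card (b := fun i : (I : Set ι) => v i) hI).trans (by simp)

lemma card_le_card_of_image_subset_span {I J : Finset ι} (hJ : LinearIndepOn K v (J : Set ι))
    (hIJ : v '' J ⊆ Submodule.span K (v '' I)) : J.card ≤ I.card := by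
  classical
  rw [← finrank_span_image_eq_card hJ]
  have hspan : (Submodule.span K (v '' I) : Submodule K V) = Submodule.span K (I.image v) := by
    rw [Finset.coe_image]
  have : FiniteDimensional K (Submodule.span K (v '' (I : Set ι))) :=
    FiniteDimensional.span_of_finite K (I.finite_toSet.image v)
  calc Module.finrank K (Submodule.span K (v '' (J : Set ι)))
      ≤ Module.finrank K (Submodule.span K (v '' (I : Set ι))) :=
        Submodule.finrank_mono (Submodule.span_le.2 hIJ)
    _ ≤ (I.image v).card := hspan ▸ finrank_span_finset_le_card (I.image v)
    _ ≤ I.card := Finset.card_image_le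

lemma exists_insert_linearIndepOn_of_card_lt {I J : Finset ι}
    (hI : LinearIndepOn K v (I : Set ι)) (hJ : LinearIndepOn K v (J : Set ι))
    (hIJ : I.card < J.card) : ∃ j ∈ J, j ∉ I ∧ LinearIndepOn K v (insert j (I : Set ι)) := by
  obtain ⟨_, ⟨j, hj, rfl⟩, hjI⟩ := Set.not_subset.1
    (mt (card_le_card_of_image_subset_span hJ) hIJ.not_ge)
  exact ⟨j, hj, fun hj' => hjI (Submodule.subset_span ⟨j, hj', rfl⟩), hI.insert hjI⟩

lemma exists_finset_linearIndepOn_extension {I P : Finset ι} (hI : LinearIndepOn K v (I : Set ι))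
    (hIP : I ⊆ P) : ∃ J, I ⊆ J ∧ J ⊆ P ∧ LinearIndepOn K v (J : Set ι) ∧
      v '' P ⊆ Submodule.span K (v '' J) := by
  obtain ⟨b, hbP, hIb, hspan, hb⟩ := exists_linearIndepOn_extension hI (Finset.coe_subset.2 hIP)
  lift b to Finset ι using P.finite_toSet.subset hbP
  exact ⟨b, Finset.coe_subset.1 hIb, Finset.coe_subset.1 hbP, hb, hspan⟩

lemma linearIndepOn_mkQ_comp_of_insert {q : ι} {s : Set ι} (hqs : q ∉ s)
    (h : LinearIndepOn K v (insert q s)) :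
    LinearIndepOn K ((Submodule.span K {v q}).mkQ ∘ v) s := by
  rw [← Set.image_singleton (f := v),
    LinearIndepOn.quotient_iff_union (h.mono (by simp)) (by simpa using hqs)]
  exact h

/-- Matroid contraction of a single element lowers the rank by at most one. -/
lemma exists_subset_linearIndepOn_mkQ_comp {I : Finset ι} (hI : LinearIndepOn K v (I : Set ι))
    {q : ι} (hq : v q ≠ 0) : ∃ I' ⊆ I, I.card ≤ I'.card + 1 ∧
      LinearIndepOn K ((Submodule.span K {v q}).mkQ ∘ v) (I' : Set ι) := by
  classical
  obtain ⟨J, hqJ, hJ, hJv, hspan⟩ := exists_finset_linearIndepOn_extension (v := v)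
    (I := {q}) (P := insert q I) (K := K) (by simpa using hq) (by simp)
  rw [Finset.singleton_subset_iff] at hqJ
  have hIJ : I.card ≤ J.card := card_le_card_of_image_subset_span hI
    ((Set.image_mono (Finset.coe_subset.2 (Finset.subset_insert q I))).trans hspan)
  refine ⟨J.erase q, Finset.subset_insert_iff.1 hJ, ?_, ?_⟩
  · rwa [Finset.card_erase_add_one hqJ]
  · refine linearIndepOn_mkQ_comp_of_insert (by simp) ?_
    rwa [← Finset.coe_insert, Finset.insert_erase hqJ]

end LinearIndependence

/-- `v` maps `Q` together with any two (possibly equal) points of `A` to a linearly independent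
family. For `Q = ∅` this says that distinct points of `A` span distinct lines; in general it says
that this remains true after projecting from the span of the independent set `Q`. -/
structure PairwiseIndepOver (K : Type*) {V ι : Type*} [DivisionRing K] [AddCommGroup V]
    [Module K V] (v : ι → V) (Q A : Finset ι) : Prop where
  disjoint : Disjoint Q A
  linearIndepOn : ∀ a ∈ A, ∀ b ∈ A, LinearIndepOn K v ((Q : Set ι) ∪ {a, b})

namespace PairwiseIndepOver

variable {K V ι : Type*} [DivisionRing K] [AddCommGroup V] [Module K V] {v : ι → V}
  {Q A A' : Finset ι}

lemma mono (h : PairwiseIndepOver K v Q A) (hA : A' ⊆ A) : PairwiseIndepOver K v Q A' :=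
  ⟨h.disjoint.mono_right hA, fun a ha b hb => h.linearIndepOn a (hA ha) b (hA hb)⟩

lemma ne (h : PairwiseIndepOver K v Q A) {q a : ι} (hq : q ∈ Q) (ha : a ∈ A) : q ≠ a := by
  rintro rfl
  exact Finset.disjoint_left.1 h.disjoint hq ha

lemma linearIndepOn_pair (h : PairwiseIndepOver K v ∅ A) {a b : ι} (ha : a ∈ A) (hb : b ∈ A) :
    LinearIndepOn K v {a, b} := by
  simpa using h.linearIndepOn a ha b hb

lemma ne_zero (h : PairwiseIndepOver K v ∅ A) {a : ι} (ha : a ∈ A) : v a ≠ 0 :=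
  (h.linearIndepOn_pair ha ha).ne_zero (Set.mem_insert a _)

lemma insert_of_mkQ [DecidableEq ι] {q : ι} (hq : v q ≠ 0)
    (h : PairwiseIndepOver K ((Submodule.span K {v q}).mkQ ∘ v) Q A) :
    PairwiseIndepOver K v (insert q Q) A where
  disjoint := by
    refine Finset.disjoint_insert_left.2 ⟨fun hqA => ?_, h.disjoint⟩
    refine (h.linearIndepOn q hqA q hqA).ne_zero (i := q) (by simp) ?_
    exact (Submodule.Quotient.mk_eq_zero _).2 (Submodule.mem_span_singleton_self (v q))
  linearIndepOn a ha b hb := by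
    rw [Finset.coe_insert, Set.insert_union, ← Set.singleton_union]
    refine LinearIndepOn.union_of_quotient (LinearIndepOn.singleton hq) ?_
    rw [Set.image_singleton]
    exact h.linearIndepOn a ha b hb

end PairwiseIndepOver

/-- A family of pairwise disjoint finite sets of indices, on each of which `v` is linearly
independent. -/
structure IsIndepPacking (K : Type*) {V ι κ : Type*} [DivisionRing K] [AddCommGroup V]
    [Module K V] (v : ι → V) (B : κ → Finset ι) : Prop where
  disjoint : Pairwise (Function.onFun Disjoint B)
  linearIndepOn : ∀ s, LinearIndepOn K v (B s : Set ι)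

namespace IsIndepPacking

variable {K V ι κ : Type*} [DivisionRing K] [AddCommGroup V] [Module K V] {v : ι → V}
  {B : κ → Finset ι}

lemma mono {B' : κ → Finset ι} (hB : IsIndepPacking K v B) (h : ∀ s, B' s ⊆ B s) :
    IsIndepPacking K v B' :=
  ⟨fun _ _ hst => (hB.disjoint hst).mono (h _) (h _), fun s => (hB.linearIndepOn s).mono (h s)⟩

lemma exists_move (hB : IsIndepPacking K v B) {s s' : κ} (hs : (B s).card < (B s').card) :
    ∃ B' : κ → Finset ι, IsIndepPacking K v B' ∧ (∀ x, (∃ u, x ∈ B' u) ↔ ∃ u, x ∈ B u) ∧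
      (B' s).card = (B s).card + 1 ∧ (B' s').card + 1 = (B s').card ∧
      ∀ u, u ≠ s → u ≠ s' → (B' u).card = (B u).card := by
  classical
  have hss' : s' ≠ s := by rintro rfl; exact hs.false
  obtain ⟨j, hj, hjs, hins⟩ := exists_insert_linearIndepOn_of_card_lt
    (hB.linearIndepOn s) (hB.linearIndepOn s') hs
  have hju : ∀ u, u ≠ s' → j ∉ B u := fun u hu => Finset.disjoint_left.1 (hB.disjoint hu.symm) hj
  refine ⟨fun u => if u = s then insert j (B u) else (B u).erase j, ⟨?_, ?_⟩, ?_, ?_, ?_, ?_⟩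
  · intro u u' huu'
    refine Finset.disjoint_left.2 fun x hx hx' => ?_
    have hxB : x ∈ B u → x ∉ B u' := fun h => Finset.disjoint_left.1 (hB.disjoint huu') h
    grind
  · intro u
    by_cases hu : u = s
    · simpa only [hu, if_true, Finset.coe_insert] using hins
    · simpa only [if_neg hu] using (hB.linearIndepOn u).mono (Finset.coe_subset.2
        (Finset.erase_subset j (B u)))
  · intro x
    refine ⟨fun ⟨u, hx⟩ => ?_, fun ⟨u, hx⟩ => ?_⟩
    · by_cases hxj : x = j
      · exact ⟨s', hxj ▸ hj⟩
      · exact ⟨u, by grind⟩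
    · by_cases hxj : x = j
      · exact ⟨s, by grind⟩
      · exact ⟨u, by grind⟩
  · simp only [if_true, Finset.card_insert_of_notMem hjs]
  · simp only [if_neg hss', Finset.card_erase_add_one hj]
  · intro u hu hu'
    simp only [if_neg hu, Finset.erase_eq_of_notMem (hju u hu')]

variable [Fintype κ] [DecidableEq ι]

lemma card_biUnion (hB : IsIndepPacking K v B) :
    (Finset.univ.biUnion B).card = ∑ s, (B s).card :=
  Finset.card_biUnion fun _ _ _ _ hst => hB.disjoint hst

lemma exists_le_card (hB : IsIndepPacking K v B) {m : ℕ}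
    (hm : Fintype.card κ * m ≤ (Finset.univ.biUnion B).card) :
    ∃ B' : κ → Finset ι, IsIndepPacking K v B' ∧ (∀ s, m ≤ (B' s).card) ∧
      Finset.univ.biUnion B' ⊆ Finset.univ.biUnion B := by
  induction hdef : ∑ u, (m - (B u).card) using Nat.strong_induction_on generalizing B with
  | _ deficiency ih =>
  by_cases hall : ∀ s, m ≤ (B s).card
  · exact ⟨B, hB, hall, subset_rfl⟩
  push Not at hall
  obtain ⟨s, hs⟩ := hall
  obtain ⟨s', hs'⟩ : ∃ s', m < (B s').card := by
    by_contra! hle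
    have hlt := Finset.sum_lt_sum (fun u _ => hle u) ⟨s, Finset.mem_univ s, hs⟩
    rw [← hB.card_biUnion, Finset.sum_const, smul_eq_mul, Finset.card_univ] at hlt
    exact hlt.not_ge hm
  obtain ⟨B₁, hB₁, hmem, hcs, hcs', hcu⟩ := hB.exists_move (hs.trans hs')
  have hunion : Finset.univ.biUnion B₁ = Finset.univ.biUnion B := by
    ext x; simpa only [Finset.mem_biUnion, Finset.mem_univ, true_and] using hmem x
  have hdecrease : ∑ u, (m - (B₁ u).card) < deficiency := by
    rw [← hdef]
    refine Finset.sum_lt_sum (fun u _ => ?_) ⟨s, Finset.mem_univ s, by omega⟩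
    rcases eq_or_ne u s with rfl | hu
    · omega
    rcases eq_or_ne u s' with rfl | hu'
    · omega
    · rw [hcu u hu hu']
  obtain ⟨B', hB', hcard, hsub⟩ := ih _ hdecrease hB₁ (hunion ▸ hm) rfl
  exact ⟨B', hB', hcard, hunion ▸ hsub⟩

lemma exists_card_eq (hB : IsIndepPacking K v B) {m : ℕ}
    (hm : Fintype.card κ * m ≤ (Finset.univ.biUnion B).card) :
    ∃ B' : κ → Finset ι, IsIndepPacking K v B' ∧ (∀ s, (B' s).card = m) ∧
      Finset.univ.biUnion B' ⊆ Finset.univ.biUnion B := by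
  obtain ⟨B₁, hB₁, hcard, hsub⟩ := hB.exists_le_card hm
  choose B' hB' hB'card using fun s => Finset.exists_subset_card_eq (hcard s)
  exact ⟨B', hB₁.mono hB', hB'card, (Finset.biUnion_mono fun s _ => hB' s).trans hsub⟩

lemma exists_mkQ (hB : IsIndepPacking K v B) {A : Finset ι}
    (hA : A ⊆ Finset.univ.biUnion B) {q : ι} (hq : v q ≠ 0) :
    ∃ B' : κ → Finset ι, IsIndepPacking K ((Submodule.span K {v q}).mkQ ∘ v) B' ∧
      Finset.univ.biUnion B' ⊆ A ∧
      A.card ≤ (Finset.univ.biUnion B').card + Fintype.card κ := by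
  have hBA : IsIndepPacking K v (fun s => A ∩ B s) := hB.mono fun s => Finset.inter_subset_right
  choose B' hB' hcard hind using fun s =>
    exists_subset_linearIndepOn_mkQ_comp (hBA.linearIndepOn s) hq
  have hpack : IsIndepPacking K ((Submodule.span K {v q}).mkQ ∘ v) B' :=
    ⟨(hBA.mono hB').disjoint, hind⟩
  refine ⟨B', hpack, Finset.biUnion_subset.2 fun s _ =>
    (hB' s).trans Finset.inter_subset_left, ?_⟩
  calc A.card = ∑ s, (A ∩ B s).card := by
        rw [← hBA.card_biUnion, ← Finset.inter_biUnion, Finset.inter_eq_left.2 hA]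
    _ ≤ ∑ s, ((B' s).card + 1) := Finset.sum_le_sum fun s _ => hcard s
    _ = _ := by rw [Finset.sum_add_distrib, hpack.card_biUnion]; simp

lemma finset_insert {𝓑 : Finset (Finset ι)} {I : Finset ι}
    (h𝓑 : IsIndepPacking K v ((↑) : 𝓑 → Finset ι)) (hI : LinearIndepOn K v (I : Set ι))
    (hdisj : ∀ J ∈ 𝓑, Disjoint I J) :
    IsIndepPacking K v ((↑) : ↥(insert I 𝓑) → Finset ι) where
  disjoint := by
    rintro ⟨J, hJ⟩ ⟨J', hJ'⟩ hne
    rcases Finset.mem_insert.1 hJ with rfl | hJ𝓑 <;>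
      rcases Finset.mem_insert.1 hJ' with rfl | hJ'𝓑
    · exact absurd rfl hne
    · exact hdisj J' hJ'𝓑
    · exact (hdisj J hJ𝓑).symm
    · exact h𝓑.disjoint (i := ⟨J, hJ𝓑⟩) (j := ⟨J', hJ'𝓑⟩) (by simpa using hne)
  linearIndepOn := by
    rintro ⟨J, hJ⟩
    rcases Finset.mem_insert.1 hJ with rfl | hJ𝓑
    · exact hI
    · exact h𝓑.linearIndepOn ⟨J, hJ𝓑⟩

end IsIndepPacking

lemma exists_maximal_isIndepPacking {K V ι : Type*} [DivisionRing K] [AddCommGroup V] [Module K V]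
    [DecidableEq ι] (v : ι → V) (P : Finset ι) {m : ℕ} (hm : 0 < m) :
    ∃ 𝓑 : Finset (Finset ι), IsIndepPacking K v ((↑) : 𝓑 → Finset ι) ∧
      (∀ I ∈ 𝓑, I ⊆ P ∧ I.card = m) ∧
      ∀ I ⊆ P \ Finset.univ.biUnion ((↑) : 𝓑 → Finset ι), LinearIndepOn K v (I : Set ι) →
        I.card < m := by
  let IsPacking (𝓑 : Finset (Finset ι)) : Prop :=
    IsIndepPacking K v ((↑) : 𝓑 → Finset ι) ∧ ∀ I ∈ 𝓑, I ⊆ P ∧ I.card = m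
  have hfin : {𝓑 | IsPacking 𝓑}.Finite := P.powerset.powerset.finite_toSet.subset
    fun 𝓑 h𝓑 => Finset.mem_coe.2 (Finset.mem_powerset.2 fun I hI =>
      Finset.mem_powerset.2 (h𝓑.2 I hI).1)
  have hempty : IsPacking ∅ := ⟨⟨fun s => (Finset.notMem_empty _ s.2).elim,
    fun s => (Finset.notMem_empty _ s.2).elim⟩, by simp⟩
  obtain ⟨𝓑, h𝓑, hmax⟩ := hfin.exists_maximal ⟨∅, hempty⟩
  refine ⟨𝓑, h𝓑.1, h𝓑.2, fun I hI hIv => ?_⟩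
  by_contra! hIm
  obtain ⟨I', hI', rfl⟩ := Finset.exists_subset_card_eq hIm
  have hdisj : ∀ J ∈ 𝓑, Disjoint I' J := fun J hJ => by
    refine Finset.disjoint_left.2 fun x hx hxJ => (Finset.mem_sdiff.1 (hI (hI' hx))).2 ?_
    exact Finset.mem_biUnion.2 ⟨⟨J, hJ⟩, Finset.mem_univ _, hxJ⟩
  have hinsert : IsPacking (insert I' 𝓑) := ⟨h𝓑.1.finset_insert (hIv.mono hI') hdisj,
    (Finset.forall_mem_insert ..).2 ⟨⟨hI'.trans (hI.trans Finset.sdiff_subset), rfl⟩, h𝓑.2⟩⟩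
  have hI'𝓑 : I' ∈ 𝓑 := hmax hinsert (Finset.subset_insert I' 𝓑) (Finset.mem_insert_self I' 𝓑)
  exact hm.ne' (Finset.card_eq_zero.2 (disjoint_self.1 (hdisj I' hI'𝓑)))

section CommonComplement

variable {K V ι κ : Type*} [Field K] [Infinite K] [AddCommGroup V] [Module K V]
  [Finite κ]

lemma exists_forall_notMem_submodule {U : κ → Submodule K V} (hU : ∀ s, U s ≠ ⊤) :
    ∃ w, ∀ s, w ∉ U s := by
  classical
  have := Fintype.ofFinite κ
  have htop : ⊤ ∉ Finset.univ.image U := by simpa using hU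
  simpa [Set.ne_univ_iff_exists_notMem] using Subspace.biUnion_ne_univ_of_top_notMem htop

variable [FiniteDimensional K V]

/-- A subspace that is maximal among those meeting every `U s` trivially is a complement of each
`U s`: otherwise, by equality of dimensions, no `U s ⊔ W` is the whole space, and a vector outside
all of them enlarges `W`. -/
lemma exists_common_isCompl {m : ℕ} (U : κ → Submodule K V)
    (hU : ∀ s, Module.finrank K (U s) = m) : ∃ W, ∀ s, IsCompl (U s) W := by
  obtain ⟨W, hW, hmax⟩ := exists_maximal_of_wellFoundedGT
    (fun W : Submodule K V => ∀ s, Disjoint (U s) W) ⟨⊥, fun s => disjoint_bot_right⟩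
  refine ⟨W, fun s => ⟨hW s, codisjoint_iff.2 ?_⟩⟩
  by_contra hs
  have hne_top : ∀ u, U u ⊔ W ≠ ⊤ := fun u hu => hs <| Submodule.eq_top_of_disjoint _ _
    (by rw [hU s, ← hU u, Submodule.finrank_add_eq_of_isCompl ⟨hW u, codisjoint_iff.2 hu⟩]) (hW s)
  obtain ⟨w, hw⟩ := exists_forall_notMem_submodule hne_top
  have hw0 : w ≠ 0 := fun h => hw s (h ▸ zero_mem _)
  have hle : W ⊔ Submodule.span K {w} ≤ W := hmax (fun u =>
    (hW u).disjoint_sup_right_of_disjoint_sup_left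
      ((Submodule.disjoint_span_singleton' hw0).2 (hw u))) le_sup_left
  exact hw s (Submodule.mem_sup_right (hle (Submodule.mem_sup_right
    (Submodule.mem_span_singleton_self w))))

lemma exists_linearMap_linearIndepOn [Nonempty κ] {v : ι → V} {B : κ → Finset ι} {m : ℕ}
    (hcard : ∀ s, (B s).card = m) (hB : ∀ s, LinearIndepOn K v (B s : Set ι))
    (E : Type*) [AddCommGroup E] [Module K E] [FiniteDimensional K E]
    (hE : Module.finrank K E = m) :
    ∃ L : V →ₗ[K] E, ∀ s, LinearIndepOn K (L ∘ v) (B s : Set ι) := by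
  obtain ⟨W, hW⟩ := exists_common_isCompl (fun s => Submodule.span K (v '' (B s : Set ι)))
    fun s => (finrank_span_image_eq_card (hB s)).trans (hcard s)
  have hquot : Module.finrank K (V ⧸ W) = Module.finrank K E := by
    obtain ⟨s⟩ := ‹Nonempty κ›
    rw [hE, ← hcard s, ← finrank_span_image_eq_card (hB s)]
    exact (Submodule.quotientEquivOfIsCompl _ _ (hW s).symm).finrank_eq
  let e := LinearEquiv.ofFinrankEq (V ⧸ W) E hquot
  refine ⟨e.toLinearMap ∘ₗ W.mkQ, fun s => ?_⟩
  refine LinearIndepOn.map_injOn (hB s) _ ?_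
  rw [← LinearMap.disjoint_ker_iff_injOn, LinearEquiv.ker_comp, Submodule.ker_mkQ]
  exact (hW s).disjoint

end CommonComplement

lemma exists_forall_lt_mul {α : Type*} {p : α → Prop} {f : α → ℝ} {c C : ℝ} (hp : ∃ a, p a)
    (hc : 0 < c) (hf : ∀ a, p a → c ≤ f a) (hC : 1 < C) :
    ∃ a, p a ∧ ∀ b, p b → f a < C * f b := by
  obtain ⟨a₀, ha₀⟩ := hp
  have hne : (f '' {a | p a}).Nonempty := ⟨_, a₀, ha₀, rfl⟩
  have hlb : ∀ y ∈ f '' {a | p a}, c ≤ y := by rintro _ ⟨a, ha, rfl⟩; exact hf a ha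
  have hpos : 0 < sInf (f '' {a | p a}) := hc.trans_le (le_csInf hne hlb)
  obtain ⟨_, ⟨a, ha, rfl⟩, hlt⟩ := exists_lt_of_csInf_lt hne (lt_mul_of_one_lt_left hpos hC)
  refine ⟨a, ha, fun b hb => hlt.trans_le ?_⟩
  exact mul_le_mul_of_nonneg_left (csInf_le ⟨c, hlb⟩ ⟨b, hb, rfl⟩) (by linarith)

lemma exists_one_lt_pow_mul_exp (t : ℕ) {ε : ℝ} (hε : 0 < ε) :
    ∃ δ : ℝ, 0 < δ ∧ δ < 1 ∧
      1 < (1 - δ) ^ t * Real.exp ((δ - δ ^ 2 / 2) * (t + ε)) := by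
  have hcont : ContinuousAt (fun δ : ℝ => (1 - δ / 2) * (t + ε) - t / (1 - δ)) 0 := by
    fun_prop (disch := norm_num)
  have hpos := hcont.eventually_const_lt (u := 0) (by simpa using hε)
  have hlt : ∀ᶠ δ : ℝ in nhdsWithin 0 (Set.Ioi 0), δ ∈ Set.Ioo 0 1 := Ioo_mem_nhdsGT zero_lt_one
  obtain ⟨δ, ⟨hδ0, hδ1⟩, hδ⟩ := (hlt.and (hpos.filter_mono nhdsWithin_le_nhds)).exists
  have hδ1' : 0 < 1 - δ := sub_pos.2 hδ1
  refine ⟨δ, hδ0, hδ1, ?_⟩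
  rw [← Real.exp_log hδ1', ← Real.exp_nat_mul, ← Real.exp_add, Real.one_lt_exp_iff]
  have hlog := Real.one_sub_inv_le_log_of_pos hδ1'
  calc 0 < δ * ((1 - δ / 2) * (t + ε) - t / (1 - δ)) := mul_pos hδ0 hδ
    _ = t * (1 - (1 - δ)⁻¹) + (δ - δ ^ 2 / 2) * (t + ε) := by field_simp; ring
    _ ≤ _ := by gcongr

section RadialPosition

variable {ι κ E : Type*} [NormedAddCommGroup E] [InnerProductSpace ℝ E]

/-- The linear map that scales the direction of the unit vector `e` by `1 - δ` and fixes its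
orthogonal complement. -/
noncomputable def contraction (δ : ℝ) (e : E) : E →ₗ[ℝ] E :=
  LinearMap.transvection ((-δ) • (innerSL ℝ e).toLinearMap) e

lemma contraction_apply (δ : ℝ) (e z : E) :
    contraction δ e z = z - (δ * inner ℝ e z) • e := by
  simp [contraction, LinearMap.transvection.apply, sub_eq_add_neg]

lemma norm_contraction_apply_sq (δ : ℝ) {e : E} (he : ‖e‖ = 1) (z : E) :
    ‖contraction δ e z‖ ^ 2 = ‖z‖ ^ 2 - (2 * δ - δ ^ 2) * inner ℝ z e ^ 2 := by
  rw [contraction_apply, norm_sub_sq_real, norm_smul, inner_smul_right, he, real_inner_comm z e,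
    mul_one, Real.norm_eq_abs, sq_abs]
  ring

lemma norm_contraction_apply_le (δ : ℝ) {e : E} (he : ‖e‖ = 1) (z : E) :
    ‖contraction δ e z‖ ≤
      ‖z‖ * Real.exp (-((δ - δ ^ 2 / 2) * inner ℝ (NormedSpace.normalize z) e ^ 2)) := by
  set c := inner ℝ (NormedSpace.normalize z) e with hc
  have hinner : inner ℝ z e = ‖z‖ * c := by
    rw [hc, ← real_inner_smul_left, NormedSpace.norm_smul_normalize]
  refine le_of_sq_le_sq ?_ (by positivity)
  have hexp := Real.add_one_le_exp (-(2 * (δ - δ ^ 2 / 2) * c ^ 2))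
  calc ‖contraction δ e z‖ ^ 2 = ‖z‖ ^ 2 * (-(2 * (δ - δ ^ 2 / 2) * c ^ 2) + 1) := by
        rw [norm_contraction_apply_sq δ he, hinner]; ring
    _ ≤ ‖z‖ ^ 2 * Real.exp (-(2 * (δ - δ ^ 2 / 2) * c ^ 2)) := by gcongr
    _ = _ := by rw [mul_pow, ← Real.exp_nat_mul]; congr 2; push_cast; ring

/-- The scale-invariant functional whose minimisers `T` put the vectors `x i`, `i ∈ A`, into
radial isotropic position. -/
noncomputable def distortion (x : ι → E) (A : Finset ι) (t : ℕ) (T : E →ₗ[ℝ] E) : ℝ :=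
  (∏ i ∈ A, ‖T (x i)‖) / |LinearMap.det T| ^ t

variable [FiniteDimensional ℝ E]

lemma det_contraction (δ : ℝ) {e : E} (he : ‖e‖ = 1) :
    LinearMap.det (contraction δ e) = 1 - δ := by
  simp [contraction, LinearMap.transvection.det, he, sub_eq_add_neg]

lemma distortion_contraction_comp_le (x : ι → E) (A : Finset ι) (t : ℕ) (T : E →ₗ[ℝ] E) {δ : ℝ}
    (hδ : δ < 1) {e : E} (he : ‖e‖ = 1) :
    (1 - δ) ^ t * distortion x A t (contraction δ e ∘ₗ T) ≤
      Real.exp (-((δ - δ ^ 2 / 2) *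
        ∑ i ∈ A, inner ℝ (NormedSpace.normalize (T (x i))) e ^ 2)) * distortion x A t T := by
  have hprod : ∏ i ∈ A, ‖contraction δ e (T (x i))‖ ≤ Real.exp (-((δ - δ ^ 2 / 2) *
      ∑ i ∈ A, inner ℝ (NormedSpace.normalize (T (x i))) e ^ 2)) * ∏ i ∈ A, ‖T (x i)‖ := by
    rw [mul_comm, Finset.mul_sum, ← Finset.sum_neg_distrib, Real.exp_sum, ← Finset.prod_mul_distrib]
    exact Finset.prod_le_prod (fun i _ => norm_nonneg _)
      fun i _ => norm_contraction_apply_le δ he (T (x i))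
  have hδt : 0 < (1 - δ) ^ t := pow_pos (sub_pos.2 hδ) t
  rw [distortion, distortion, LinearMap.det_comp, det_contraction δ he, abs_mul,
    abs_of_pos (sub_pos.2 hδ), mul_pow, ← mul_div_assoc, mul_div_mul_left _ _ hδt.ne',
    ← mul_div_assoc]
  exact div_le_div_of_nonneg_right hprod (by positivity)

lemma exists_pos_mul_abs_det_le_prod_norm {x : ι → E} {B : Finset ι}
    (hB : LinearIndepOn ℝ x (B : Set ι)) (hcard : B.card = Module.finrank ℝ E) :
    ∃ c : ℝ, 0 < c ∧ ∀ T : E →ₗ[ℝ] E, c * |LinearMap.det T| ≤ ∏ i ∈ B, ‖T (x i)‖ := by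
  have : Fact (Module.finrank ℝ E = Module.finrank ℝ E) := ⟨rfl⟩
  let e : Fin (Module.finrank ℝ E) ≃ B := (B.equivFinOfCardEq hcard).symm
  let b := stdOrthonormalBasis ℝ E
  let y : Fin (Module.finrank ℝ E) → E := fun k => x (e k)
  have hy : LinearIndependent ℝ y := hB.comp e e.injective
  have hdet : b.toBasis.det y ≠ 0 :=
    ((b.toBasis.is_basis_iff_det).1 ⟨hy, hy.span_eq_top_of_card_eq_finrank' (by simp)⟩).ne_zero
  refine ⟨|b.toBasis.det y|, abs_pos.2 hdet, fun T => ?_⟩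
  have hhadamard := b.toBasis.orientation.abs_volumeForm_apply_le (T ∘ y)
  rw [Orientation.volumeForm_robust _ b rfl, Module.Basis.det_comp, abs_mul, mul_comm] at hhadamard
  refine hhadamard.trans_eq ?_
  rw [← Finset.prod_coe_sort B]
  exact e.prod_comp fun i => ‖T (x i)‖

lemma exists_pos_le_distortion [Fintype κ] [DecidableEq ι] {x : ι → E} {B : κ → Finset ι}
    (hB : IsIndepPacking ℝ x B) (hcard : ∀ s, (B s).card = Module.finrank ℝ E) :
    ∃ c : ℝ, 0 < c ∧ ∀ T : E →ₗ[ℝ] E, LinearMap.det T ≠ 0 →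
      c ≤ distortion x (Finset.univ.biUnion B) (Fintype.card κ) T := by
  choose c hc hcT using fun s =>
    exists_pos_mul_abs_det_le_prod_norm (hB.linearIndepOn s) (hcard s)
  refine ⟨∏ s, c s, Finset.prod_pos fun s _ => hc s, fun T hT => ?_⟩
  rw [distortion, le_div_iff₀ (pow_pos (abs_pos.2 hT) _),
    Finset.prod_biUnion fun _ _ _ _ hst => hB.disjoint hst]
  calc (∏ s, c s) * |LinearMap.det T| ^ Fintype.card κ = ∏ s, c s * |LinearMap.det T| := by
        rw [Finset.prod_mul_distrib, Finset.prod_const, Finset.card_univ]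
    _ ≤ ∏ s, ∏ i ∈ B s, ‖T (x i)‖ :=
        Finset.prod_le_prod (fun s _ => mul_nonneg (hc s).le (abs_nonneg _)) fun s _ => hcT s T

theorem exists_forall_sum_inner_normalize_sq_le [Fintype κ] [DecidableEq ι] {x : ι → E}
    {B : κ → Finset ι} (hB : IsIndepPacking ℝ x B)
    (hcard : ∀ s, (B s).card = Module.finrank ℝ E) {ε : ℝ} (hε : 0 < ε) :
    ∃ T : E →ₗ[ℝ] E, LinearMap.det T ≠ 0 ∧ ∀ e : E, ‖e‖ = 1 →
      ∑ i ∈ Finset.univ.biUnion B, inner ℝ (NormedSpace.normalize (T (x i))) e ^ 2 ≤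
        Fintype.card κ + ε := by
  obtain ⟨c, hc, hcT⟩ := exists_pos_le_distortion hB hcard
  obtain ⟨δ, hδ0, hδ1, hδ⟩ := exists_one_lt_pow_mul_exp (Fintype.card κ) hε
  obtain ⟨T, hT, hmin⟩ := exists_forall_lt_mul (p := fun T : E →ₗ[ℝ] E => LinearMap.det T ≠ 0)
    ⟨LinearMap.id, by simp⟩ hc hcT hδ
  refine ⟨T, hT, fun e he => ?_⟩
  by_contra! hlarge
  set S := ∑ i ∈ Finset.univ.biUnion B, inner ℝ (NormedSpace.normalize (T (x i))) e ^ 2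
  have hβ : 0 < δ - δ ^ 2 / 2 := by nlinarith
  have hdet : LinearMap.det (contraction δ e ∘ₗ T) ≠ 0 := by
    rw [LinearMap.det_comp, det_contraction δ he]
    exact mul_ne_zero (sub_pos.2 hδ1).ne' hT
  refine (hmin _ hdet).not_ge ?_
  have hexp : Real.exp ((δ - δ ^ 2 / 2) * (Fintype.card κ + ε)) *
      Real.exp (-((δ - δ ^ 2 / 2) * S)) ≤ 1 := by
    rw [← Real.exp_add, Real.exp_le_one_iff]
    linarith [mul_le_mul_of_nonneg_left hlarge.le hβ.le]
  set D := distortion x (Finset.univ.biUnion B) (Fintype.card κ)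
  set g := Real.exp ((δ - δ ^ 2 / 2) * (Fintype.card κ + ε))
  calc (1 - δ) ^ Fintype.card κ * g * D (contraction δ e ∘ₗ T)
      = g * ((1 - δ) ^ Fintype.card κ * D (contraction δ e ∘ₗ T)) := by ring
    _ ≤ g * (Real.exp (-((δ - δ ^ 2 / 2) * S)) * D T) :=
        mul_le_mul_of_nonneg_left (distortion_contraction_comp_le x _ _ T hδ1 he)
          (Real.exp_pos _).le
    _ = g * Real.exp (-((δ - δ ^ 2 / 2) * S)) * D T := (mul_assoc _ _ _).symm
    _ ≤ D T := mul_le_of_le_one_left (hc.le.trans (hcT T hT)) hexp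

end RadialPosition

section WelchBound

lemma sum_sq_mul_transpose {m n R : Type*} [Fintype m] [Fintype n] [CommRing R]
    (G : Matrix m n R) :
    ∑ p, ∑ q, (G * G.transpose) p q ^ 2 = ∑ i, ∑ j, (G.transpose * G) i j ^ 2 := by
  classical
  simp only [sq, ← Matrix.hadamard_apply, Matrix.sum_hadamard_eq, Matrix.transpose_mul,
    Matrix.transpose_transpose]
  rw [Matrix.mul_assoc, Matrix.trace_mul_comm]
  simp only [Matrix.mul_assoc]

variable {ι E : Type*} [NormedAddCommGroup E] [InnerProductSpace ℝ E]

/-- The Welch bound: the Gram matrix of `w` and its frame operator, which acts on a space of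
dimension `finrank ℝ E`, have the same trace and the same Frobenius norm. -/
lemma sq_sum_norm_sq_le_finrank_mul [Fintype ι] [FiniteDimensional ℝ E] (w : ι → E) :
    (∑ i, ‖w i‖ ^ 2) ^ 2 ≤ Module.finrank ℝ E * ∑ i, ∑ j, inner ℝ (w i) (w j) ^ 2 := by
  let b := stdOrthonormalBasis ℝ E
  let G : Matrix (Fin (Module.finrank ℝ E)) ι ℝ := Matrix.of fun p i => inner ℝ (b p) (w i)
  have hG : ∀ i j, (G.transpose * G) i j = inner ℝ (w i) (w j) := fun i j => by
    rw [← b.sum_inner_mul_inner (w i) (w j)]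
    simp [G, Matrix.mul_apply, real_inner_comm]
  have hnorm : ∑ i, ‖w i‖ ^ 2 = ∑ p, (G * G.transpose) p p := by
    simp only [← real_inner_self_eq_norm_sq, ← hG, Matrix.mul_apply, Matrix.transpose_apply]
    exact Finset.sum_comm
  calc (∑ i, ‖w i‖ ^ 2) ^ 2
      ≤ Module.finrank ℝ E * ∑ p, (G * G.transpose) p p ^ 2 := by
        simpa [hnorm] using sq_sum_le_card_mul_sum_sq (s := Finset.univ)
          (f := fun p => (G * G.transpose) p p)
    _ ≤ Module.finrank ℝ E * ∑ p, ∑ q, (G * G.transpose) p q ^ 2 := by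
        gcongr with p
        exact Finset.single_le_sum (f := fun q => (G * G.transpose) p q ^ 2)
          (fun q _ => sq_nonneg _) (Finset.mem_univ p)
    _ = Module.finrank ℝ E * ∑ i, ∑ j, inner ℝ (w i) (w j) ^ 2 := by
        simp only [sum_sq_mul_transpose, hG]

lemma card_sq_le_finrank_mul {w : ι → E} {A : Finset ι} (hw : ∀ i ∈ A, ‖w i‖ = 1)
    {U : Submodule ℝ E} [FiniteDimensional ℝ U] (hU : ∀ i ∈ A, w i ∈ U) :
    (A.card : ℝ) ^ 2 ≤ Module.finrank ℝ U * ∑ i ∈ A, ∑ j ∈ A, inner ℝ (w i) (w j) ^ 2 := by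
  have hwelch := sq_sum_norm_sq_le_finrank_mul fun i : A => (⟨w i, hU i i.2⟩ : U)
  simp only [Submodule.coe_norm, Submodule.coe_inner, hw _ (Subtype.prop _), one_pow,
    Finset.sum_const, Finset.card_univ, Fintype.card_coe, nsmul_eq_mul, mul_one] at hwelch
  rwa [Finset.sum_coe_sort A fun i => ∑ j : A, inner ℝ (w i) (w j) ^ 2,
    Finset.sum_congr rfl fun i _ => Finset.sum_coe_sort A fun j => inner ℝ (w i) (w j) ^ 2]
    at hwelch

lemma sum_offDiag_inner_sq {w : ι → E} {A : Finset ι} (hw : ∀ i ∈ A, ‖w i‖ = 1) :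
    ∑ p ∈ A.offDiag, inner ℝ (w p.1) (w p.2) ^ 2 =
      ∑ i ∈ A, ∑ j ∈ A, inner ℝ (w i) (w j) ^ 2 - A.card := by
  classical
  have hdiag : ∑ p ∈ A.diag, inner ℝ (w p.1) (w p.2) ^ 2 = (A.card : ℝ) := by
    rw [Finset.sum_diag, Finset.card_eq_sum_ones, Nat.cast_sum]
    exact Finset.sum_congr rfl fun i hi => by simp [hw i hi]
  rw [← Finset.sum_product', ← Finset.diag_union_offDiag,
    Finset.sum_union (Finset.disjoint_diag_offDiag A), hdiag, add_sub_cancel_left]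

lemma sum_offDiag_inner_sq_le {w : ι → E} {A : Finset ι} (hw : ∀ i ∈ A, ‖w i‖ = 1) {c : ℝ}
    (hc : ∀ e, ‖e‖ = 1 → ∑ i ∈ A, inner ℝ (w i) e ^ 2 ≤ c) :
    ∑ p ∈ A.offDiag, inner ℝ (w p.1) (w p.2) ^ 2 ≤ A.card * (c - 1) := by
  have hsum : ∑ i ∈ A, ∑ j ∈ A, inner ℝ (w i) (w j) ^ 2 ≤ A.card * c := by
    rw [Finset.sum_comm, ← nsmul_eq_mul]
    exact Finset.sum_le_card_nsmul _ _ _ fun j hj => hc _ (hw j hj)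
  rw [sum_offDiag_inner_sq hw]
  linarith

lemma le_sum_offDiag_inner_sq {w : ι → E} {A : Finset ι} (hw : ∀ i ∈ A, ‖w i‖ = 1)
    {U : Submodule ℝ E} [FiniteDimensional ℝ U] (hU : ∀ i ∈ A, w i ∈ U)
    (hrank : Module.finrank ℝ U ≤ 2) :
    (A.card : ℝ) ^ 2 / 2 - A.card ≤ ∑ p ∈ A.offDiag, inner ℝ (w p.1) (w p.2) ^ 2 := by
  have hwelch : (A.card : ℝ) ^ 2 ≤ 2 * ∑ i ∈ A, ∑ j ∈ A, inner ℝ (w i) (w j) ^ 2 :=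
    (card_sq_le_finrank_mul hw hU).trans (by gcongr; exact_mod_cast hrank)
  rw [sum_offDiag_inner_sq hw]
  linarith

end WelchBound

section Lines

variable {K V ι : Type*} [DivisionRing K] [AddCommGroup V] [Module K V] {v : ι → V}
  {A L : Finset ι} {i j k l : ι}

variable (K v A) in
open Classical in
/-- The set of points of `A` on the projective line through the points `i` and `j`, where each
index `i` stands for the point of projective space represented by `v i`. -/
noncomputable def lineThrough (i j : ι) : Finset ι :=
  A.filter fun k => v k ∈ Submodule.span K {v i, v j}

lemma mem_lineThrough : k ∈ lineThrough K v A i j ↔ k ∈ A ∧ v k ∈ Submodule.span K {v i, v j} := by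
  simp [lineThrough]

lemma left_mem_lineThrough (hi : i ∈ A) : i ∈ lineThrough K v A i j :=
  mem_lineThrough.2 ⟨hi, Submodule.subset_span (by simp)⟩

lemma right_mem_lineThrough (hj : j ∈ A) : j ∈ lineThrough K v A i j :=
  mem_lineThrough.2 ⟨hj, Submodule.subset_span (by simp)⟩

namespace PairwiseIndepOver

lemma finrank_span_pair (h : PairwiseIndepOver K v ∅ A) (hi : i ∈ A) (hj : j ∈ A) (hij : i ≠ j) :
    Module.finrank K (Submodule.span K {v i, v j}) = 2 := by
  classical
  have hind : LinearIndepOn K v (({i, j} : Finset ι) : Set ι) := by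
    simpa using h.linearIndepOn_pair hi hj
  rw [← Finset.card_pair hij, ← finrank_span_image_eq_card hind, Finset.coe_pair, Set.image_pair]

lemma lineThrough_eq_of_mem (h : PairwiseIndepOver K v ∅ A) (hi : i ∈ A) (hj : j ∈ A)
    (hij : i ≠ j) (hk : k ∈ lineThrough K v A i j) (hl : l ∈ lineThrough K v A i j)
    (hkl : k ≠ l) : lineThrough K v A k l = lineThrough K v A i j := by
  rw [mem_lineThrough] at hk hl
  have : FiniteDimensional K (Submodule.span K {v i, v j}) :=
    FiniteDimensional.span_of_finite K (by simp)
  have hspan : Submodule.span K {v k, v l} = Submodule.span K {v i, v j} := by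
    refine Submodule.eq_of_le_of_finrank_eq
      (Submodule.span_le.2 (Set.pair_subset hk.2 hl.2)) ?_
    rw [h.finrank_span_pair hk.1 hl.1 hkl, h.finrank_span_pair hi hj hij]
  ext x
  simp only [mem_lineThrough, hspan]

end PairwiseIndepOver

variable [DecidableEq ι]

variable (K v A) in
/-- The lines spanned by pairs of points of `A`, each given as the set of the points of `A` on
it. -/
noncomputable def spannedLines : Finset (Finset ι) :=
  A.offDiag.image fun p => lineThrough K v A p.1 p.2

lemma exists_of_mem_spannedLines (hL : L ∈ spannedLines K v A) :
    ∃ i ∈ A, ∃ j ∈ A, i ≠ j ∧ lineThrough K v A i j = L := by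
  simpa [spannedLines, and_assoc] using hL

lemma subset_of_mem_spannedLines (hL : L ∈ spannedLines K v A) : L ⊆ A := by
  obtain ⟨i, -, j, -, -, rfl⟩ := exists_of_mem_spannedLines hL
  exact fun k hk => (mem_lineThrough.1 hk).1

namespace PairwiseIndepOver

lemma lineThrough_eq_of_mem_spannedLines (h : PairwiseIndepOver K v ∅ A)
    (hL : L ∈ spannedLines K v A) (hk : k ∈ L) (hl : l ∈ L) (hkl : k ≠ l) :
    lineThrough K v A k l = L := by
  obtain ⟨i, hi, j, hj, hij, rfl⟩ := exists_of_mem_spannedLines hL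
  exact h.lineThrough_eq_of_mem hi hj hij hk hl hkl

lemma sum_spannedLines_sum_offDiag (h : PairwiseIndepOver K v ∅ A) {M : Type*} [AddCommMonoid M]
    (f : ι × ι → M) :
    ∑ L ∈ spannedLines K v A, ∑ p ∈ L.offDiag, f p = ∑ p ∈ A.offDiag, f p := by
  rw [← Finset.sum_fiberwise_of_maps_to (s := A.offDiag) (t := spannedLines K v A)
    (g := fun p => lineThrough K v A p.1 p.2) (fun p hp => Finset.mem_image_of_mem _ hp) f]
  refine Finset.sum_congr rfl fun L hL => Finset.sum_congr ?_ fun _ _ => rfl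
  ext ⟨k, l⟩
  simp only [Finset.mem_offDiag, Finset.mem_filter]
  constructor
  · rintro ⟨hk, hl, hkl⟩
    exact ⟨⟨subset_of_mem_spannedLines hL hk, subset_of_mem_spannedLines hL hl, hkl⟩,
      h.lineThrough_eq_of_mem_spannedLines hL hk hl hkl⟩
  · rintro ⟨⟨hk, hl, hkl⟩, rfl⟩
    exact ⟨left_mem_lineThrough hk, right_mem_lineThrough hl, hkl⟩

lemma filter_mem_spannedLines (h : PairwiseIndepOver K v ∅ A) {q : ι} (hq : q ∈ A) :
    {L ∈ spannedLines K v A | q ∈ L} = (A.erase q).image (lineThrough K v A q) := by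
  ext L
  simp only [Finset.mem_filter, Finset.mem_image, Finset.mem_erase]
  constructor
  · rintro ⟨hL, hqL⟩
    obtain ⟨i, hi, j, hj, hij, rfl⟩ := exists_of_mem_spannedLines hL
    rcases ne_or_eq i q with hiq | rfl
    · exact ⟨i, ⟨hiq, hi⟩, h.lineThrough_eq_of_mem hi hj hij hqL (left_mem_lineThrough hi) hiq.symm⟩
    · exact ⟨j, ⟨hij.symm, hj⟩, rfl⟩
  · rintro ⟨a, ⟨haq, ha⟩, rfl⟩
    exact ⟨Finset.mem_image.2 ⟨(q, a), Finset.mem_offDiag.2 ⟨hq, ha, haq.symm⟩, rfl⟩,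
      left_mem_lineThrough hq⟩

/-- Projecting from `q` identifies two points exactly when they are collinear with `q`. -/
lemma exists_subset_mkQ (h : PairwiseIndepOver K v ∅ A) {q : ι} (hq : q ∈ A) :
    ∃ A' ⊆ A, A'.card = {L ∈ spannedLines K v A | q ∈ L}.card ∧
      PairwiseIndepOver K ((Submodule.span K {v q}).mkQ ∘ v) ∅ A' := by
  obtain ⟨A', hA', hinj, himage⟩ := Finset.exists_subset_injOn_image_eq_of_surjOn
    (A.erase q : Set ι) ((A.erase q).image (lineThrough K v A q))
    (by simpa only [Finset.coe_image] using Set.surjOn_image _ _)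
  have hA'q : ∀ a ∈ A', a ≠ q ∧ a ∈ A := fun a ha => Finset.mem_erase.1 (hA' ha)
  refine ⟨A', fun a ha => (hA'q a ha).2, ?_, Finset.disjoint_empty_left _, fun a ha b hb => ?_⟩
  · rw [h.filter_mem_spannedLines hq, ← himage, Finset.card_image_of_injOn hinj]
  obtain ⟨haq, haA⟩ := hA'q a ha
  obtain ⟨hbq, hbA⟩ := hA'q b hb
  rw [Finset.coe_empty, Set.empty_union]
  refine linearIndepOn_mkQ_comp_of_insert (by simp [haq.symm, hbq.symm]) ?_
  have hqa : LinearIndepOn K v {q, a} := h.linearIndepOn_pair hq haA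
  rcases eq_or_ne a b with rfl | hab
  · simpa only [Set.pair_eq_singleton] using hqa
  have hb_notMem : v b ∉ Submodule.span K (v '' {q, a}) := fun hbspan => by
    rw [Set.image_pair] at hbspan
    exact hab (hinj ha hb (h.lineThrough_eq_of_mem hq haA haq.symm (left_mem_lineThrough hq)
      (mem_lineThrough.2 ⟨hbA, hbspan⟩) hbq.symm).symm)
  rw [Set.pair_comm a b, Set.insert_comm]
  exact hqa.insert hb_notMem

end PairwiseIndepOver

lemma sum_card_spannedLines :
    ∑ L ∈ spannedLines K v A, L.card = ∑ q ∈ A, {L ∈ spannedLines K v A | q ∈ L}.card := by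
  have hdouble := Finset.sum_card_bipartiteAbove_eq_sum_card_bipartiteBelow
    (s := A) (t := spannedLines K v A) fun q L => q ∈ L
  refine Eq.trans (Finset.sum_congr rfl fun L hL => ?_) hdouble.symm
  rw [Finset.bipartiteBelow, Finset.filter_mem_eq_inter,
    Finset.inter_eq_right.2 (subset_of_mem_spannedLines hL)]

end Lines

section ManyLines

variable {ι : Type*} [DecidableEq ι]

namespace PairwiseIndepOver

variable {V E : Type*} [AddCommGroup V] [Module ℝ V] [NormedAddCommGroup E]
  [InnerProductSpace ℝ E] {v : ι → V} {A : Finset ι}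

lemma half_card_sq_sub_card_le (h : PairwiseIndepOver ℝ v ∅ A) (φ : V →ₗ[ℝ] E)
    (hφ : ∀ i ∈ A, φ (v i) ≠ 0) {L : Finset ι} (hL : L ∈ spannedLines ℝ v A) :
    (L.card : ℝ) ^ 2 / 2 - L.card ≤ ∑ p ∈ L.offDiag,
      inner ℝ (NormedSpace.normalize (φ (v p.1))) (NormedSpace.normalize (φ (v p.2))) ^ 2 := by
  obtain ⟨i, hi, j, hj, hij, rfl⟩ := exists_of_mem_spannedLines hL
  have hfin : FiniteDimensional ℝ (Submodule.span ℝ {v i, v j}) :=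
    FiniteDimensional.span_of_finite ℝ (by simp)
  refine le_sum_offDiag_inner_sq (w := fun k => NormedSpace.normalize (φ (v k)))
    (U := (Submodule.span ℝ {v i, v j}).map φ) (fun k hk => ?_) (fun k hk => ?_) ?_
  · exact NormedSpace.norm_normalize (hφ k (mem_lineThrough.1 hk).1)
  · exact Submodule.smul_mem _ _ (Submodule.mem_map_of_mem (mem_lineThrough.1 hk).2)
  · exact (Submodule.finrank_map_le _ _).trans (h.finrank_span_pair hi hj hij).le

/-- On a line with `ℓ` points the Welch bound in the plane spanned by the line forces a
contribution of at least `ℓ ^ 2 / 2 - ℓ`, so small correlations force many short lines. -/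
lemma card_mul_le_sum_card_spannedLines (h : PairwiseIndepOver ℝ v ∅ A) (φ : V →ₗ[ℝ] E)
    (hφ : ∀ i ∈ A, φ (v i) ≠ 0) {c : ℝ} (hc : ∀ e, ‖e‖ = 1 →
      ∑ i ∈ A, inner ℝ (NormedSpace.normalize (φ (v i))) e ^ 2 ≤ c) :
    A.card * (A.card + 1 - 2 * c) ≤ ((∑ L ∈ spannedLines ℝ v A, L.card : ℕ) : ℝ) := by
  have hupper := sum_offDiag_inner_sq_le
    (fun i hi => NormedSpace.norm_normalize (hφ i hi)) hc
  have hlower := Finset.sum_le_sum fun L hL => h.half_card_sq_sub_card_le φ hφ hL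
  rw [h.sum_spannedLines_sum_offDiag fun p =>
    inner ℝ (NormedSpace.normalize (φ (v p.1))) (NormedSpace.normalize (φ (v p.2))) ^ 2] at hlower
  have hpairs : ∑ L ∈ spannedLines ℝ v A, ((L.card : ℝ) ^ 2 - L.card) =
      (A.card : ℝ) ^ 2 - A.card := by
    have hcast : ∀ L : Finset ι, ∑ _ ∈ L.offDiag, (1 : ℝ) = (L.card : ℝ) ^ 2 - L.card := fun L => by
      rw [Finset.sum_const, Finset.offDiag_card, nsmul_one, Nat.cast_sub (Nat.le_mul_self _),
        Nat.cast_mul, sq]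
    simpa only [hcast] using h.sum_spannedLines_sum_offDiag fun _ => (1 : ℝ)
  have hsplit : ∑ L ∈ spannedLines ℝ v A, ((L.card : ℝ) ^ 2 / 2 - L.card) =
      (∑ L ∈ spannedLines ℝ v A, ((L.card : ℝ) ^ 2 - L.card) -
        ∑ L ∈ spannedLines ℝ v A, (L.card : ℝ)) / 2 := by
    rw [← Finset.sum_sub_distrib, Finset.sum_div]
    exact Finset.sum_congr rfl fun L _ => by ring
  rw [Nat.cast_sum]
  linarith

end PairwiseIndepOver

variable {κ : Type*} [Fintype κ] [Nonempty κ]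

lemma exists_linearMap_sum_inner_normalize_sq_le {V : Type*} [AddCommGroup V] [Module ℝ V]
    [FiniteDimensional ℝ V] {v : ι → V} {B : κ → Finset ι} {m : ℕ} (hB : IsIndepPacking ℝ v B)
    (hcard : ∀ s, (B s).card = m) {ε : ℝ} (hε : 0 < ε) :
    ∃ φ : V →ₗ[ℝ] EuclideanSpace ℝ (Fin m),
      (∀ i ∈ Finset.univ.biUnion B, φ (v i) ≠ 0) ∧ ∀ e, ‖e‖ = 1 →
        ∑ i ∈ Finset.univ.biUnion B, inner ℝ (NormedSpace.normalize (φ (v i))) e ^ 2 ≤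
          Fintype.card κ + ε := by
  obtain ⟨L, hL⟩ := exists_linearMap_linearIndepOn hcard hB.linearIndepOn
    (EuclideanSpace ℝ (Fin m)) finrank_euclideanSpace_fin
  obtain ⟨T, hT, hTle⟩ := exists_forall_sum_inner_normalize_sq_le (x := L ∘ v) ⟨hB.disjoint, hL⟩
    (by simpa using hcard) hε
  refine ⟨T ∘ₗ L, fun i hi hTi => ?_, hTle⟩
  obtain ⟨s, -, his⟩ := Finset.mem_biUnion.1 hi
  refine (hL s).ne_zero his ?_
  exact (LinearMap.equivOfDetNeZero T hT).map_eq_zero_iff.1 hTi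

lemma exists_pairwiseIndepOver_mkQ {V : Type*} [AddCommGroup V] [Module ℝ V]
    [FiniteDimensional ℝ V] {v : ι → V} {B : κ → Finset ι} {m : ℕ} (hm : 0 < m)
    (hB : IsIndepPacking ℝ v B) (hcard : ∀ s, (B s).card = m)
    (hpair : PairwiseIndepOver ℝ v ∅ (Finset.univ.biUnion B)) :
    ∃ q ∈ Finset.univ.biUnion B, ∃ A ⊆ Finset.univ.biUnion B,
      Fintype.card κ * m + 1 ≤ A.card + 2 * Fintype.card κ ∧
        PairwiseIndepOver ℝ ((Submodule.span ℝ {v q}).mkQ ∘ v) ∅ A := by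
  set P := Finset.univ.biUnion B with hP
  have hPcard : P.card = Fintype.card κ * m := by
    simp only [hP, hB.card_biUnion, hcard, Finset.sum_const, Finset.card_univ, smul_eq_mul]
  have hPne : P.Nonempty := Finset.card_pos.1 (hPcard ▸ Nat.mul_pos Fintype.card_pos hm)
  obtain ⟨φ, hφ, hφle⟩ := exists_linearMap_sum_inner_normalize_sq_le hB hcard
    (show (0 : ℝ) < 1 / 4 by norm_num)
  have hlines := hpair.card_mul_le_sum_card_spannedLines φ hφ hφle
  rw [sum_card_spannedLines, Nat.cast_sum, ← nsmul_eq_mul, ← Finset.sum_const] at hlines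
  obtain ⟨q, hq, hqlines⟩ := Finset.exists_le_of_sum_le hPne hlines
  obtain ⟨A, hAP, hAcard, hA⟩ := hpair.exists_subset_mkQ hq
  refine ⟨q, hq, A, hAP, ?_, hA⟩
  rw [← hPcard, ← Nat.lt_add_one_iff, hAcard]
  refine (Nat.cast_lt (α := ℝ)).1 ?_
  push_cast
  linarith

/-- Each step projects from a point on many lines. This costs `2 * card κ` points by the choice of
the point and `card κ` more to restore independence of the blocks. -/
lemma exists_pairwiseIndepOver_of_isIndepPacking (r : ℕ) {V : Type*} [AddCommGroup V]
    [Module ℝ V] [FiniteDimensional ℝ V] {v : ι → V} {B : κ → Finset ι} {k : ℕ}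
    (hB : IsIndepPacking ℝ v B) (hcard : ∀ s, (B s).card = k + 3 * (r + 1))
    (hpair : PairwiseIndepOver ℝ v ∅ (Finset.univ.biUnion B)) :
    ∃ Q ⊆ Finset.univ.biUnion B, ∃ A ⊆ Finset.univ.biUnion B, Q.card = r + 1 ∧
      Fintype.card κ * (k + 1) < A.card ∧ PairwiseIndepOver ℝ v Q A := by
  induction r generalizing V v B with
  | zero =>
    obtain ⟨q, hq, A, hA, hAcard, hqA⟩ := exists_pairwiseIndepOver_mkQ (by omega) hB hcard hpair
    have hstar := hqA.insert_of_mkQ (hpair.ne_zero hq)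
    exact ⟨{q}, by simpa using hq, A, hA, by simp, by nlinarith, by simpa using hstar⟩
  | succ r ih =>
    obtain ⟨q, hq, A₁, hA₁, hA₁card, hqA₁⟩ :=
      exists_pairwiseIndepOver_mkQ (by omega) hB hcard hpair
    have hvq : v q ≠ 0 := hpair.ne_zero hq
    obtain ⟨B₁, hB₁, hB₁A₁, hB₁card⟩ := hB.exists_mkQ hA₁ hvq
    obtain ⟨B₂, hB₂, hB₂card, hB₂B₁⟩ := hB₁.exists_card_eq (m := k + 3 * (r + 1)) (by nlinarith)
    have hB₂A₁ := hB₂B₁.trans hB₁A₁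
    obtain ⟨Q, hQ, A, hA, hQcard, hAcard, hQA⟩ := ih hB₂ hB₂card (hqA₁.mono hB₂A₁)
    have hqQ : q ∉ Q := fun hqQ => (hqA₁.ne_zero (hB₂A₁ (hQ hqQ))) <|
      (Submodule.Quotient.mk_eq_zero _).2 (Submodule.mem_span_singleton_self (v q))
    exact ⟨insert q Q, Finset.insert_subset hq ((hQ.trans hB₂A₁).trans hA₁), A,
      (hA.trans hB₂A₁).trans hA₁, by rw [Finset.card_insert_of_notMem hqQ, hQcard], hAcard,
      hQA.insert_of_mkQ hvq⟩

end ManyLines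

lemma exists_pairwiseIndepOver_of_forall_card_lt {K V ι : Type*} [DivisionRing K] [AddCommGroup V]
    [Module K V] {v : ι → V} {P R : Finset ι} {m : ℕ} (hRP : R ⊆ P)
    (hspan : Submodule.span K (v '' P) = ⊤) (hpair : PairwiseIndepOver K v ∅ R)
    (hR : ∀ I ⊆ R, LinearIndepOn K v (I : Set ι) → I.card < m) :
    ∃ Q ⊆ P, Module.finrank K V < Q.card + m ∧ PairwiseIndepOver K v Q R := by
  classical
  obtain ⟨I, -, hIR, hI, hIspan⟩ := exists_finset_linearIndepOn_extension (K := K) (v := v)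
    (I := ∅) (by simp) (Finset.empty_subset R)
  obtain ⟨J, hIJ, hJP, hJ, hJspan⟩ := exists_finset_linearIndepOn_extension hI (hIR.trans hRP)
  have hJtop : Submodule.span K (v '' J) = ⊤ := top_unique (hspan ▸ Submodule.span_le.2 hJspan)
  have hJcard : J.card = Module.finrank K V := by
    rw [← finrank_span_image_eq_card hJ, hJtop, finrank_top]
  have hJunion : LinearIndepOn K v (((J \ I : Finset ι) : Set ι) ∪ (I : Set ι)) := by
    rwa [← Finset.coe_union, Finset.sdiff_union_of_subset hIJ]
  obtain ⟨hQ, -, hQI⟩ :=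
    (linearIndepOn_union_iff (by exact_mod_cast Finset.sdiff_disjoint)).1 hJunion
  have hQR : Disjoint (Submodule.span K (v '' ((J \ I : Finset ι) : Set ι)))
      (Submodule.span K (v '' (R : Set ι))) := hQI.mono_right (Submodule.span_le.2 hIspan)
  refine ⟨J \ I, Finset.sdiff_subset.trans hJP, ?_, Finset.disjoint_left.2 fun x hxQ hxR => ?_,
    fun a ha b hb => ?_⟩
  · rw [← hJcard, ← Finset.card_sdiff_add_card_eq_card hIJ]
    exact Nat.add_lt_add_left (hR I hIR hI) _
  · exact hQ.ne_zero hxQ (Submodule.disjoint_def.1 hQR (v x)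
      (Submodule.subset_span ⟨x, hxQ, rfl⟩) (Submodule.subset_span ⟨x, hxR, rfl⟩))
  · exact hQ.union (hpair.linearIndepOn_pair ha hb) (hQR.mono_right
      (Submodule.span_mono (Set.image_mono (Set.pair_subset ha hb))))

/-- The product is nearly maximal when `3 * (r + 1)` is about `m / 2`. -/
lemma exists_add_three_mul_eq {m : ℕ} (hm : 3 ≤ m) :
    ∃ k r, k + 3 * (r + 1) = m ∧ m * m ≤ 23 * ((r + 1) * (k + 1)) := by
  obtain ⟨r, hr, hr'⟩ : ∃ r, m ≤ 6 * (r + 1) ∧ 6 * r < m := ⟨(m - 1) / 6, by omega, by omega⟩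
  obtain ⟨k, rfl⟩ : ∃ k, m = k + 3 * (r + 1) := Nat.exists_eq_add_of_le' (by omega)
  exact ⟨k, r, rfl, by nlinarith⟩

/-- If few vectors are left over by a maximal packing by independent sets of size `d / 2 + 2`, then
the packing itself yields `Q` and `A`; otherwise the leftover vectors serve as `A`, and since their
span has dimension less than `d / 2 + 2`, it has a large complement. -/
theorem exists_pairwiseIndepOver_of_span_eq_top {V ι : Type*} [AddCommGroup V] [Module ℝ V]
    [FiniteDimensional ℝ V] {v : ι → V} {P : Finset ι} {d : ℕ} (hd : 2 ≤ d)
    (hdim : Module.finrank ℝ V = d + 1) (hspan : Submodule.span ℝ (v '' P) = ⊤)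
    (hP : PairwiseIndepOver ℝ v ∅ P) :
    ∃ Q ⊆ P, ∃ A ⊆ P, d * P.card ≤ 48 * (Q.card * A.card) ∧ PairwiseIndepOver ℝ v Q A := by
  classical
  obtain ⟨k, r, hkr, hmm⟩ := exists_add_three_mul_eq (m := d / 2 + 2) (by omega)
  set m := d / 2 + 2
  obtain ⟨𝓑, h𝓑, h𝓑P, hmax⟩ := exists_maximal_isIndepPacking (K := ℝ) v P (m := m) (by omega)
  set U := Finset.univ.biUnion ((↑) : 𝓑 → Finset ι) with hU
  have hUP : U ⊆ P := Finset.biUnion_subset.2 fun I _ => (h𝓑P I I.2).1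
  have hUcard : U.card = 𝓑.card * m := by
    rw [hU, h𝓑.card_biUnion, Finset.sum_coe_sort 𝓑 Finset.card]
    exact Finset.sum_const_nat fun I hI => (h𝓑P I hI).2
  rcases le_or_gt P.card (24 * (P \ U).card) with hmany | hfew
  · obtain ⟨Q, hQP, hQcard, hQ⟩ := exists_pairwiseIndepOver_of_forall_card_lt Finset.sdiff_subset
      hspan (hP.mono Finset.sdiff_subset) hmax
    refine ⟨Q, hQP, P \ U, Finset.sdiff_subset, ?_, hQ⟩
    calc d * P.card ≤ 2 * Q.card * (24 * (P \ U).card) := Nat.mul_le_mul (by omega) hmany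
      _ = _ := by ring
  · have hsplit : (P \ U).card + U.card = P.card := Finset.card_sdiff_add_card_eq_card hUP
    have : Nonempty 𝓑 := (Finset.card_pos.1 (Nat.pos_of_ne_zero fun h => by
      rw [h, zero_mul] at hUcard; omega)).to_subtype
    obtain ⟨Q, hQU, A, hAU, hQcard, hAcard, hQA⟩ := exists_pairwiseIndepOver_of_isIndepPacking r h𝓑
      (fun I => (h𝓑P I I.2).2.trans hkr.symm) (hP.mono hUP)
    refine ⟨Q, hQU.trans hUP, A, hAU.trans hUP, ?_, hQA⟩
    rw [Fintype.card_coe] at hAcard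
    refine Nat.le_of_mul_le_mul_left (c := 23) ?_ (by norm_num)
    calc 23 * (d * P.card) = d * (23 * P.card) := by ring
      _ ≤ 2 * m * (24 * (𝓑.card * m)) := Nat.mul_le_mul (by omega) (by omega)
      _ = 48 * 𝓑.card * (m * m) := by ring
      _ ≤ 48 * 𝓑.card * (23 * ((r + 1) * (k + 1))) := Nat.mul_le_mul_left _ hmm
      _ = 23 * (48 * ((r + 1) * (𝓑.card * (k + 1)))) := by ring
      _ ≤ 23 * (48 * (Q.card * A.card)) := by rw [hQcard]; gcongr

lemma wbtw_total {K E : Type*} [Field K] [LinearOrder K] [IsStrictOrderedRing K] [AddCommGroup E]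
    [Module K E] {x y z w : E} (hy : Wbtw K x y w) (hz : Wbtw K x z w) :
    Wbtw K x y z ∨ Wbtw K x z y := by
  obtain ⟨s, hs, rfl⟩ := hy
  obtain ⟨t, ht, rfl⟩ := hz
  exact wbtw_or_wbtw_smul_vadd_of_nonneg x (w -ᵥ x) hs.1 ht.1

section Segment

variable {K E : Type*} [Field K] [LinearOrder K] [IsStrictOrderedRing K] [AddCommGroup E]
  [Module K E] {a b x y : E}

lemma left_mem_pair_of_segment_eq (h : segment K x y = segment K a b) :
    x ∈ ({a, b} : Set E) := by
  have hx : Wbtw K a x b := mem_segment_iff_wbtw.1 (h ▸ left_mem_segment K x y)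
  have ha : Wbtw K x a y := mem_segment_iff_wbtw.1 (h ▸ left_mem_segment K a b)
  have hb : Wbtw K x b y := mem_segment_iff_wbtw.1 (h ▸ right_mem_segment K a b)
  rcases wbtw_total ha hb with hab | hba
  · exact .inl ((wbtw_swap_left_iff K b).1 ⟨hab, hx⟩)
  · exact .inr ((wbtw_swap_left_iff K a).1 ⟨hba, hx.symm⟩)

lemma pair_subset_of_segment_eq (h : segment K x y = segment K a b) :
    ({x, y} : Set E) ⊆ {a, b} :=
  Set.pair_subset (left_mem_pair_of_segment_eq h)
    (left_mem_pair_of_segment_eq ((segment_symm K y x).trans h))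

lemma pair_eq_of_segment_eq (h : segment K x y = segment K a b) : ({x, y} : Set E) = {a, b} :=
  (pair_subset_of_segment_eq h).antisymm (pair_subset_of_segment_eq h.symm)

end Segment

lemma Convergent.card_eq_four_and_coplanar {d : ℕ} {x y z w : Fin d → ℝ}
    (h : Convergent (segment ℝ x y) (segment ℝ z w)) :
    ({x, y, z, w} : Finset (Fin d → ℝ)).card = 4 ∧
      Coplanar ℝ ({x, y, z, w} : Set (Fin d → ℝ)) := by
  obtain ⟨a, b, c, e, hab, hac, hae, hbc, hbe, hce, hcop, -, -, -, -, -, hst⟩ := h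
  have hset : ({x, y, z, w} : Set (Fin d → ℝ)) = {a, b, c, e} := by
    suffices ({x, y} ∪ {z, w} : Set (Fin d → ℝ)) = {a, b} ∪ {c, e} by
      simpa only [Set.insert_union, Set.singleton_union] using this
    rcases hst with ⟨hxy, hzw⟩ | ⟨hxy, hzw⟩
    · rw [pair_eq_of_segment_eq hxy, pair_eq_of_segment_eq hzw]
    · rw [pair_eq_of_segment_eq hxy, pair_eq_of_segment_eq hzw, Set.union_comm]
  have hfinset : ({x, y, z, w} : Finset (Fin d → ℝ)) = {a, b, c, e} := by
    simpa only [← Finset.coe_inj, Finset.coe_insert, Finset.coe_singleton] using hset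
  refine ⟨?_, hset ▸ hcop⟩
  rw [hfinset]
  simp [*]

section Homogenization

variable (K : Type*) {E : Type*} [DivisionRing K] [AddCommGroup E] [Module K E]

/-- The homogeneous coordinates `(x, 1)` of a point `x`, which turn affine independence into linear
independence. -/
def homog (x : E) : E × K := (x, 1)

variable {K}

lemma affineIndependent_of_linearIndepOn_homog {s : Set E} (hs : LinearIndepOn K (homog K) s) :
    AffineIndependent K ((↑) : s → E) := by
  rw [affineIndependent_iff]
  intro t c hsum hlin
  refine linearIndependent_iff'.1 hs t c (Prod.ext ?_ ?_)
  · simpa [homog, Prod.fst_sum] using hlin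
  · simpa [homog, Prod.snd_sum] using hsum

lemma card_le_finrank_vectorSpan_add_one_of_linearIndepOn_homog {T : Finset E}
    (hT : LinearIndepOn K (homog K) (T : Set E)) :
    T.card ≤ Module.finrank K (vectorSpan K (T : Set E)) + 1 := by
  have h := (affineIndependent_of_linearIndepOn_homog hT).card_le_finrank_succ
  rw [Subtype.range_coe] at h
  simpa using h

lemma linearIndepOn_homog_pair (a b : E) : LinearIndepOn K (homog K) {a, b} := by
  rcases eq_or_ne a b with rfl | hab
  · rw [Set.pair_eq_singleton]
    exact LinearIndepOn.singleton fun h => one_ne_zero (congrArg Prod.snd h)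
  rw [LinearIndepOn.pair_iff _ hab]
  intro s t h
  obtain ⟨hlin, hsum⟩ : s • a + t • b = 0 ∧ s + t = 0 := by simpa [homog] using h
  obtain rfl : t = -s := eq_neg_of_add_eq_zero_right hsum
  have hs : s • (a - b) = 0 := by rw [smul_sub, sub_eq_add_neg, ← neg_smul, hlin]
  simpa [sub_ne_zero.2 hab] using hs

lemma pairwiseIndepOver_homog (P : Finset E) : PairwiseIndepOver K (homog K) ∅ P :=
  ⟨Finset.disjoint_empty_left P, fun a _ b _ => by simpa using linearIndepOn_homog_pair a b⟩

lemma span_homog_image_eq_top {s : Set E} (hs : affineSpan K s = ⊤) :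
    Submodule.span K (homog K '' s) = ⊤ := by
  have hmem (x : E) : homog K x ∈ Submodule.span K (homog K '' s) := by
    refine affineSpan_induction (p := fun y => homog K y ∈ _) (hs ▸ AffineSubspace.mem_top K E x)
      (fun y hy => Submodule.subset_span (Set.mem_image_of_mem _ hy)) fun c u v w hu hv hw => ?_
    have hcomb : homog K (c • (u -ᵥ v) +ᵥ w) = c • (homog K u - homog K v) + homog K w := by
      simp [homog]
    exact hcomb ▸ add_mem (Submodule.smul_mem _ c (sub_mem hu hv)) hw
  refine Submodule.eq_top_iff'.2 fun ⟨x, s⟩ => ?_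
  have hdecomp : (x, s) = homog K x + (s - 1) • homog K (0 : E) := by simp [homog]
  exact hdecomp ▸ add_mem (hmem x) (Submodule.smul_mem _ _ (hmem 0))

end Homogenization

namespace PairwiseIndepOver

section

variable {K E : Type*} [DivisionRing K] [AddCommGroup E] [Module K E] {Q A : Finset E}
  {q q' x x' : E}

lemma card_le_finrank_vectorSpan_add_one [DecidableEq E] (h : PairwiseIndepOver K (homog K) Q A)
    (hq : q ∈ Q) (hq' : q' ∈ Q) (hx : x ∈ A) (hx' : x' ∈ A) :
    ({q, x, q', x'} : Finset E).card ≤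
      Module.finrank K (vectorSpan K ({q, x, q', x'} : Set E)) + 1 := by
  have hsub : ({q, x, q', x'} : Set E) ⊆ (Q : Set E) ∪ {x, x'} := by
    simp [Set.insert_subset_iff, hq, hq']
  have hcoe : (({q, x, q', x'} : Finset E) : Set E) = {q, x, q', x'} := by
    simp only [Finset.coe_insert, Finset.coe_singleton]
  rw [← hcoe] at hsub ⊢
  exact card_le_finrank_vectorSpan_add_one_of_linearIndepOn_homog
    ((h.linearIndepOn x hx x' hx').mono hsub)

lemma eq_of_collinear (h : PairwiseIndepOver K (homog K) Q A) (hq : q ∈ Q) (hq' : q' ∈ Q)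
    (hx : x ∈ A) (hx' : x' ∈ A) (hcol : Collinear K ({q, x, q', x'} : Set E)) :
    q = q' ∧ x = x' := by
  classical
  have hrank := collinear_iff_finrank_le_one.1 hcol
  have hcard := h.card_le_finrank_vectorSpan_add_one hq hq' hx hx'
  have hpair : ({q, x} : Finset E) = {q, x, q', x'} :=
    Finset.eq_of_subset_of_card_le (by grind) (by rw [Finset.card_pair (h.ne hq hx)]; omega)
  have hq'mem : q' ∈ ({q, x} : Finset E) := by simp [hpair]
  have hx'mem : x' ∈ ({q, x} : Finset E) := by simp [hpair]
  have := h.ne hq' hx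
  have := h.ne hq hx'
  grind

end

lemma not_convergent {d : ℕ} {Q A : Finset (Fin d → ℝ)} {q q' x x' : Fin d → ℝ}
    (h : PairwiseIndepOver ℝ (homog ℝ) Q A) (hq : q ∈ Q) (hq' : q' ∈ Q) (hx : x ∈ A)
    (hx' : x' ∈ A) : ¬ Convergent (segment ℝ q x) (segment ℝ q' x') := by
  intro hconv
  obtain ⟨hfour, hcop⟩ := hconv.card_eq_four_and_coplanar
  have hrank := coplanar_iff_finrank_le_two.1 hcop
  have hcard := h.card_le_finrank_vectorSpan_add_one hq hq' hx hx'
  omega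

end PairwiseIndepOver

/-- **Theorem 1.3.** For every integer `d ≥ 2`, any finite set `P` of `n` points in
`ℝ^d` whose affine span is all of `ℝ^d` determines at least `(1/48)·d·n` closed
line segments (with endpoints in `P`), no two of which are convergent and no two
of which are collinear. -/
theorem segments_no_two_convergent_or_collinear (d n : ℕ) (hd : 2 ≤ d)
    (P : Finset (Fin d → ℝ)) (hcard : P.card = n)
    (hspan : affineSpan ℝ (P : Set (Fin d → ℝ)) = ⊤) :
    ∃ S : Finset ((Fin d → ℝ) × (Fin d → ℝ)),
      d * n ≤ 48 * S.card ∧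
      (∀ e ∈ S, e.1 ∈ P ∧ e.2 ∈ P ∧ e.1 ≠ e.2) ∧
      (∀ e₁ ∈ S, ∀ e₂ ∈ S, e₁ ≠ e₂ →
        ¬ Convergent (segment ℝ e₁.1 e₁.2) (segment ℝ e₂.1 e₂.2) ∧
        ¬ Collinear ℝ (segment ℝ e₁.1 e₁.2 ∪ segment ℝ e₂.1 e₂.2)) := by
  obtain ⟨Q, hQP, A, hAP, hQA_card, hQA⟩ := exists_pairwiseIndepOver_of_span_eq_top hd
    (by simp) (span_homog_image_eq_top hspan) (pairwiseIndepOver_homog P)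
  refine ⟨Q ×ˢ A, by rwa [Finset.card_product, ← hcard], fun ⟨q, x⟩ he => ?_, ?_⟩
  · obtain ⟨hq, hx⟩ := Finset.mem_product.1 he
    exact ⟨hQP hq, hAP hx, hQA.ne hq hx⟩
  rintro ⟨q, x⟩ he ⟨q', x'⟩ he' hne
  obtain ⟨hq, hx⟩ := Finset.mem_product.1 he
  obtain ⟨hq', hx'⟩ := Finset.mem_product.1 he'
  refine ⟨hQA.not_convergent hq hq' hx hx', fun hcol => hne (Prod.ext_iff.2 ?_)⟩
  refine hQA.eq_of_collinear hq hq' hx hx' (hcol.subset ?_)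
  simp [Set.insert_subset_iff, left_mem_segment, right_mem_segment]
end

section
/- Let P be a finite set of n points in ℝ^d whose affine span has dimension d. Then there is a point x ∈ P such that the number of distinct lines connecting x to the other points of P is at least n·(1 − 12/d). -/
/-- The set of distinct lines connecting a point `x` to the other points of a
finite set `P` in `ℝ^d`: the affine spans of `{x, p}` for points `p ∈ P` with
`p ≠ x`. -/
def linesThrough {d : ℕ} (P : Finset (Fin d → ℝ)) (x : Fin d → ℝ) :
    Set (AffineSubspace ℝ (Fin d → ℝ)) :=
  {L | ∃ p ∈ P, p ≠ x ∧ L = affineSpan ℝ ({x, p} : Set (Fin d → ℝ))}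

/-!
Call a neighbour of a point special if the line joining the two contains a third point, and let `m`
be the least number of special neighbours of a point. The affine dependences of the ordered
collinear triples, suitably weighted, are the rows of a matrix whose columns are indexed by the
points: every column is assigned rows of total weight `1`, and any two columns meet in rows of total
weight at most `6 / m`.

Rescaling rows and columns preserves the zero pattern and the rank. Making the gradient of a convex
potential small yields a rescaling for which every row has norm `1` and every column has weighted
norm close to `1`. The Gram matrix of the columns is then close to the identity in the
Frobenius norm, which forces the rank to be at least `n (1 - 6 / m)`. On the other hand affine
functions on the span lie in the kernel of the matrix, so its rank is at most `n - (D + 1)`, where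
`D` is the dimension of the span. Hence `m (D + 1) ≤ 6 n`, and a point with only `m` special
neighbours lies on at least `n - m` lines (`n - 1` if `m = 0`).
-/

open Finset Module Matrix
open scoped ComplexConjugate

section SmallGradient

variable {E : Type*} [NormedAddCommGroup E] [InnerProductSpace ℝ E] [FiniteDimensional ℝ E]

lemma exists_forall_add_mul_norm_sq_le {g : E → ℝ} (hg : Continuous g)
    (hb : BddBelow (Set.range g)) {ε : ℝ} (hε : 0 < ε) :
    ∃ x, ∀ y, g x + ε * ‖x‖ ^ 2 ≤ g y + ε * ‖y‖ ^ 2 := by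
  obtain ⟨B, hB⟩ := hb
  have hcont : Continuous fun x ↦ g x + ε * ‖x‖ ^ 2 := by fun_prop
  refine hcont.exists_forall_le ?_
  have hsq : Filter.Tendsto (fun x : E ↦ ε * ‖x‖ ^ 2) (Filter.cocompact E) Filter.atTop :=
    ((Filter.tendsto_pow_atTop two_ne_zero).comp tendsto_norm_cocompact_atTop).const_mul_atTop hε
  exact Filter.tendsto_atTop_add_left_of_le _ B (fun x ↦ hB ⟨x, rfl⟩) hsq

theorem exists_norm_fderiv_le_of_bddBelow {g : E → ℝ} (hg : Differentiable ℝ g)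
    (hb : BddBelow (Set.range g)) {η : ℝ} (hη : 0 < η) : ∃ x, ‖fderiv ℝ g x‖ ≤ η := by
  obtain ⟨B, hB⟩ := hb
  have hgap : 0 ≤ g 0 - B := sub_nonneg.2 (hB ⟨0, rfl⟩)
  -- At a minimiser `x` of `g + ε ‖·‖²` the gradient of `g` is `-2 ε x`, while comparing values at
  -- `x` and `0` bounds `ε ‖x‖²` by the gap; so the gradient has size at most `2 √(ε · gap)`.
  let ε := η ^ 2 / (4 * (g 0 - B + 1))
  have hε : 0 < ε := by positivity
  obtain ⟨x, hx⟩ := exists_forall_add_mul_norm_sq_le hg.continuous ⟨B, hB⟩ hε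
  have hmin : IsLocalMin (fun y ↦ g y + ε * ‖y‖ ^ 2) x := Filter.Eventually.of_forall hx
  have hcrit : fderiv ℝ g x + ε • 2 • innerSL ℝ x = 0 :=
    hmin.hasFDerivAt_eq_zero <|
      (hg x).hasFDerivAt.add ((hasStrictFDerivAt_norm_sq x).hasFDerivAt.const_mul ε)
  have hnorm : ‖fderiv ℝ g x‖ = 2 * ε * ‖x‖ := by
    rw [eq_neg_of_add_eq_zero_left hcrit, norm_neg, norm_smul, ← Nat.cast_smul_eq_nsmul ℝ,
      norm_smul, innerSL_apply_norm, Real.norm_of_nonneg hε.le, Nat.cast_ofNat, Real.norm_ofNat]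
    ring
  have hvalue : ε * ‖x‖ ^ 2 ≤ g 0 - B := by
    have h0 := hx 0
    have hBx := hB ⟨x, rfl⟩
    rw [norm_zero] at h0
    linarith
  refine ⟨x, le_of_sq_le_sq ?_ hη.le⟩
  calc ‖fderiv ℝ g x‖ ^ 2 = 4 * ε * (ε * ‖x‖ ^ 2) := by rw [hnorm]; ring
    _ ≤ 4 * ε * (g 0 - B + 1) := by gcongr; linarith
    _ = η ^ 2 := by simp only [ε]; field_simp

end SmallGradient

section Scaling

variable {ι κ : Type*} [Fintype ι] [Fintype κ]

/-- The probability vector proportional to `b v * exp (t v)`: a row `b` of a nonnegative matrix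
after its columns are rescaled by `exp (t v)` and its sum is normalised to `1`. -/
noncomputable def softmax (b t : ι → ℝ) (u : ι) : ℝ :=
  b u * Real.exp (t u) / ∑ v, b v * Real.exp (t v)

lemma sum_mul_exp_pos {b : ι → ℝ} (hb : ∀ v, 0 ≤ b v) {i : ι} (hi : 0 < b i) (t : ι → ℝ) :
    0 < ∑ v, b v * Real.exp (t v) :=
  sum_pos' (fun v _ ↦ mul_nonneg (hb v) (Real.exp_pos _).le)
    ⟨i, mem_univ i, mul_pos hi (Real.exp_pos _)⟩

lemma sum_softmax {b : ι → ℝ} (hb : ∀ v, 0 ≤ b v) {i : ι} (hi : 0 < b i) (t : ι → ℝ) :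
    ∑ u, softmax b t u = 1 := by
  simp only [softmax, ← sum_div]
  exact div_self (sum_mul_exp_pos hb hi t).ne'

lemma log_le_log_sum_mul_exp_sub {b : ι → ℝ} (hb : ∀ v, 0 ≤ b v) {i : ι} (hi : 0 < b i)
    (t : ι → ℝ) : Real.log (b i) ≤ Real.log (∑ v, b v * Real.exp (t v)) - t i := by
  have hle : b i * Real.exp (t i) ≤ ∑ v, b v * Real.exp (t v) :=
    single_le_sum (f := fun v ↦ b v * Real.exp (t v))
      (fun v _ ↦ mul_nonneg (hb v) (Real.exp_pos _).le) (mem_univ i)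
  have hlog := Real.log_le_log (mul_pos hi (Real.exp_pos _)) hle
  rw [Real.log_mul hi.ne' (Real.exp_pos _).ne', Real.log_exp] at hlog
  linarith

lemma hasFDerivAt_log_sum_mul_exp_sub [DecidableEq ι] {b : ι → ℝ} (hb : ∀ v, 0 ≤ b v) {i : ι}
    (hi : 0 < b i) (t : EuclideanSpace ℝ ι) :
    HasFDerivAt (fun t : EuclideanSpace ℝ ι ↦ Real.log (∑ v, b v * Real.exp (t v)) - t i)
      (innerSL ℝ (WithLp.toLp 2 (softmax b t - Pi.single i 1))) t := by
  have hcoord (v : ι) := (EuclideanSpace.proj (𝕜 := ℝ) v).hasFDerivAt (x := t)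
  have hsum := HasFDerivAt.fun_sum (u := univ) fun v _ ↦ (hcoord v).exp.const_mul (b v)
  refine ((hsum.log (sum_mul_exp_pos hb hi t).ne').sub (hcoord i)).congr_fderiv ?_
  ext x
  simp [PiLp.inner_apply, softmax, mul_sum, div_eq_mul_inv, mul_assoc, mul_comm, mul_left_comm]

theorem exists_sum_softmax_sub_sq_le [DecidableEq ι] {w : κ → ℝ} (hw : ∀ τ, 0 ≤ w τ)
    {b : κ → ι → ℝ} (hb : ∀ τ u, 0 ≤ b τ u) {o : κ → ι} (ho : ∀ τ, 0 < b τ (o τ))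
    {η : ℝ} (hη : 0 < η) :
    ∃ t : ι → ℝ, ∑ u, (∑ τ, w τ * softmax (b τ) t u - ∑ τ with o τ = u, w τ) ^ 2 ≤ η := by
  -- The vector to be made small is the gradient of this potential, which is bounded below.
  let g : EuclideanSpace ℝ ι → ℝ := fun t ↦
    ∑ τ, w τ * (Real.log (∑ v, b τ v * Real.exp (t v)) - t (o τ))
  let grad : EuclideanSpace ℝ ι → EuclideanSpace ℝ ι := fun t ↦
    ∑ τ, w τ • WithLp.toLp 2 (softmax (b τ) t - Pi.single (o τ) 1)
  have hderiv (t) : HasFDerivAt g (innerSL ℝ (grad t)) t := by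
    simp only [grad, map_sum, map_smul]
    exact HasFDerivAt.fun_sum fun τ _ ↦
      (hasFDerivAt_log_sum_mul_exp_sub (hb τ) (ho τ) t).const_mul (w τ)
  have hbdd : BddBelow (Set.range g) := by
    refine ⟨∑ τ, w τ * Real.log (b τ (o τ)), ?_⟩
    rintro _ ⟨t, rfl⟩
    exact sum_le_sum fun τ _ ↦
      mul_le_mul_of_nonneg_left (log_le_log_sum_mul_exp_sub (hb τ) (ho τ) t) (hw τ)
  obtain ⟨t, ht⟩ := exists_norm_fderiv_le_of_bddBelow (fun t ↦ (hderiv t).differentiableAt) hbdd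
    (Real.sqrt_pos.2 hη)
  rw [(hderiv t).fderiv, innerSL_apply_norm, Real.le_sqrt (norm_nonneg _) hη.le,
    EuclideanSpace.norm_sq_eq] at ht
  refine ⟨t, ht.trans_eq' (sum_congr rfl fun u _ ↦ ?_)⟩
  simp [grad, mul_sub, sum_sub_distrib, Pi.single_apply, sum_filter, eq_comm]

end Scaling

section Rank

variable {𝕜 ι : Type*} [RCLike 𝕜] [Fintype ι]

lemma finrank_le_sum_norm_sq_of_mulVec_eq_self (R : Matrix ι ι 𝕜)
    (U : Submodule 𝕜 (EuclideanSpace 𝕜 ι)) (hU : ∀ x ∈ U, R *ᵥ x = x) :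
    (finrank 𝕜 U : ℝ) ≤ ∑ u, ∑ v, ‖R u v‖ ^ 2 := by
  let e := stdOrthonormalBasis 𝕜 U
  have he : Orthonormal 𝕜 fun k ↦ (e k : EuclideanSpace 𝕜 ι) :=
    e.orthonormal.comp_linearIsometry U.subtypeₗᵢ
  have hcoord (u k) : ‖(e k : EuclideanSpace 𝕜 ι) u‖ =
      ‖inner 𝕜 (e k : EuclideanSpace 𝕜 ι) (WithLp.toLp 2 (star (R u)))‖ := by
    rw [← congrFun (hU _ (e k).2) u, ← norm_star]
    simp [PiLp.inner_apply, mulVec, dotProduct]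
  calc (finrank 𝕜 U : ℝ) = ∑ k, ‖(e k : EuclideanSpace 𝕜 ι)‖ ^ 2 := by simp [he.1]
    _ = ∑ u, ∑ k, ‖(e k : EuclideanSpace 𝕜 ι) u‖ ^ 2 := by
      simp only [EuclideanSpace.norm_sq_eq]
      exact sum_comm
    _ ≤ ∑ u, ‖WithLp.toLp 2 (star (R u))‖ ^ 2 := by
      simp only [hcoord]
      exact sum_le_sum fun u _ ↦ he.sum_inner_products_le _
    _ = ∑ u, ∑ v, ‖R u v‖ ^ 2 := by simp [EuclideanSpace.norm_sq_eq]

theorem card_le_rank_add_sum_norm_one_sub_sq [DecidableEq ι] (M : Matrix ι ι 𝕜) :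
    (Fintype.card ι : ℝ) ≤ M.rank + ∑ u, ∑ v, ‖(1 - M) u v‖ ^ 2 := by
  have hker := finrank_le_sum_norm_sq_of_mulVec_eq_self (1 - M) (toEuclideanLin M).ker
    fun x hx ↦ by
      have hMx : M *ᵥ x = 0 := congrArg WithLp.ofLp hx
      rw [sub_mulVec, one_mulVec, hMx, sub_zero]
  have hrank : M.rank = finrank 𝕜 (toEuclideanLin M).range := by
    rw [toEuclideanLin_eq_toLin_orthonormal]
    exact M.rank_eq_finrank_range_toLin _ _
  have hnullity := (toEuclideanLin M).finrank_range_add_finrank_ker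
  rw [finrank_euclideanSpace, ← hrank] at hnullity
  rw [← hnullity, Nat.cast_add]
  gcongr

lemma exists_rank_le_forall_norm_sq_eq_softmax {κ : Type*} [Finite κ] (A : Matrix κ ι 𝕜)
    (t : ι → ℝ) :
    ∃ B : Matrix κ ι 𝕜, B.rank ≤ A.rank ∧ (∀ τ u, A τ u = 0 → B τ u = 0) ∧
      ∀ τ u, ‖B τ u‖ ^ 2 = softmax (fun v ↦ ‖A τ v‖ ^ 2) t u := by
  classical
  cases nonempty_fintype κ
  let row : κ → 𝕜 := fun τ ↦ ((√(∑ v, ‖A τ v‖ ^ 2 * Real.exp (t v)))⁻¹ : ℝ)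
  let col : ι → 𝕜 := fun u ↦ (Real.exp (t u / 2) : ℝ)
  refine ⟨diagonal row * A * diagonal col,
    (rank_mul_le_left _ _).trans (rank_mul_le_right _ _), fun τ u h ↦ by simp [h], fun τ u ↦ ?_⟩
  have hsum : 0 ≤ ∑ v, ‖A τ v‖ ^ 2 * Real.exp (t v) := by positivity
  have hexp : Real.exp (t u / 2) ^ 2 = Real.exp (t u) := by
    rw [← Real.exp_nat_mul, Nat.cast_ofNat, mul_div_cancel₀ _ two_ne_zero]
  rw [mul_diagonal, diagonal_mul, norm_mul, norm_mul, RCLike.norm_ofReal, RCLike.norm_ofReal,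
    mul_pow, mul_pow, sq_abs, sq_abs, inv_pow, Real.sq_sqrt hsum, hexp, softmax]
  ring

end Rank

section DesignMatrix

variable {𝕜 ι κ : Type*} [RCLike 𝕜] [Fintype κ]

/-- The Gram matrix `Bᴴ * diag(w) * B` of the columns of `B`, for the inner product in which row
`τ` has weight `w τ`. -/
def weightedGram (w : κ → ℝ) (B : Matrix κ ι 𝕜) : Matrix ι ι 𝕜 :=
  of (fun u τ ↦ (w τ : 𝕜) * conj (B τ u)) * B

lemma weightedGram_apply (w : κ → ℝ) (B : Matrix κ ι 𝕜) (u v : ι) :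
    weightedGram w B u v = ∑ τ, (w τ : 𝕜) * (conj (B τ u) * B τ v) := by
  simp [weightedGram, mul_apply, mul_assoc]

lemma weightedGram_apply_self (w : κ → ℝ) (B : Matrix κ ι 𝕜) (u : ι) :
    weightedGram w B u u = ((∑ τ, w τ * ‖B τ u‖ ^ 2 : ℝ) : 𝕜) := by
  simp [weightedGram_apply, RCLike.conj_mul]

lemma norm_weightedGram_apply_sq_le [DecidableEq 𝕜] {w : κ → ℝ} (hw : ∀ τ, 0 ≤ w τ)
    (B : Matrix κ ι 𝕜) (u v : ι) :
    ‖weightedGram w B u v‖ ^ 2 ≤ (∑ τ with B τ u ≠ 0 ∧ B τ v ≠ 0, w τ) *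
      ∑ τ, w τ * (‖B τ u‖ ^ 2 * ‖B τ v‖ ^ 2) := by
  have hnorm : ‖weightedGram w B u v‖ ≤
      ∑ τ with B τ u ≠ 0 ∧ B τ v ≠ 0, w τ * (‖B τ u‖ * ‖B τ v‖) := by
    rw [weightedGram_apply, sum_filter]
    refine (norm_sum_le _ _).trans (sum_le_sum fun τ _ ↦ ?_)
    split_ifs with h
    · simp [abs_of_nonneg (hw τ)]
    · obtain h | h := not_and_or.1 h <;> simp [not_not.1 h]
  calc ‖weightedGram w B u v‖ ^ 2
      ≤ (∑ τ with B τ u ≠ 0 ∧ B τ v ≠ 0, w τ * (‖B τ u‖ * ‖B τ v‖)) ^ 2 := by gcongr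
    _ ≤ (∑ τ with B τ u ≠ 0 ∧ B τ v ≠ 0, w τ) *
          ∑ τ with B τ u ≠ 0 ∧ B τ v ≠ 0, w τ * (‖B τ u‖ ^ 2 * ‖B τ v‖ ^ 2) :=
      sum_sq_le_sum_mul_sum_of_sq_le_mul _ (fun τ _ ↦ hw τ)
        (fun τ _ ↦ mul_nonneg (hw τ) (by positivity)) fun τ _ ↦ le_of_eq (by ring)
    _ ≤ _ := by
      refine mul_le_mul_of_nonneg_left ?_ (sum_nonneg fun τ _ ↦ hw τ)
      exact sum_le_univ_sum_of_nonneg fun τ ↦ mul_nonneg (hw τ) (by positivity)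

variable [Fintype ι]

lemma sum_norm_one_sub_weightedGram_sq_le [DecidableEq ι] [DecidableEq 𝕜] {w : κ → ℝ}
    (hw : ∀ τ, 0 ≤ w τ) {B : Matrix κ ι 𝕜} (hB : ∀ τ, ∑ u, ‖B τ u‖ ^ 2 = 1) {c : ℝ} (hc₀ : 0 ≤ c)
    (hc : ∀ u v, u ≠ v → ∑ τ with B τ u ≠ 0 ∧ B τ v ≠ 0, w τ ≤ c) :
    ∑ u, ∑ v, ‖(1 - weightedGram w B) u v‖ ^ 2 ≤
      ∑ u, (∑ τ, w τ * ‖B τ u‖ ^ 2 - 1) ^ 2 + c * ∑ τ, w τ := by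
  have hentry (u v : ι) : ‖(1 - weightedGram w B) u v‖ ^ 2 ≤
      (if u = v then (∑ τ, w τ * ‖B τ u‖ ^ 2 - 1) ^ 2 else 0) +
        c * ∑ τ, w τ * (‖B τ u‖ ^ 2 * ‖B τ v‖ ^ 2) := by
    have hnonneg : 0 ≤ ∑ τ, w τ * (‖B τ u‖ ^ 2 * ‖B τ v‖ ^ 2) :=
      sum_nonneg fun τ _ ↦ mul_nonneg (hw τ) (by positivity)
    by_cases huv : u = v
    · subst huv
      rw [if_pos rfl, Matrix.sub_apply, one_apply_eq, weightedGram_apply_self, ← RCLike.ofReal_one,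
        ← RCLike.ofReal_sub, RCLike.norm_ofReal, sq_abs, ← neg_sub, neg_sq]
      exact le_add_of_nonneg_right (mul_nonneg hc₀ hnonneg)
    · rw [if_neg huv, zero_add, Matrix.sub_apply, one_apply_ne huv, zero_sub, norm_neg]
      exact (norm_weightedGram_apply_sq_le hw B u v).trans
        (mul_le_mul_of_nonneg_right (hc u v huv) hnonneg)
  have hrows : ∑ u, ∑ v, ∑ τ, w τ * (‖B τ u‖ ^ 2 * ‖B τ v‖ ^ 2) = ∑ τ, w τ := by
    calc ∑ u, ∑ v, ∑ τ, w τ * (‖B τ u‖ ^ 2 * ‖B τ v‖ ^ 2)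
        = ∑ τ, ∑ u, ∑ v, w τ * (‖B τ u‖ ^ 2 * ‖B τ v‖ ^ 2) := sum_comm_cycle
      _ = ∑ τ, w τ * ((∑ u, ‖B τ u‖ ^ 2) * ∑ v, ‖B τ v‖ ^ 2) := by
          simp only [sum_mul_sum]
          simp only [mul_sum]
      _ = ∑ τ, w τ := by simp only [hB, mul_one]
  calc ∑ u, ∑ v, ‖(1 - weightedGram w B) u v‖ ^ 2
      ≤ ∑ u, ∑ v, ((if u = v then (∑ τ, w τ * ‖B τ u‖ ^ 2 - 1) ^ 2 else 0) +
          c * ∑ τ, w τ * (‖B τ u‖ ^ 2 * ‖B τ v‖ ^ 2)) :=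
        sum_le_sum fun u _ ↦ sum_le_sum fun v _ ↦ hentry u v
    _ = _ := by
        simp only [sum_add_distrib, sum_ite_eq, mem_univ, if_true, ← mul_sum, hrows]

/-- A weighted form of the design matrices of Barak, Dvir, Wigderson and Yehudayoff: every row
`τ` carries a weight `w τ` and is assigned to a column `o τ` where it does not vanish, so that
each column is assigned total weight `1`, while the rows meeting two given columns have total
weight at most `c`. -/
structure IsWeightedDesign [DecidableEq ι] [DecidableEq 𝕜] (A : Matrix κ ι 𝕜) (w : κ → ℝ)
    (o : κ → ι) (c : ℝ) : Prop where
  weight_nonneg : ∀ τ, 0 ≤ w τ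
  apply_ne_zero : ∀ τ, A τ (o τ) ≠ 0
  sum_weight_eq_one : ∀ u, ∑ τ with o τ = u, w τ = 1
  overlap_nonneg : 0 ≤ c
  sum_weight_le : ∀ u v, u ≠ v → ∑ τ with A τ u ≠ 0 ∧ A τ v ≠ 0, w τ ≤ c

theorem IsWeightedDesign.card_le_rank_add [DecidableEq ι] [DecidableEq 𝕜] {A : Matrix κ ι 𝕜}
    {w : κ → ℝ} {o : κ → ι} {c : ℝ} (h : IsWeightedDesign A w o c) :
    (Fintype.card ι : ℝ) ≤ A.rank + c * Fintype.card ι := by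
  refine le_of_forall_pos_le_add fun η hη ↦ ?_
  have ho (τ) : 0 < ‖A τ (o τ)‖ ^ 2 := pow_pos (norm_pos_iff.2 (h.apply_ne_zero τ)) 2
  obtain ⟨t, ht⟩ := exists_sum_softmax_sub_sq_le h.weight_nonneg
    (fun τ u ↦ sq_nonneg ‖A τ u‖) ho hη
  obtain ⟨B, hrank, hzero, hB⟩ := exists_rank_le_forall_norm_sq_eq_softmax A t
  have hrow (τ) : ∑ u, ‖B τ u‖ ^ 2 = 1 := by
    simp only [hB]
    exact sum_softmax (fun u ↦ sq_nonneg ‖A τ u‖) (ho τ) t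
  have hoverlap (u v) (huv : u ≠ v) : ∑ τ with B τ u ≠ 0 ∧ B τ v ≠ 0, w τ ≤ c :=
    (sum_le_sum_of_subset_of_nonneg
      (monotone_filter_right _ fun τ _ ⟨hu, hv⟩ ↦ ⟨mt (hzero τ u) hu, mt (hzero τ v) hv⟩)
      fun τ _ _ ↦ h.weight_nonneg τ).trans (h.sum_weight_le u v huv)
  have htotal : ∑ τ, w τ = Fintype.card ι := by
    rw [← sum_fiberwise univ o w]
    simp [h.sum_weight_eq_one]
  have hnear := sum_norm_one_sub_weightedGram_sq_le h.weight_nonneg hrow h.overlap_nonneg hoverlap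
  simp only [h.sum_weight_eq_one] at ht
  simp only [hB, htotal] at hnear
  have hgram : (weightedGram w B).rank ≤ A.rank := (rank_mul_le_right _ B).trans hrank
  calc (Fintype.card ι : ℝ)
      ≤ (weightedGram w B).rank + ∑ u, ∑ v, ‖(1 - weightedGram w B) u v‖ ^ 2 :=
        card_le_rank_add_sum_norm_one_sub_sq _
    _ ≤ A.rank + (η + c * Fintype.card ι) := by gcongr; linarith
    _ = A.rank + c * Fintype.card ι + η := by ring

end DesignMatrix

section AffineRank

variable {𝕜 V P ι κ : Type*} [Field 𝕜] [AddCommGroup V] [Module 𝕜 V] [AddTorsor V P] [Fintype ι]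

theorem rank_add_finrank_vectorSpan_add_one_le_card [Nonempty ι] {p : ι → P}
    {A : Matrix κ ι 𝕜} (hsum : ∀ τ, ∑ u, A τ u = 0) (hA : ∀ τ, univ.weightedVSub p (A τ) = 0) :
    A.rank + (finrank 𝕜 (vectorSpan 𝕜 (Set.range p)) + 1) ≤ Fintype.card ι := by
  obtain ⟨i₀⟩ := ‹Nonempty ι›
  let W := vectorSpan 𝕜 (Set.range p)
  let d : ι → W := fun i ↦ ⟨p i -ᵥ p i₀, vsub_mem_vectorSpan 𝕜 ⟨i, rfl⟩ ⟨i₀, rfl⟩⟩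
  let eval : 𝕜 × Dual 𝕜 W →ₗ[𝕜] ι → 𝕜 := LinearMap.pi fun i ↦
    LinearMap.fst 𝕜 𝕜 _ + Dual.eval 𝕜 W (d i) ∘ₗ LinearMap.snd 𝕜 𝕜 _
  have heval (c φ i) : eval (c, φ) i = c + φ (d i) := rfl
  have hinj : Function.Injective eval := by
    rw [← LinearMap.ker_eq_bot, LinearMap.ker_eq_bot']
    rintro ⟨c, φ⟩ h
    have hval (i) : c + φ (d i) = 0 := congrFun h i
    have hd₀ : d i₀ = 0 := Subtype.ext (vsub_self _)
    have hc : c = 0 := by simpa [hd₀] using hval i₀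
    have hφ : φ = 0 := by
      rw [Submodule.linearMap_eq_iff_of_eq_span _ _
        (vectorSpan_range_eq_span_range_vsub_right 𝕜 p i₀)]
      rintro ⟨_, i, rfl⟩
      simpa [hc] using hval i
    rw [hc, hφ, Prod.mk_zero_zero]
  have hrange : eval.range ≤ A.mulVecLin.ker := by
    rintro _ ⟨⟨c, φ⟩, rfl⟩
    ext τ
    have hdep : ∑ u, A τ u • d u = 0 := by
      have h := hA τ
      rw [weightedVSub_eq_weightedVSubOfPoint_of_sum_eq_zero _ _ _ (hsum τ) (p i₀),
        weightedVSubOfPoint_apply] at h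
      exact Subtype.ext (by simpa [d] using h)
    have hφ : ∑ u, A τ u * φ (d u) = 0 := by simpa using congrArg φ hdep
    simp [mulVec, dotProduct, heval, mul_add, sum_add_distrib, ← sum_mul, hsum, hφ]
  have hker : finrank 𝕜 eval.range ≤ finrank 𝕜 A.mulVecLin.ker := Submodule.finrank_mono hrange
  rw [LinearMap.finrank_range_of_inj hinj, finrank_prod, finrank_self,
    Subspace.dual_finrank_eq] at hker
  change 1 + finrank 𝕜 (vectorSpan 𝕜 (Set.range p)) ≤ _ at hker
  have hnullity := A.mulVecLin.finrank_range_add_finrank_ker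
  rw [finrank_fintype_fun_eq_card] at hnullity
  rw [rank]
  omega

end AffineRank

section SpecialLines

variable (𝕜 : Type*) {V P ι : Type*} [DivisionRing 𝕜] [AddCommGroup V] [Module 𝕜 V] [AddTorsor V P]

/-- Ordered triples of distinct indices whose points lie on a common line. -/
abbrev CollinearTriple (p : ι → P) : Type _ :=
  {τ : Fin 3 ↪ ι // Collinear 𝕜 (Set.range (p ∘ τ))}

variable {𝕜} {p : ι → P}

namespace CollinearTriple

/-- The reordering of a collinear triple by a permutation of its three positions. -/
def permute (σ : Equiv.Perm (Fin 3)) (τ : CollinearTriple 𝕜 p) : CollinearTriple 𝕜 p :=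
  ⟨σ.toEmbedding.trans τ.1, by
    have h : Set.range (p ∘ τ.1 ∘ σ) = Set.range (p ∘ τ.1) := σ.surjective.range_comp (p ∘ τ.1)
    exact h ▸ τ.2⟩

lemma line_eq (hp : Function.Injective p) (τ : CollinearTriple 𝕜 p) {a b : Fin 3} (hab : a ≠ b) :
    line[𝕜, p (τ.1 a), p (τ.1 b)] = affineSpan 𝕜 (Set.range (p ∘ τ.1)) :=
  τ.2.affineSpan_eq_of_ne ⟨a, rfl⟩ ⟨b, rfl⟩ ((hp.comp τ.1.injective).ne hab)

lemma exists_of_mem_line {i j k : ι} (hij : i ≠ j) (hki : k ≠ i) (hkj : k ≠ j)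
    (hk : p k ∈ line[𝕜, p i, p j]) :
    ∃ τ : CollinearTriple 𝕜 p, τ.1 0 = i ∧ τ.1 1 = j ∧ τ.1 2 = k := by
  have hinj : Function.Injective ![i, j, k] := by
    simp [Function.Injective, Fin.forall_fin_succ, hij, hij.symm, hki, hki.symm, hkj, hkj.symm]
  refine ⟨⟨⟨_, hinj⟩, (collinear_insert_of_mem_affineSpan_pair hk).subset ?_⟩, rfl, rfl, rfl⟩
  rintro _ ⟨a, rfl⟩
  fin_cases a <;> simp

lemma exists_affineDependence [Fintype ι] (hp : Function.Injective p) (τ : CollinearTriple 𝕜 p) :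
    ∃ a : ι → 𝕜, ∑ u, a u = 0 ∧ univ.weightedVSub p a = 0 ∧ a (τ.1 0) ≠ 0 ∧
      ∀ u, a u ≠ 0 → ∃ i, τ.1 i = u := by
  have hmem : p (τ.1 0) ∈ line[𝕜, p (τ.1 1), p (τ.1 2)] :=
    τ.2.mem_affineSpan_of_mem_of_ne ⟨1, rfl⟩ ⟨2, rfl⟩ ⟨0, rfl⟩
      ((hp.comp τ.1.injective).ne (by decide))
  classical
  obtain ⟨r, hr⟩ := mem_affineSpan_pair_iff_exists_lineMap_eq.1 hmem
  let l := affineCombinationLineMapWeights (τ.1 1) (τ.1 2) r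
  refine ⟨Pi.single (τ.1 0) 1 - l, ?_, ?_, ?_, fun u ↦ ?_⟩
  · simp [l, sum_sub_distrib, sum_affineCombinationLineMapWeights]
  · rw [← affineCombination_vsub, affineCombination_piSingle _ _ _ (mem_univ _),
      affineCombination_affineCombinationLineMapWeights _ _ (mem_univ _) (mem_univ _), hr,
      vsub_self]
  · simp [l, affineCombinationLineMapWeights_apply_of_ne]
  · contrapose!
    intro hu
    simp [l, affineCombinationLineMapWeights_apply_of_ne, (hu _).symm]

end CollinearTriple

variable [Fintype ι] [DecidableEq ι]

noncomputable instance : Fintype (CollinearTriple 𝕜 p) :=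
  Fintype.ofFinite _

variable (𝕜 p) in
/-- The collinear triples `(i, j, k)` with first two indices prescribed: for `i ≠ j`, one for each
further point `p k` of the line joining `p i` to `p j`. -/
noncomputable def triplesThrough (i j : ι) : Finset (CollinearTriple 𝕜 p) :=
  {τ | τ.1 0 = i ∧ τ.1 1 = j}

lemma mem_triplesThrough {i j : ι} {τ : CollinearTriple 𝕜 p} :
    τ ∈ triplesThrough 𝕜 p i j ↔ τ.1 0 = i ∧ τ.1 1 = j := by
  simp [triplesThrough]

lemma card_triplesThrough_add_two (hp : Function.Injective p) {i j : ι} (hij : i ≠ j) :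
    #(triplesThrough 𝕜 p i j) + 2 = {k | p k ∈ line[𝕜, p i, p j]}.ncard := by
  have hinj : Set.InjOn (fun τ : CollinearTriple 𝕜 p ↦ τ.1 2) (triplesThrough 𝕜 p i j) := by
    intro τ hτ τ' hτ' h
    obtain ⟨h0, h1⟩ := mem_triplesThrough.1 hτ
    obtain ⟨h0', h1'⟩ := mem_triplesThrough.1 hτ'
    ext a
    fin_cases a
    exacts [h0.trans h0'.symm, h1.trans h1'.symm, h]
  have himage : (fun τ ↦ τ.1 2) '' (triplesThrough 𝕜 p i j : Set (CollinearTriple 𝕜 p)) =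
      {k | p k ∈ line[𝕜, p i, p j]} \ {i, j} := by
    ext k
    simp only [Set.mem_image, mem_coe, mem_triplesThrough, Set.mem_sdiff, Set.mem_ofPred_eq,
      Set.mem_insert_iff, Set.mem_singleton_iff, not_or]
    constructor
    · rintro ⟨τ, ⟨rfl, rfl⟩, rfl⟩
      exact ⟨τ.2.mem_affineSpan_of_mem_of_ne ⟨0, rfl⟩ ⟨1, rfl⟩ ⟨2, rfl⟩
        ((hp.comp τ.1.injective).ne (by decide)), by simp, by simp⟩
    · rintro ⟨hk, hki, hkj⟩
      obtain ⟨τ, h0, h1, h2⟩ := CollinearTriple.exists_of_mem_line hij hki hkj hk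
      exact ⟨τ, ⟨h0, h1⟩, h2⟩
  have hsub : {i, j} ⊆ {k | p k ∈ line[𝕜, p i, p j]} := by
    simp [Set.insert_subset_iff, left_mem_affineSpan_pair, right_mem_affineSpan_pair]
  rw [← Set.ncard_coe_finset, ← hinj.ncard_image, himage, ← Set.ncard_pair hij,
    Set.ncard_sdiff_add_ncard_of_subset hsub]

lemma CollinearTriple.card_triplesThrough_eq (hp : Function.Injective p)
    (τ : CollinearTriple 𝕜 p) {a b : Fin 3} (hab : a ≠ b) :
    #(triplesThrough 𝕜 p (τ.1 a) (τ.1 b)) = #(triplesThrough 𝕜 p (τ.1 0) (τ.1 1)) := by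
  have h := card_triplesThrough_add_two (𝕜 := 𝕜) hp (τ.1.injective.ne hab)
  have h01 := card_triplesThrough_add_two (𝕜 := 𝕜) hp (τ.1.injective.ne (zero_ne_one (α := Fin 3)))
  rw [τ.line_eq hp hab] at h
  rw [τ.line_eq hp zero_ne_one, ← h] at h01
  exact (Nat.add_right_cancel h01).symm

lemma card_collinearTriples_containing_le {u v : ι} (huv : u ≠ v) :
    #{τ : CollinearTriple 𝕜 p | (∃ a, τ.1 a = u) ∧ ∃ b, τ.1 b = v} ≤
      6 * #(triplesThrough 𝕜 p u v) := by
  have hsub : ({τ | (∃ a, τ.1 a = u) ∧ ∃ b, τ.1 b = v} : Finset (CollinearTriple 𝕜 p)) ⊆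
      (univ ×ˢ triplesThrough 𝕜 p u v).image fun x ↦ x.2.permute x.1 := by
    intro τ hτ
    obtain ⟨⟨a, rfl⟩, ⟨b, rfl⟩⟩ := (mem_filter.1 hτ).2
    have hperm : ∀ a b : Fin 3, a ≠ b → ∃ σ : Equiv.Perm (Fin 3), σ 0 = a ∧ σ 1 = b := by decide
    obtain ⟨σ, rfl, rfl⟩ := hperm a b (ne_of_apply_ne _ huv)
    refine mem_image.2 ⟨(σ⁻¹, τ.permute σ), ?_, ?_⟩
    · simp [mem_triplesThrough, CollinearTriple.permute]
    · ext a
      simp [CollinearTriple.permute]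
  calc _ ≤ _ := (card_le_card hsub).trans card_image_le
    _ = 6 * #(triplesThrough 𝕜 p u v) := by
      rw [card_product, card_univ, Fintype.card_perm, Fintype.card_fin]
      rfl

variable (𝕜 p) in
/-- The points other than `p i` on the special lines through `p i`, those with at least three
points of the configuration. -/
noncomputable def specialNeighbors (i : ι) : Finset ι :=
  {j | (triplesThrough 𝕜 p i j).Nonempty}

variable (𝕜 p) in
/-- The probability of drawing `τ` when, given its first index, the second is drawn uniformly among
the special neighbours of the first, and the third uniformly among the further points of the line
through the first two. -/
noncomputable def tripleWeight (τ : CollinearTriple 𝕜 p) : ℝ :=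
  (#(specialNeighbors 𝕜 p (τ.1 0)) * #(triplesThrough 𝕜 p (τ.1 0) (τ.1 1)) : ℝ)⁻¹

lemma sum_tripleWeight {i : ι} (hi : (specialNeighbors 𝕜 p i).Nonempty) :
    ∑ τ : CollinearTriple 𝕜 p with τ.1 0 = i, tripleWeight 𝕜 p τ = 1 := by
  have hfiber (j : ι) : ∑ τ ∈ triplesThrough 𝕜 p i j, tripleWeight 𝕜 p τ =
      if (triplesThrough 𝕜 p i j).Nonempty then (#(specialNeighbors 𝕜 p i) : ℝ)⁻¹ else 0 := by
    split_ifs with hj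
    · have hconst : ∀ τ ∈ triplesThrough 𝕜 p i j, tripleWeight 𝕜 p τ =
          (#(specialNeighbors 𝕜 p i) * #(triplesThrough 𝕜 p i j) : ℝ)⁻¹ := fun τ hτ ↦ by
        obtain ⟨rfl, rfl⟩ := mem_triplesThrough.1 hτ
        rfl
      have hcard : (#(triplesThrough 𝕜 p i j) : ℝ) ≠ 0 := by exact_mod_cast hj.card_ne_zero
      rw [sum_congr rfl hconst, sum_const, nsmul_eq_mul]
      field_simp
    · rw [not_nonempty_iff_eq_empty.1 hj, sum_empty]
  calc ∑ τ : CollinearTriple 𝕜 p with τ.1 0 = i, tripleWeight 𝕜 p τ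
      = ∑ j, ∑ τ ∈ triplesThrough 𝕜 p i j, tripleWeight 𝕜 p τ := by
        rw [← sum_fiberwise _ fun τ : CollinearTriple 𝕜 p ↦ τ.1 1]
        simp only [filter_filter, triplesThrough]
    _ = #(specialNeighbors 𝕜 p i) * (#(specialNeighbors 𝕜 p i) : ℝ)⁻¹ := by
        simp only [hfiber]
        rw [← sum_filter, sum_const, nsmul_eq_mul, specialNeighbors]
    _ = 1 := mul_inv_cancel₀ (by exact_mod_cast hi.card_ne_zero)

lemma sum_tripleWeight_containing_le (hp : Function.Injective p) {m : ℕ} (hm : 0 < m)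
    (hS : ∀ i, m ≤ #(specialNeighbors 𝕜 p i)) {u v : ι} (huv : u ≠ v) :
    ∑ τ : CollinearTriple 𝕜 p with (∃ a, τ.1 a = u) ∧ ∃ b, τ.1 b = v, tripleWeight 𝕜 p τ ≤
      6 / m := by
  have hweight : ∀ τ ∈ ({τ | (∃ a, τ.1 a = u) ∧ ∃ b, τ.1 b = v} :
      Finset (CollinearTriple 𝕜 p)),
      tripleWeight 𝕜 p τ ≤ (m * #(triplesThrough 𝕜 p u v) : ℝ)⁻¹ := fun τ hτ ↦ by
    obtain ⟨⟨a, rfl⟩, ⟨b, rfl⟩⟩ := (mem_filter.1 hτ).2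
    rw [τ.card_triplesThrough_eq hp (ne_of_apply_ne _ huv), tripleWeight, mul_inv, mul_inv]
    gcongr
    exact hS _
  calc _ ≤ _ := sum_le_card_nsmul _ _ _ hweight
    _ ≤ (6 * #(triplesThrough 𝕜 p u v) : ℕ) • (m * #(triplesThrough 𝕜 p u v) : ℝ)⁻¹ :=
      nsmul_le_nsmul_left (by positivity) (card_collinearTriples_containing_le huv)
    _ = 6 / m * (#(triplesThrough 𝕜 p u v) * (#(triplesThrough 𝕜 p u v) : ℝ)⁻¹) := by
      rw [nsmul_eq_mul, mul_inv]
      push_cast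
      ring
    _ ≤ 6 / m := mul_le_of_le_one_right (by positivity) mul_inv_le_one

end SpecialLines

section JoiningLines

variable {𝕜 V P ι : Type*} [DivisionRing 𝕜] [AddCommGroup V] [Module 𝕜 V] [AddTorsor V P]
  {p : ι → P}

variable (𝕜 p) in
/-- The distinct lines joining `p i` to the other points of the configuration. -/
def joiningLines (i : ι) : Set (AffineSubspace 𝕜 P) :=
  {L | ∃ j ≠ i, L = line[𝕜, p i, p j]}

variable [Fintype ι]

lemma mem_specialNeighbors_of_line_eq [DecidableEq ι] {i j k : ι} (hj : j ≠ i) (hk : k ≠ i)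
    (hjk : j ≠ k) (h : line[𝕜, p i, p j] = line[𝕜, p i, p k]) :
    j ∈ specialNeighbors 𝕜 p i := by
  obtain ⟨τ, h0, h1, -⟩ := CollinearTriple.exists_of_mem_line (𝕜 := 𝕜) (p := p) hj.symm hk
    hjk.symm (h ▸ right_mem_affineSpan_pair 𝕜 _ _)
  exact mem_filter.2 ⟨mem_univ j, τ, mem_triplesThrough.2 ⟨h0, h1⟩⟩

theorem card_le_ncard_joiningLines_add [DecidableEq ι] (i : ι) :
    Fintype.card ι ≤ (joiningLines 𝕜 p i).ncard + max 1 #(specialNeighbors 𝕜 p i) := by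
  -- Removing `i` and all special neighbours but one leaves points on pairwise distinct lines.
  obtain ⟨j₀, hj₀⟩ : ∃ j₀, #(insert i ((specialNeighbors 𝕜 p i).erase j₀)) ≤
      max 1 #(specialNeighbors 𝕜 p i) := by
    obtain hS | ⟨j₀, hj₀⟩ := (specialNeighbors 𝕜 p i).eq_empty_or_nonempty
    · exact ⟨i, by simp [hS]⟩
    · refine ⟨j₀, le_max_of_le_right ?_⟩
      rw [← card_erase_add_one hj₀]
      exact card_insert_le _ _
  let Z := (insert i ((specialNeighbors 𝕜 p i).erase j₀))ᶜ
  have hZ {j} (hj : j ∈ Z) : j ≠ i ∧ (j ∈ specialNeighbors 𝕜 p i → j = j₀) := by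
    simp only [Z, mem_compl, mem_insert, mem_erase, not_or] at hj
    exact ⟨hj.1, fun h ↦ by_contra fun h' ↦ hj.2 ⟨h', h⟩⟩
  have hinj : Set.InjOn (fun j ↦ line[𝕜, p i, p j]) (Z : Set ι) := by
    intro j hj k hk h
    by_contra hjk
    obtain ⟨hji, hj₁⟩ := hZ hj
    obtain ⟨hki, hk₁⟩ := hZ hk
    exact hjk <| (hj₁ (mem_specialNeighbors_of_line_eq hji hki hjk h)).trans
      (hk₁ (mem_specialNeighbors_of_line_eq hki hji (Ne.symm hjk) h.symm)).symm
  have hfin : (joiningLines 𝕜 p i).Finite :=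
    (Set.finite_range fun j ↦ line[𝕜, p i, p j]).subset fun _ ⟨j, _, hL⟩ ↦ ⟨j, hL.symm⟩
  have hZcard : #Z ≤ (joiningLines 𝕜 p i).ncard := by
    rw [← Set.ncard_coe_finset]
    exact Set.ncard_le_ncard_of_injOn _ (fun j hj ↦ ⟨j, (hZ hj).1, rfl⟩) hinj hfin
  rw [← card_compl_add_card (insert i ((specialNeighbors 𝕜 p i).erase j₀))]
  exact add_le_add hZcard hj₀

end JoiningLines

section ManyLines

variable {𝕜 V P ι : Type*} [RCLike 𝕜] [AddCommGroup V] [Module 𝕜 V] [AddTorsor V P] [Fintype ι]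
  {p : ι → P}

lemma exists_isWeightedDesign [DecidableEq ι] [DecidableEq 𝕜] (hp : Function.Injective p) {m : ℕ}
    (hm : 0 < m) (hS : ∀ i, m ≤ #(specialNeighbors 𝕜 p i)) :
    ∃ A : Matrix (CollinearTriple 𝕜 p) ι 𝕜, (∀ τ, ∑ u, A τ u = 0) ∧
      (∀ τ, univ.weightedVSub p (A τ) = 0) ∧
      IsWeightedDesign A (tripleWeight 𝕜 p) (fun τ ↦ τ.1 0) (6 / m) := by
  choose A hsum hdep hne hsupp using CollinearTriple.exists_affineDependence (𝕜 := 𝕜) hp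
  have hweight (τ : CollinearTriple 𝕜 p) : 0 ≤ tripleWeight 𝕜 p τ := by
    rw [tripleWeight]
    positivity
  refine ⟨A, hsum, hdep, hweight, hne,
    fun u ↦ sum_tripleWeight (card_pos.1 (hm.trans_le (hS u))), by positivity, fun u v huv ↦ ?_⟩
  refine (sum_le_sum_of_subset_of_nonneg (monotone_filter_right _ ?_) fun τ _ _ ↦ hweight τ).trans
    (sum_tripleWeight_containing_le hp hm hS huv)
  exact fun τ _ ⟨hu, hv⟩ ↦ ⟨hsupp τ u hu, hsupp τ v hv⟩

theorem exists_card_specialNeighbors_mul_le [DecidableEq ι] [Nonempty ι]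
    (hp : Function.Injective p) :
    ∃ i, #(specialNeighbors 𝕜 p i) * (finrank 𝕜 (vectorSpan 𝕜 (Set.range p)) + 1) ≤
      6 * Fintype.card ι := by
  classical
  obtain ⟨i, hi⟩ := Finite.exists_min fun i ↦ #(specialNeighbors 𝕜 p i)
  refine ⟨i, ?_⟩
  obtain hm | hm := Nat.eq_zero_or_pos #(specialNeighbors 𝕜 p i)
  · simp [hm]
  obtain ⟨A, hsum, hdep, hdesign⟩ := exists_isWeightedDesign hp hm hi
  have hupper : (A.rank + (finrank 𝕜 (vectorSpan 𝕜 (Set.range p)) + 1 : ℕ) : ℝ) ≤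
      Fintype.card ι := mod_cast rank_add_finrank_vectorSpan_add_one_le_card hsum hdep
  have hlower := hdesign.card_le_rank_add
  have hdim : ((finrank 𝕜 (vectorSpan 𝕜 (Set.range p)) + 1 : ℕ) : ℝ) ≤
      6 * Fintype.card ι / #(specialNeighbors 𝕜 p i) := by
    rw [mul_div_right_comm]
    linarith
  rw [le_div_iff₀ (by exact_mod_cast hm), mul_comm] at hdim
  exact_mod_cast hdim

theorem exists_card_mul_le_ncard_joiningLines [Nonempty ι] (hp : Function.Injective p) :
    ∃ i, (Fintype.card ι : ℝ) * (1 - 6 / (finrank 𝕜 (vectorSpan 𝕜 (Set.range p)) + 1)) ≤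
      (joiningLines 𝕜 p i).ncard := by
  classical
  obtain ⟨i, hi⟩ := exists_card_specialNeighbors_mul_le (𝕜 := 𝕜) hp
  have hdim := finrank_vectorSpan_range_add_one_le 𝕜 p
  have hmax : max 1 #(specialNeighbors 𝕜 p i) * (finrank 𝕜 (vectorSpan 𝕜 (Set.range p)) + 1) ≤
      6 * Fintype.card ι := by
    rw [max_mul_of_nonneg _ _ (Nat.zero_le _)]
    exact max_le (by omega) hi
  have hmax' : (max 1 #(specialNeighbors 𝕜 p i) : ℕ) ≤
      (6 * Fintype.card ι / (finrank 𝕜 (vectorSpan 𝕜 (Set.range p)) + 1) : ℝ) :=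
    (le_div_iff₀ (by positivity)).2 (mod_cast hmax)
  have hlines : (Fintype.card ι : ℝ) ≤
      (joiningLines 𝕜 p i).ncard + (max 1 #(specialNeighbors 𝕜 p i) : ℕ) :=
    mod_cast card_le_ncard_joiningLines_add i
  refine ⟨i, ?_⟩
  calc (Fintype.card ι : ℝ) * (1 - 6 / (finrank 𝕜 (vectorSpan 𝕜 (Set.range p)) + 1))
      = Fintype.card ι - 6 * Fintype.card ι / (finrank 𝕜 (vectorSpan 𝕜 (Set.range p)) + 1) := by
        ring
    _ ≤ (joiningLines 𝕜 p i).ncard := by linarith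

end ManyLines

theorem exists_point_many_lines_general (𝕜 : Type*) {V P : Type*} [RCLike 𝕜] [AddCommGroup V]
    [Module 𝕜 V] [AddTorsor V P] {s : Finset P} (hs : s.Nonempty) :
    ∃ x ∈ s, (#s : ℝ) * (1 - 6 / (finrank 𝕜 (vectorSpan 𝕜 (s : Set P)) + 1)) ≤
      {L | ∃ p ∈ s, p ≠ x ∧ L = line[𝕜, x, p]}.ncard := by
  have := hs.to_subtype
  obtain ⟨x, hx⟩ := exists_card_mul_le_ncard_joiningLines (𝕜 := 𝕜) (p := ((↑) : s → P))
    Subtype.val_injective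
  have hlines : joiningLines 𝕜 ((↑) : s → P) x =
      {L | ∃ p ∈ s, p ≠ x ∧ L = line[𝕜, (x : P), p]} := by
    ext L
    exact ⟨fun ⟨p, hpx, hL⟩ ↦ ⟨p, p.2, Subtype.coe_ne_coe.2 hpx, hL⟩,
      fun ⟨p, hps, hpx, hL⟩ ↦ ⟨⟨p, hps⟩, Subtype.coe_ne_coe.1 hpx, hL⟩⟩
  have hrange : Set.range ((↑) : s → P) = s := Subtype.range_coe
  rw [Fintype.card_coe, hlines, hrange] at hx
  exact ⟨x, x.2, hx⟩

/-- **Corollary 2.2** (from the theorem of Dvir, Saraf and Wigderson, with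
`c = 12`). If `P` is a finite set of `n` points in `ℝ^d` whose affine span is
`d`-dimensional (i.e. all of `ℝ^d`), then there is a point `x ∈ P` such that the
number of distinct lines connecting `x` to the other points of `P` is at least
`n·(1 − 12/d)`. -/
theorem exists_point_many_lines (d n : ℕ) (hd : 1 ≤ d)
    (P : Finset (Fin d → ℝ)) (hcard : P.card = n)
    (hspan : affineSpan ℝ (P : Set (Fin d → ℝ)) = ⊤) :
    ∃ x ∈ P, (n : ℝ) * (1 - 12 / (d : ℝ)) ≤ ((linesThrough P x).ncard : ℝ) := by
  have hne : P.Nonempty := (affineSpan_nonempty ℝ).1 ⟨0, by simp [hspan]⟩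
  obtain ⟨x, hxP, hx⟩ := exists_point_many_lines_general ℝ hne
  rw [← direction_affineSpan, hspan, AffineSubspace.direction_top, finrank_top, finrank_fin_fun,
    hcard] at hx
  refine ⟨x, hxP, hx.trans' ?_⟩
  gcongr <;> norm_num
end
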